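/- arXiv:1407.7012 — 8 statements merged into one kernel-verified Lean document; each statement's English description precedes it below -/
import Mathlib

section
/- Let k be an integer, and consider the polynomials φ(X) = X² + kX and ψ(X) = X² − kX + k in ℚ[X]. Then for every n ≥ 1, the splitting field of the n-fold iterate φ^{∘n} over ℚ is equal to the splitting field of the (n−1)-fold iterate ψ^{∘(n−1)} over ℚ (both taken inside a fixed algebraic closure of ℚ, with ψ^{∘0}(X) = X). -/
open Polynomial

/-- The `n`-fold iterate (composition) of a polynomial, with `iterComp p 0 = X`. -/
noncomputable def iterComp (p : ℚ[X]) : ℕ → ℚ[X]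
  | 0 => X
  | n + 1 => p.comp (iterComp p n)

/-- The splitting field of a rational polynomial inside a fixed algebraic closure of `ℚ`:
the intermediate field generated by its set of roots. -/
noncomputable def splitFld (p : ℚ[X]) : IntermediateField ℚ (AlgebraicClosure ℚ) :=
  IntermediateField.adjoin ℚ (p.rootSet (AlgebraicClosure ℚ))

lemma iterComp_ne_zero (p : ℚ[X]) (hp : p.natDegree = 2) (n : ℕ) : iterComp p n ≠ 0 := by
  have h : (iterComp p n).natDegree = 2 ^ n := by
    induction n with
    | zero => simp [iterComp]
    | succ n ih => rw [iterComp, natDegree_comp, ih, hp, pow_succ, mul_comm]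
  intro h0
  rw [h0, natDegree_zero] at h
  exact absurd h.symm (by positivity)

lemma aeval_iterComp (p : ℚ[X]) (n : ℕ) (x : AlgebraicClosure ℚ) :
    aeval x (iterComp p n) = (fun y => aeval y p)^[n] x := by
  induction n with
  | zero => simp [iterComp]
  | succ n ih => rw [iterComp, aeval_comp, ih, Function.iterate_succ_apply']

lemma mem_rootSet_iterComp (p : ℚ[X]) (hp : p.natDegree = 2) (n : ℕ) (x : AlgebraicClosure ℚ) :
    x ∈ (iterComp p n).rootSet (AlgebraicClosure ℚ) ↔ (fun y => aeval y p)^[n] x = 0 := by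
  rw [mem_rootSet, aeval_iterComp]
  exact and_iff_right (iterComp_ne_zero p hp n)

/-- Successive splitting fields of iterates form a tower. -/
lemma splitFld_le_succ (p : ℚ[X]) (hp : p.natDegree = 2) (n : ℕ) :
    splitFld (iterComp p n) ≤ splitFld (iterComp p (n + 1)) := by
  unfold splitFld
  rw [IntermediateField.adjoin_le_iff]
  intro x hx
  rw [mem_rootSet_iterComp p hp] at hx
  obtain ⟨y, hy⟩ : ∃ y : AlgebraicClosure ℚ, aeval y p = x := by
    have hd : (p.map (algebraMap ℚ (AlgebraicClosure ℚ)) - C x).degree ≠ 0 := by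
      have : (p.map (algebraMap ℚ (AlgebraicClosure ℚ)) - C x).natDegree = 2 := by
        rw [natDegree_sub_C, natDegree_map, hp]
      intro h
      rw [natDegree_eq_zero_iff_degree_le_zero.mpr h.le] at this
      exact absurd this (by norm_num)
    obtain ⟨y, hy⟩ := IsAlgClosed.exists_root _ hd
    refine ⟨y, ?_⟩
    simpa [IsRoot, sub_eq_zero, eval_map_algebraMap] using hy
  have hmem : y ∈ IntermediateField.adjoin ℚ
      ((iterComp p (n + 1)).rootSet (AlgebraicClosure ℚ)) := by
    apply IntermediateField.subset_adjoin
    rw [mem_rootSet_iterComp p hp, Function.iterate_succ_apply]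
    simpa [hy] using hx
  rw [← hy]
  rw [aeval_eq_sum_range]
  refine sum_mem fun i _ => ?_
  exact IntermediateField.smul_mem _ (pow_mem hmem i)

/-- with `φ(X) = X² + kX` and `ψ(X) = X² − kX + k`, for every `n ≥ 1` the
splitting field of `φ^{∘n}` over `ℚ` equals the splitting field of `ψ^{∘(n−1)}` over `ℚ`. -/
theorem stmt_4 (k : ℤ) (n : ℕ) (hn : 1 ≤ n) :
    splitFld (iterComp (X ^ 2 + C (k : ℚ) * X) n)
      = splitFld (iterComp (X ^ 2 - C (k : ℚ) * X + C (k : ℚ)) (n - 1)) := by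
  have hphi : (X ^ 2 + C (k : ℚ) * X : ℚ[X]).natDegree = 2 := by compute_degree!
  have hpsi : (X ^ 2 - C (k : ℚ) * X + C (k : ℚ) : ℚ[X]).natDegree = 2 := by compute_degree!
  have hconj : ∀ (m : ℕ) (x : AlgebraicClosure ℚ),
      (fun y => aeval y (X ^ 2 - C (k : ℚ) * X + C (k : ℚ)))^[m] (x + (k : AlgebraicClosure ℚ))
        = (fun y => aeval y (X ^ 2 + C (k : ℚ) * X))^[m] x + (k : AlgebraicClosure ℚ) := by
    intro m
    induction m with
    | zero => intro x; rfl
    | succ m ih =>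
      intro x
      rw [Function.iterate_succ_apply', Function.iterate_succ_apply', ih]
      simp
      ring
  have hroot : ∀ (m : ℕ) (x : AlgebraicClosure ℚ),
      (fun y => aeval y (X ^ 2 + C (k : ℚ) * X))^[m + 1] x = 0 ↔
        (fun y => aeval y (X ^ 2 + C (k : ℚ) * X))^[m] x = 0 ∨
        (fun y => aeval y (X ^ 2 - C (k : ℚ) * X + C (k : ℚ)))^[m]
          (x + (k : AlgebraicClosure ℚ)) = 0 := by
    intro m x
    rw [hconj, Function.iterate_succ_apply', ← mul_eq_zero]
    generalize (fun y => aeval y (X ^ 2 + C (k : ℚ) * X))^[m] x = z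
    simp only [map_add, map_mul, map_pow, aeval_X, map_intCast]
    ring_nf
  obtain ⟨m, rfl⟩ : ∃ m, n = m + 1 := ⟨n - 1, by omega⟩
  clear hn
  rw [Nat.add_sub_cancel]
  apply le_antisymm
  · induction m with
    | zero =>
      unfold splitFld
      rw [IntermediateField.adjoin_le_iff]
      intro x hx
      rw [mem_rootSet_iterComp _ hphi, hroot] at hx
      rcases hx with hx | hx
      · have : x = 0 := hx
        rw [this]
        exact zero_mem _
      · have : x + (k : AlgebraicClosure ℚ) = 0 := hx
        rw [eq_neg_of_add_eq_zero_left this]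
        exact neg_mem (intCast_mem _ k)
    | succ m ih =>
      have h2 := ih.trans (splitFld_le_succ _ hpsi m)
      conv_lhs => unfold splitFld
      rw [IntermediateField.adjoin_le_iff]
      intro x hx
      rw [mem_rootSet_iterComp _ hphi, hroot] at hx
      rcases hx with hx | hx
      · apply h2
        apply IntermediateField.subset_adjoin
        rwa [mem_rootSet_iterComp _ hphi]
      · rw [← mem_rootSet_iterComp _ hpsi] at hx
        have h3 := IntermediateField.subset_adjoin ℚ _ hx
        have h4 := sub_mem h3 (intCast_mem _ k)
        rwa [add_sub_cancel_right] at h4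
  · conv_lhs => unfold splitFld
    rw [IntermediateField.adjoin_le_iff]
    intro x hx
    rw [mem_rootSet_iterComp _ hpsi] at hx
    have h3 : x - (k : AlgebraicClosure ℚ) ∈
        splitFld (iterComp (X ^ 2 + C (k : ℚ) * X) (m + 1)) := by
      apply IntermediateField.subset_adjoin
      rw [mem_rootSet_iterComp _ hphi, hroot, sub_add_cancel]
      exact Or.inr hx
    have h4 := add_mem h3 (intCast_mem _ k)
    rwa [sub_add_cancel] at h4
end

section
/- Let k ∈ ℤ with k ∉ {−2, 0, 2, 4}, and let φ(X) = X² + kX ∈ ℚ[X]. Then there is a constant C such that for every n ≥ 1, 2^(2^(n−1) − 1) ≤ C · [K_n : ℚ], where K_n is the splitting field of the n-fold iterate φ^{∘n} over ℚ. (Equivalently, the index of the Galois group G_n(φ) = Gal(K_n/ℚ) inside the group S_n(φ) of order 2^(2^(n−1)−1) is bounded independently of n, which is the finite-level form of the assertion that [S(φ) : G(φ)] < ∞.) -/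
open Polynomial

/-- reduction of powers modulo a monic quartic -/
def redPow (g : Fin 4 → ℤ) : ℕ → Fin 4 → ℤ
  | 0 => ![1, 0, 0, 0]
  | i + 1 => ![g 0 * redPow g i 3, redPow g i 0 + g 1 * redPow g i 3,
      redPow g i 1 + g 2 * redPow g i 3, redPow g i 2 + g 3 * redPow g i 3]

theorem redPow_spec (g : Fin 4 → ℤ) (x : ℂ) (hx : x ^ 4 = ∑ l, (g l : ℂ) * x ^ (l : ℕ)) (i : ℕ) :
    x ^ i = ∑ l, (redPow g i l : ℂ) * x ^ (l : ℕ) := by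
  induction i with
  | zero => simp [redPow, Fin.sum_univ_four]
  | succ i ih =>
    rw [pow_succ, ih]
    simp [redPow, Fin.sum_univ_four] at hx ⊢
    linear_combination (redPow g i 3 : ℂ) * hx

theorem redPow_bound (g : Fin 4 → ℤ) (G : ℤ) (hG : ∀ l, |g l| ≤ G) (i : ℕ) (l : Fin 4) :
    |redPow g i l| ≤ (1 + G) ^ i := by
  have hG0 : 0 ≤ G := (abs_nonneg _).trans (hG 0)
  induction i generalizing l with
  | zero => fin_cases l <;> simp [redPow]
  | succ i ih =>
    have hp : (0:ℤ) ≤ (1 + G) ^ i := by positivity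
    have key : ∀ l, |g l * redPow g i 3| ≤ G * (1 + G) ^ i := by
      intro l
      rw [abs_mul]
      exact mul_le_mul (hG l) (ih 3) (abs_nonneg _) hG0
    have e : (1 + G) ^ (i + 1) = (1 + G) ^ i + G * (1 + G) ^ i := by ring
    have h0 := key 0
    have h1 := key 1
    have h2 := key 2
    have h3 := key 3
    have i0 := ih 0
    have i1 := ih 1
    have i2 := ih 2
    rw [e]
    fin_cases l
    · simp only [redPow]
      exact h0.trans (by linarith)
    · exact (abs_add_le _ _).trans (by linarith)
    · exact (abs_add_le _ _).trans (by linarith)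
    · exact (abs_add_le _ _).trans (by linarith)

/-- evaluation of the j-th Hasse derivative of a polynomial given by coefficients -/
noncomputable def hasEv (N : ℕ) (a : ℕ → ℤ) (j : ℕ) (x : ℂ) : ℂ :=
  ∑ i ∈ Finset.range (N + 1), (a i : ℂ) * (i.choose j : ℂ) * x ^ (i - j)

theorem siegel_aux (g : Fin 4 → ℤ) : ∃ c : ℝ, 1 ≤ c ∧ ∀ τ : ℕ, 1 ≤ τ → ∃ a b : ℕ → ℤ,
    (∃ i ≤ 21 * τ, a i ≠ 0 ∨ b i ≠ 0) ∧ (∀ i, |(a i : ℝ)| ≤ c ^ τ ∧ |(b i : ℝ)| ≤ c ^ τ) ∧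
    ∀ x : ℂ, x ^ 4 = ∑ l, (g l : ℂ) * x ^ (l : ℕ) → ∀ j < 10 * τ,
      hasEv (21 * τ) a j x + x * hasEv (21 * τ) b j x = 0 := by
  obtain ⟨G, hG⟩ : ∃ G : ℤ, ∀ l, |g l| ≤ G :=
    ⟨∑ l, |g l|, fun l => Finset.single_le_sum (f := fun l => |g l|) (fun _ _ => abs_nonneg _)
      (Finset.mem_univ l)⟩
  have hG0 : 0 ≤ G := (abs_nonneg _).trans (hG 0)
  set H : ℝ := 1 + G with hH
  have hH1 : 1 ≤ H := by
    have : (0:ℝ) ≤ G := by exact_mod_cast hG0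
    linarith
  have hH0 : 0 ≤ H := by linarith
  refine ⟨(88 * 2 ^ 21 * H ^ 22) ^ 20, ?_, ?_⟩
  · apply one_le_pow₀
    have : 1 ≤ H ^ 22 := one_le_pow₀ hH1
    nlinarith
  intro τ hτ
  let M : Matrix (Fin (10 * τ) × Fin 4) (Fin 2 × Fin (21 * τ + 1)) ℤ :=
    fun jl ei => (((ei.2 : ℕ).choose jl.1 : ℕ) : ℤ) * redPow g ((ei.2 : ℕ) - jl.1 + ei.1) jl.2
  obtain ⟨t, ht0, htM, htn⟩ := Int.Matrix.exists_ne_zero_int_vec_norm_le M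
    (by simp; omega) (by simp; omega)
  let _ : SeminormedAddCommGroup (Matrix (Fin (10 * τ) × Fin 4) (Fin 2 × Fin (21 * τ + 1)) ℤ) :=
    Matrix.seminormedAddCommGroup
  have hMn : ‖M‖ ≤ 2 ^ (21 * τ) * H ^ (22 * τ) := by
    rw [Matrix.norm_le_iff (by positivity)]
    rintro ⟨j, l⟩ ⟨e, i⟩
    rw [Int.norm_eq_abs]
    simp only [M, Int.cast_mul, abs_mul]
    apply mul_le_mul _ _ (abs_nonneg _) (by positivity)
    · rw [Int.cast_natCast, Nat.abs_cast]
      calc (((i:ℕ).choose j : ℕ) : ℝ) ≤ ((2 ^ (i:ℕ) : ℕ) : ℝ) := by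
            exact_mod_cast Nat.choose_le_two_pow _ _
        _ ≤ 2 ^ (21 * τ) := by
            push_cast
            exact pow_le_pow_right₀ (by norm_num) (by omega)
    · have := redPow_bound g G hG ((i : ℕ) - j + e) l
      have h2 : |(redPow g ((i : ℕ) - j + e) l : ℝ)| ≤ H ^ ((i : ℕ) - j + e) := by
        rw [hH]; exact_mod_cast this
      exact h2.trans (pow_le_pow_right₀ hH1 (by omega))
  have hbd : ‖t‖ ≤ ((88 * 2 ^ 21 * H ^ 22) ^ 20) ^ τ := by
    refine htn.trans ?_
    have hτ' : (1:ℝ) ≤ τ := by exact_mod_cast hτ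
    have e1 : (Fintype.card (Fin (10 * τ) × Fin 4) : ℝ) /
      ((Fintype.card (Fin 2 × Fin (21 * τ + 1)) : ℝ) - (Fintype.card (Fin (10 * τ) × Fin 4) : ℝ))
        ≤ (20 : ℕ) := by
      simp only [Fintype.card_prod, Fintype.card_fin]
      push_cast
      rw [div_le_iff₀ (by linarith)]
      linarith
    have hcard : (Fintype.card (Fin 2 × Fin (21 * τ + 1)) : ℝ) ≤ 88 ^ τ := by
      simp only [Fintype.card_prod, Fintype.card_fin]
      have h2 : τ < 2 ^ τ := Nat.lt_two_pow_self
      have h44 : 44 ≤ 44 ^ τ := Nat.le_self_pow (by omega) _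
      have : 2 * (21 * τ + 1) ≤ 88 ^ τ := by
        calc 2 * (21 * τ + 1) ≤ 44 * τ := by omega
          _ ≤ 44 ^ τ * 2 ^ τ := Nat.mul_le_mul h44 h2.le
          _ = 88 ^ τ := by rw [← mul_pow]; norm_num
      exact_mod_cast this
    have hcard1 : (1:ℝ) ≤ (Fintype.card (Fin 2 × Fin (21 * τ + 1)) : ℝ) := by
      simp only [Fintype.card_prod, Fintype.card_fin]
      push_cast
      linarith
    have hmax : max 1 ‖M‖ ≤ 2 ^ (21 * τ) * H ^ (22 * τ) := by
      apply max_le _ hMn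
      exact one_le_mul_of_one_le_of_one_le (one_le_pow₀ (by norm_num)) (one_le_pow₀ hH1)
    have hb1 : (1:ℝ) ≤ (Fintype.card (Fin 2 × Fin (21 * τ + 1)) : ℝ) * max 1 ‖M‖ :=
      one_le_mul_of_one_le_of_one_le hcard1 (le_max_left _ _)
    refine (Real.rpow_le_rpow_of_exponent_le hb1 e1).trans ?_
    rw [Real.rpow_natCast]
    calc _ ≤ (88 ^ τ * (2 ^ (21 * τ) * H ^ (22 * τ))) ^ 20 := by gcongr
      _ = _ := by
        rw [← pow_mul, mul_comm 20 τ, pow_mul, pow_mul, pow_mul]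
        simp only [mul_pow, mul_assoc]
  refine ⟨fun i => if h : i < 21 * τ + 1 then t (0, ⟨i, h⟩) else 0,
    fun i => if h : i < 21 * τ + 1 then t (1, ⟨i, h⟩) else 0, ?_, ?_, ?_⟩
  · obtain ⟨⟨e, i⟩, hei⟩ := Function.ne_iff.mp ht0
    refine ⟨i, by omega, ?_⟩
    have : (i:ℕ) < 21 * τ + 1 := i.2
    simp only [this, dif_pos]
    fin_cases e
    · left; exact hei
    · right; exact hei
  · have hc : ∀ ei, |(t ei : ℝ)| ≤ ((88 * 2 ^ 21 * H ^ 22) ^ 20) ^ τ := by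
      intro ei
      rw [← Int.norm_eq_abs]
      exact (norm_le_pi_norm t ei).trans hbd
    have hpos : (0:ℝ) ≤ ((88 * 2 ^ 21 * H ^ 22) ^ 20) ^ τ := by positivity
    intro i
    constructor
    · dsimp only
      split_ifs
      · exact hc _
      · simpa using hpos
    · dsimp only
      split_ifs
      · exact hc _
      · simpa using hpos
  · intro x hx j hj
    have h1 : ∀ l : Fin 4, ∑ ei, M (⟨j, hj⟩, l) ei * t ei = 0 := fun l => congrFun htM (⟨j, hj⟩, l)
    have h2 : ∑ l : Fin 4, ((∑ ei, M (⟨j, hj⟩, l) ei * t ei : ℤ) : ℂ) * x ^ (l : ℕ) = 0 := by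
      simp [h1]
    rw [← h2]
    push_cast
    simp only [Finset.sum_mul]
    rw [Finset.sum_comm, Fintype.sum_prod_type, Fin.sum_univ_two]
    unfold hasEv
    rw [Finset.mul_sum, Finset.sum_range, Finset.sum_range]
    congr 1
    · apply Finset.sum_congr rfl
      intro i _
      have : (i:ℕ) < 21 * τ + 1 := i.2
      simp only [this, dif_pos, M]
      rw [redPow_spec g x hx ((i:ℕ) - j), Finset.mul_sum]
      apply Finset.sum_congr rfl
      intro l _
      push_cast
      simp
      ring
    · apply Finset.sum_congr rfl
      intro i _
      have : (i:ℕ) < 21 * τ + 1 := i.2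
      simp only [this, dif_pos, M]
      rw [mul_left_comm, ← pow_succ', redPow_spec g x hx ((i:ℕ) - j + 1), Finset.mul_sum]
      apply Finset.sum_congr rfl
      intro l _
      push_cast
      simp
      ring

open Polynomial

theorem mult_count {P : ℂ[X]} (hP : P ≠ 0) (S : Finset ℂ) (m : ℂ → ℕ)
    (h : ∀ x ∈ S, (X - C x) ^ m x ∣ P) : ∑ x ∈ S, m x ≤ P.natDegree := by
  have : (∏ x ∈ S, (X - C x) ^ m x) ∣ P := by
    apply Finset.prod_dvd_of_coprime
    · intro x _ y _ hxy
      exact (isCoprime_X_sub_C_of_isUnit_sub (sub_ne_zero.mpr hxy).isUnit).pow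
    · exact h
  have h2 := natDegree_le_of_dvd this hP
  rw [natDegree_prod_of_monic _ _ (fun x _ => (monic_X_sub_C x).pow _)] at h2
  simpa using h2

theorem dvd_wronskian {A B : ℂ[X]} {x y : ℂ} {m : ℕ} (h : (X - C x) ^ (m + 1) ∣ A + C y * B) :
    (X - C x) ^ m ∣ wronskian A B := by
  have e : wronskian A B = (A + C y * B) * derivative B - derivative (A + C y * B) * B := by
    simp [wronskian]; ring
  rw [e]
  apply dvd_sub
  · exact ((pow_dvd_pow _ (Nat.le_succ m)).trans h).mul_right _
  · apply Dvd.dvd.mul_right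
    obtain ⟨q, hq⟩ := h
    rw [hq, derivative_mul, derivative_X_sub_C_pow]
    simp only [Nat.add_sub_cancel]
    apply dvd_add
    · exact ((dvd_mul_left _ _)).mul_right _
    · exact ((pow_dvd_pow _ (Nat.le_succ m))).mul_right _

theorem wronskian_zero {A B : ℂ[X]} (h : wronskian A B = 0) (h0 : A ≠ 0 ∨ B ≠ 0) :
    ∃ (s t : ℂ) (d : ℂ[X]), d ≠ 0 ∧ (s ≠ 0 ∨ t ≠ 0) ∧ A = C s * d ∧ B = C t * d := by
  classical
  set d := EuclideanDomain.gcd A B with hd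
  have hd0 : d ≠ 0 := by
    intro hh
    rw [EuclideanDomain.gcd_eq_zero_iff] at hh
    rcases h0 with h0 | h0
    · exact h0 hh.1
    · exact h0 hh.2
  obtain ⟨A1, hA⟩ := EuclideanDomain.gcd_dvd_left A B
  obtain ⟨B1, hB⟩ := EuclideanDomain.gcd_dvd_right A B
  rw [← hd] at hA hB
  have hcop : IsCoprime A1 B1 := by
    have hb := EuclideanDomain.gcd_eq_gcd_ab A B
    rw [← hd] at hb
    refine ⟨EuclideanDomain.gcdA A B, EuclideanDomain.gcdB A B, ?_⟩
    apply mul_left_cancel₀ hd0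
    calc _ = (d * A1) * EuclideanDomain.gcdA A B + (d * B1) * EuclideanDomain.gcdB A B := by ring
      _ = d * 1 := by rw [← hA, ← hB, mul_one]; exact hb.symm
  have hW : wronskian A1 B1 = 0 := by
    have : wronskian A B = d ^ 2 * wronskian A1 B1 := by
      rw [hA, hB]; simp [wronskian, derivative_mul]; ring
    rw [this] at h
    exact (mul_eq_zero.mp h).resolve_left (pow_ne_zero _ hd0)
  rw [hcop.wronskian_eq_zero_iff] at hW
  have e1 := derivative_eq_zero.mp hW.1
  have e2 := derivative_eq_zero.mp hW.2
  rw [natDegree_eq_zero] at e1 e2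
  obtain ⟨s, hs⟩ := e1
  obtain ⟨t, ht⟩ := e2
  refine ⟨s, t, d, hd0, ?_, by rw [hA, ← hs, mul_comm], by rw [hB, ← ht, mul_comm]⟩
  by_contra hcon
  push Not at hcon
  rw [hcon.1, C_0] at hs
  rw [hcon.2, C_0] at ht
  rw [← hs] at hA
  rw [← ht] at hB
  rcases h0 with h0 | h0
  · exact h0 (by rw [hA, mul_zero])
  · exact h0 (by rw [hB, mul_zero])

theorem zero_est {A B : ℂ[X]} {τ : ℕ} (hτ : 1 ≤ τ) (hA : A.natDegree ≤ 21 * τ)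
    (hB : B.natDegree ≤ 21 * τ) (h0 : A ≠ 0 ∨ B ≠ 0) (S : Finset ℂ) (hS : S.card = 4)
    (h : ∀ x ∈ S, (X - C x) ^ (10 * τ) ∣ A + C x * B) (x1 x2 : ℂ) (hx1 : x1 ∉ S)
    (h1 : (X - C x1) ^ (2 * τ + 5) ∣ A + C x2 * B) : False := by
  classical
  by_cases hW : wronskian A B = 0
  · obtain ⟨s, t, d, hd, hst, rfl, rfl⟩ := wronskian_zero hW h0
    have hdeg : d.natDegree ≤ 21 * τ := by
      rcases hst with hs | hs
      · rwa [natDegree_C_mul hs] at hA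
      · rwa [natDegree_C_mul hs] at hB
    set S' := S.filter (fun x => s + x * t ≠ 0) with hS'
    have hdv : ∀ x ∈ S', (X - C x) ^ (10 * τ) ∣ d := by
      intro x hx
      rw [hS', Finset.mem_filter] at hx
      have := h x hx.1
      have e : C s * d + C x * (C t * d) = C (s + x * t) * d := by simp; ring
      rw [e] at this
      have hu : IsUnit (C (s + x * t)) := isUnit_C.mpr hx.2.isUnit
      exact hu.dvd_mul_left.mp this
    have hc := mult_count hd S' (fun _ => 10 * τ) hdv
    have hcard : 3 ≤ S'.card := by
      have h2 : (S.filter (fun x => ¬ (s + x * t ≠ 0))).card ≤ 1 := by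
        rw [Finset.card_le_one]
        intro x hx y hy
        simp only [Finset.mem_filter, not_not] at hx hy
        have ht : t ≠ 0 := by
          rintro rfl
          simp at hx hst
          exact hst hx.2
        apply mul_right_cancel₀ ht
        linear_combination hx.2 - hy.2
      have h3 : S'.card + (S.filter (fun x => ¬ (s + x * t ≠ 0))).card = S.card := by
        rw [hS']
        exact Finset.card_filter_add_card_filter_not (s := S) (fun x => s + x * t ≠ 0)
      omega
    simp only [Finset.sum_const, smul_eq_mul] at hc
    have : 3 * (10 * τ) ≤ S'.card * (10 * τ) := Nat.mul_le_mul_right _ hcard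
    omega
  · have hdeg := natDegree_wronskian_lt_add hW
    have hc := mult_count hW (insert x1 S) (fun x => if x = x1 then 2 * τ + 4 else 10 * τ - 1) (by
      intro x hx
      rw [Finset.mem_insert] at hx
      by_cases hxx : x = x1
      · simp only [hxx, if_true]
        exact dvd_wronskian (y := x2) h1
      · simp only [hxx, if_false]
        apply dvd_wronskian (y := x)
        rw [show 10 * τ - 1 + 1 = 10 * τ by omega]
        exact h x (hx.resolve_left hxx))
    rw [Finset.sum_insert hx1, Finset.sum_congr rfl (g := fun _ => 10 * τ - 1)] at hc
    · simp only [Finset.sum_const, smul_eq_mul, hS, if_true] at hc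
      omega
    · intro x hx
      rw [if_neg]
      rintro rfl
      exact hx1 hx

theorem pow_dvd_of_hasse {P : ℂ[X]} {x : ℂ} {m : ℕ}
    (h : ∀ j < m, (hasseDeriv j P).eval x = 0) : (X - C x) ^ m ∣ P := by
  rw [X_sub_C_pow_dvd_iff, X_pow_dvd_iff]
  intro d hd
  rw [← h d hd, ← taylor_coeff, taylor_apply]

open Polynomial

/-- polynomial with given coefficients -/
noncomputable def polyOf (N : ℕ) (a : ℕ → ℤ) : ℂ[X] :=
  ∑ i ∈ Finset.range (N + 1), monomial i (a i : ℂ)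

theorem hasEv_eq (N : ℕ) (a : ℕ → ℤ) (j : ℕ) (x : ℂ) :
    (hasseDeriv j (polyOf N a)).eval x = hasEv N a j x := by
  unfold polyOf hasEv
  rw [map_sum, eval_finsetSum]
  apply Finset.sum_congr rfl
  intro i _
  rw [hasseDeriv_monomial, eval_monomial]
  ring

theorem polyOf_deg (N : ℕ) (a : ℕ → ℤ) : (polyOf N a).natDegree ≤ N := by
  unfold polyOf
  apply natDegree_sum_le_of_forall_le
  intro i hi
  rw [Finset.mem_range] at hi
  exact (natDegree_monomial_le _).trans (by omega)

theorem polyOf_ne {N : ℕ} {a : ℕ → ℤ} {i : ℕ} (hi : i ≤ N) (h : a i ≠ 0) : polyOf N a ≠ 0 := by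
  intro h0
  have : (polyOf N a).coeff i = a i := by
    unfold polyOf
    rw [finsetSum_coeff]
    simp only [coeff_monomial]
    rw [Finset.sum_ite_eq' , if_pos (Finset.mem_range.mpr (by omega))]
  rw [h0, coeff_zero] at this
  exact h (by exact_mod_cast this.symm)

theorem hasEv_bound {N : ℕ} {a : ℕ → ℤ} {Y R : ℝ} (hY : ∀ i, |(a i : ℝ)| ≤ Y) (hR : 1 ≤ R)
    {x : ℂ} (hx : ‖x‖ ≤ R) (j : ℕ) : ‖hasEv N a j x‖ ≤ (N + 1) * (Y * 2 ^ N * R ^ N) := by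
  have hY0 : 0 ≤ Y := (abs_nonneg _).trans (hY 0)
  unfold hasEv
  refine (norm_sum_le _ _).trans ?_
  refine (Finset.sum_le_card_nsmul _ _ (Y * 2 ^ N * R ^ N) ?_).trans ?_
  · intro i hi
    rw [Finset.mem_range] at hi
    rw [norm_mul, norm_mul, norm_pow]
    have h1 : ‖(a i : ℂ)‖ ≤ Y := by
      rw [Complex.norm_intCast]; exact hY i
    have h2 : ‖((i.choose j : ℕ) : ℂ)‖ ≤ 2 ^ N := by
      rw [Complex.norm_natCast]
      calc ((i.choose j : ℕ) : ℝ) ≤ ((2 ^ i : ℕ) : ℝ) := by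
            exact_mod_cast Nat.choose_le_two_pow _ _
        _ ≤ 2 ^ N := by
            push_cast
            exact pow_le_pow_right₀ (by norm_num) (by omega)
    have h3 : ‖x‖ ^ (i - j) ≤ R ^ N :=
      (pow_le_pow_left₀ (norm_nonneg _) hx _).trans (pow_le_pow_right₀ hR (by omega))
    gcongr
  · simp

theorem hasse_taylor (F : ℂ[X]) (N : ℕ) (hF : F.natDegree ≤ N) (α x : ℂ) (j : ℕ) :
    (hasseDeriv j F).eval x = ∑ i ∈ Finset.range (N + 1),
      (hasseDeriv i F).eval α * (i.choose j : ℂ) * (x - α) ^ (i - j) := by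
  have h1 : taylor x F = taylor (x - α) (taylor α F) := by
    rw [taylor_taylor, sub_add_cancel]
  have h2 : taylor α F = ∑ i ∈ Finset.range (N + 1), monomial i ((hasseDeriv i F).eval α) := by
    rw [as_sum_range' (taylor α F) (N + 1) (by rw [natDegree_taylor]; omega)]
    simp only [taylor_coeff]
  rw [← taylor_coeff, h1, taylor_coeff, h2, map_sum, eval_finsetSum]
  apply Finset.sum_congr rfl
  intro i _
  rw [hasseDeriv_monomial, eval_monomial]
  ring

theorem upper_est {N T : ℕ} {a b : ℕ → ℤ} {Y R : ℝ} (hYa : ∀ i, |(a i : ℝ)| ≤ Y)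
    (hYb : ∀ i, |(b i : ℝ)| ≤ Y) (α x1 x2 : ℂ) (hR : 1 ≤ R) (hα : ‖α‖ + 1 ≤ R)
    (hx1 : ‖x1 - α‖ ≤ 1) (h : ∀ j < T, hasEv N a j α + α * hasEv N b j α = 0) (j : ℕ) :
    ‖hasEv N a j x1 + x2 * hasEv N b j x1‖ ≤
      (N + 1) * (R * ((N + 1) * (Y * 2 ^ N * R ^ N)) * 2 ^ N) *
        (‖x1 - α‖ ^ (T - j) + ‖x2 - α‖) := by
  have hY0 : 0 ≤ Y := (abs_nonneg _).trans (hYa 0)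
  set Z := ((N:ℝ) + 1) * (Y * 2 ^ N * R ^ N) with hZ
  have hZ0 : 0 ≤ Z := by positivity
  set F := polyOf N a + C α * polyOf N b with hF
  have hFe : ∀ i x, (hasseDeriv i F).eval x = hasEv N a i x + α * hasEv N b i x := by
    intro i x
    rw [hF, map_add, eval_add, ← smul_eq_C_mul, map_smul, eval_smul, hasEv_eq, hasEv_eq,
      smul_eq_mul]
  have hFd : F.natDegree ≤ N := by
    apply (natDegree_add_le _ _).trans
    apply max_le (polyOf_deg _ _)
    exact (natDegree_C_mul_le _ _).trans (polyOf_deg _ _)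
  have hαR : ‖α‖ ≤ R := by linarith
  have hx1R : ‖x1‖ ≤ R := by
    calc ‖x1‖ = ‖α + (x1 - α)‖ := by congr 1; ring
      _ ≤ ‖α‖ + ‖x1 - α‖ := norm_add_le _ _
      _ ≤ R := by linarith
  have hFb : ∀ i, ‖(hasseDeriv i F).eval α‖ ≤ R * Z := by
    intro i
    rw [hFe]
    have h1 := hasEv_bound (N := N) hYa hR hαR i
    have h2 := hasEv_bound (N := N) hYb hR hαR i
    calc _ ≤ ‖hasEv N a i α‖ + ‖α * hasEv N b i α‖ := norm_add_le _ _
      _ ≤ Z + ‖α‖ * Z := by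
        rw [norm_mul]
        gcongr
      _ = (‖α‖ + 1) * Z := by ring
      _ ≤ R * Z := by gcongr
  have hmain : ‖(hasseDeriv j F).eval x1‖ ≤ (N + 1) * (R * Z * 2 ^ N) * ‖x1 - α‖ ^ (T - j) := by
    rw [hasse_taylor F N hFd α x1 j]
    refine (norm_sum_le _ _).trans ?_
    refine (Finset.sum_le_card_nsmul _ _ (R * Z * 2 ^ N * ‖x1 - α‖ ^ (T - j)) ?_).trans ?_
    · intro i hi
      rw [Finset.mem_range] at hi
      by_cases hiT : i < T
      · rw [hFe, h i hiT]
        simp only [zero_mul, norm_zero]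
        positivity
      · rw [norm_mul, norm_mul, norm_pow]
        have h2 : ‖((i.choose j : ℕ) : ℂ)‖ ≤ 2 ^ N := by
          rw [Complex.norm_natCast]
          calc ((i.choose j : ℕ) : ℝ) ≤ ((2 ^ i : ℕ) : ℝ) := by
                exact_mod_cast Nat.choose_le_two_pow _ _
            _ ≤ 2 ^ N := by
                push_cast
                exact pow_le_pow_right₀ (by norm_num) (by omega)
        have h3 : ‖x1 - α‖ ^ (i - j) ≤ ‖x1 - α‖ ^ (T - j) :=
          pow_le_pow_of_le_one (norm_nonneg _) hx1 (by omega)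
        have h4 := hFb i
        gcongr
    · simp [mul_assoc]
  have hb := hasEv_bound (N := N) hYb hR hx1R j
  have e : hasEv N a j x1 + x2 * hasEv N b j x1 =
      (hasseDeriv j F).eval x1 + (x2 - α) * hasEv N b j x1 := by
    rw [hFe]; ring
  rw [e]
  have hN : (1:ℝ) ≤ N + 1 := by
    have : (0:ℝ) ≤ N := Nat.cast_nonneg _
    linarith
  have h2N : (1:ℝ) ≤ 2 ^ N := one_le_pow₀ (by norm_num)
  have hZZ : Z ≤ (N + 1) * (R * Z * 2 ^ N) := by
    calc Z = 1 * (1 * Z * 1) := by ring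
      _ ≤ (N + 1) * (R * Z * 2 ^ N) := by gcongr
  calc _ ≤ ‖(hasseDeriv j F).eval x1‖ + ‖(x2 - α) * hasEv N b j x1‖ := norm_add_le _ _
    _ ≤ (N + 1) * (R * Z * 2 ^ N) * ‖x1 - α‖ ^ (T - j) + ‖x2 - α‖ * ((N + 1) * (R * Z * 2 ^ N)) := by
      rw [norm_mul]
      gcongr
      exact hb.trans hZZ
    _ = _ := by ring

theorem lower_est {N : ℕ} {a b : ℕ → ℤ} (p1 p2 : ℤ) (q1 q2 : ℕ) (hq1 : 0 < q1) (hq2 : 0 < q2)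
    (j : ℕ) (h : hasEv N a j (p1 / q1) + (p2 / q2) * hasEv N b j (p1 / q1) ≠ 0) :
    1 ≤ (q1 : ℝ) ^ N * q2 * ‖hasEv N a j (p1 / q1) + (p2 / q2) * hasEv N b j (p1 / q1)‖ := by
  have hq1' : (q1 : ℂ) ≠ 0 := by exact_mod_cast hq1.ne'
  have hq2' : (q2 : ℂ) ≠ 0 := by exact_mod_cast hq2.ne'
  have hzint : ∀ a : ℕ → ℤ, ∃ z : ℤ, (q1 : ℂ) ^ N * hasEv N a j (p1 / q1) = z := by
    intro a
    refine ⟨∑ i ∈ Finset.range (N + 1), a i * (i.choose j : ℤ) * (p1 ^ (i - j) * q1 ^ (N - (i - j))),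
      ?_⟩
    unfold hasEv
    rw [Finset.mul_sum]
    push_cast
    apply Finset.sum_congr rfl
    intro i hi
    rw [Finset.mem_range] at hi
    have : (q1 : ℂ) ^ N = q1 ^ (i - j) * q1 ^ (N - (i - j)) := by
      rw [← pow_add]; congr 1; omega
    rw [this, div_pow]
    field_simp
  obtain ⟨za, hza⟩ := hzint a
  obtain ⟨zb, hzb⟩ := hzint b
  have e : (q1 : ℂ) ^ N * q2 * (hasEv N a j (p1 / q1) + (p2 / q2) * hasEv N b j (p1 / q1)) =
      ((q2 * za + p2 * zb : ℤ) : ℂ) := by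
    push_cast
    rw [← hza, ← hzb]
    field_simp
  have hne : (q2 * za + p2 * zb : ℤ) ≠ 0 := by
    intro h0
    rw [h0, Int.cast_zero] at e
    have := mul_ne_zero (mul_ne_zero (pow_ne_zero N hq1') hq2') h
    exact this e
  have e2 := congrArg norm e
  rw [norm_mul, norm_mul, norm_pow, Complex.norm_natCast, Complex.norm_natCast,
    Complex.norm_intCast] at e2
  rw [e2]
  exact_mod_cast Int.one_le_abs hne

open Polynomial

theorem thue_quartic (g : Fin 4 → ℤ) (S : Finset ℂ) (hS : S.card = 4)
    (hroot : ∀ x ∈ S, x ^ 4 = ∑ l, (g l : ℂ) * x ^ (l : ℕ)) (α : ℝ) (hα : (α : ℂ) ∈ S) (c : ℝ) :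
    ∃ Q : ℕ, ∀ (p : ℤ) (q : ℕ), Q ≤ q → ((p : ℂ) / q) ∉ S → |α - p / q| ≤ c / q ^ 4 → False := by
  by_contra hcon
  push Not at hcon
  obtain ⟨c0, hc0, hsieg⟩ := siegel_aux g
  set d : ℝ := max c 1 with hd
  have hd1 : 1 ≤ d := le_max_right _ _
  have hcd : c ≤ d := le_max_left _ _
  set R : ℝ := |α| + 2 with hR
  have hR1 : 1 ≤ R := by have := abs_nonneg α; linarith
  set c1 : ℝ := 44 * (44 * 2 ^ 42 * R ^ 22 * c0) with hc1
  have hc1pos : 1 ≤ c1 := by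
    have : 1 ≤ R ^ 22 := one_le_pow₀ hR1
    have h2 : 1 ≤ R ^ 22 * c0 := one_le_mul_of_one_le_of_one_le this hc0
    rw [hc1]; nlinarith
  set c2 : ℝ := c1 * d ^ 10 with hc2
  have hc2pos : 1 ≤ c2 := one_le_mul_of_one_le_of_one_le hc1pos (one_le_pow₀ hd1)
  clear_value c2 c1 R d
  obtain ⟨Q1, hQ1⟩ := exists_nat_gt (2 * c2 + d + 2)
  obtain ⟨p1, q1, hq1, hS1, hap1⟩ := hcon Q1
  obtain ⟨p2, q2, hq2, hS2, hap2⟩ := hcon (q1 ^ 225)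
  have hq1r : 2 * c2 + d + 2 < q1 := hQ1.trans_le (by exact_mod_cast hq1)
  have hq1r1 : (1:ℝ) ≤ q1 := by linarith
  have hq1pos : 0 < q1 := by
    have : (0:ℝ) < q1 := by linarith
    exact_mod_cast this
  have hq12 : 2 ≤ q1 := by
    have : (2:ℝ) ≤ q1 := by linarith
    exact_mod_cast this
  have hq2pos : 0 < q2 := (pow_pos hq1pos _).trans_le hq2
  have hq1R : (0:ℝ) < q1 := by exact_mod_cast hq1pos
  have hq2R : (0:ℝ) < q2 := by exact_mod_cast hq2pos
  set τ := Nat.log (q1 ^ 9) q2 with hτ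
  have hb : 1 < q1 ^ 9 := Nat.one_lt_pow (by norm_num) (by omega)
  have hτ25 : 25 ≤ τ := by
    rw [hτ]
    apply Nat.le_log_of_pow_le hb
    rw [← pow_mul]; exact hq2
  have hlow : q1 ^ (9 * τ) ≤ q2 := by
    rw [pow_mul]; exact Nat.pow_log_le_self _ hq2pos.ne'
  have hupp : q2 < q1 ^ (9 * τ + 9) := by
    have := Nat.lt_pow_succ_log_self hb q2
    rw [← pow_mul] at this
    exact this
  obtain ⟨a, b, hab0, habb, hab⟩ := hsieg τ (by omega)
  have hj : ∃ j < 2 * τ + 5, hasEv (21 * τ) a j (p1 / q1) + (p2 / q2) * hasEv (21 * τ) b j (p1 / q1) ≠ 0 := by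
    by_contra hno
    push Not at hno
    have hFe : ∀ i (x y : ℂ), (hasseDeriv i (polyOf (21 * τ) a + C y * polyOf (21 * τ) b)).eval x =
        hasEv (21 * τ) a i x + y * hasEv (21 * τ) b i x := by
      intro i x y
      rw [map_add, eval_add, ← smul_eq_C_mul, map_smul, eval_smul, hasEv_eq, hasEv_eq,
        smul_eq_mul]
    refine zero_est (τ := τ) (by omega) (polyOf_deg (21 * τ) a) (polyOf_deg (21 * τ) b) ?_ S hS ?_
      (p1 / q1) (p2 / q2) hS1 ?_
    · obtain ⟨i, hi, h⟩ := hab0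
      exact h.imp (polyOf_ne hi) (polyOf_ne hi)
    · intro x hx
      apply pow_dvd_of_hasse
      intro j hj
      rw [hFe]
      exact hab x (hroot x hx) j hj
    · apply pow_dvd_of_hasse
      intro j hj
      rw [hFe]
      exact hno j hj
  obtain ⟨j, hjlt, hjne⟩ := hj
  have hlo := lower_est p1 p2 q1 q2 hq1pos hq2pos j hjne
  have hn1 : ‖(p1 / q1 : ℂ) - α‖ ≤ d / q1 ^ 4 := by
    have e : (p1 / q1 : ℂ) - α = ((p1 / q1 - α : ℝ) : ℂ) := by push_cast; ring
    rw [e, Complex.norm_real, Real.norm_eq_abs, abs_sub_comm]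
    exact hap1.1.trans (by gcongr)
  have hn2 : ‖(p2 / q2 : ℂ) - α‖ ≤ d / q2 ^ 4 := by
    have e : (p2 / q2 : ℂ) - α = ((p2 / q2 - α : ℝ) : ℂ) := by push_cast; ring
    rw [e, Complex.norm_real, Real.norm_eq_abs, abs_sub_comm]
    exact hap2.1.trans (by gcongr)
  have hdq : d / q1 ^ 4 ≤ 1 := by
    rw [div_le_one (by positivity)]
    calc d ≤ q1 := by linarith
      _ = (q1:ℝ) ^ 1 := (pow_one _).symm
      _ ≤ q1 ^ 4 := pow_le_pow_right₀ hq1r1 (by norm_num)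
  have hup := upper_est (N := 21 * τ) (T := 10 * τ) (fun i => (habb i).1) (fun i => (habb i).2)
    (α : ℂ) (p1 / q1) (p2 / q2) hR1 (by rw [Complex.norm_real, Real.norm_eq_abs]; linarith)
    (hn1.trans hdq) (hab α (hroot _ hα)) j
  have hconst : (((21 * τ : ℕ) : ℝ) + 1) * (R * ((((21 * τ : ℕ) : ℝ) + 1) *
      (c0 ^ τ * 2 ^ (21 * τ) * R ^ (21 * τ))) * 2 ^ (21 * τ)) ≤ c1 ^ τ := by
    have h44 : (((21 * τ : ℕ) : ℝ) + 1) ≤ 44 ^ τ := by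
      have h2 : τ < 2 ^ τ := Nat.lt_two_pow_self
      have h22 : 22 ≤ 22 ^ τ := Nat.le_self_pow (by omega) _
      have : 21 * τ + 1 ≤ 44 ^ τ := by
        calc 21 * τ + 1 ≤ 22 * τ := by omega
          _ ≤ 22 ^ τ * 2 ^ τ := Nat.mul_le_mul h22 h2.le
          _ = 44 ^ τ := by rw [← mul_pow]; norm_num
      exact_mod_cast this
    have hRR : R * R ^ (21 * τ) ≤ (R ^ 22) ^ τ := by
      rw [← pow_succ', ← pow_mul]
      exact pow_le_pow_right₀ hR1 (by omega)
    have hc0' : 0 ≤ c0 := by linarith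
    calc _ = (((21 * τ : ℕ) : ℝ) + 1) * ((((21 * τ : ℕ) : ℝ) + 1) *
          (2 ^ (21 * τ) * 2 ^ (21 * τ)) * (R * R ^ (21 * τ)) * c0 ^ τ) := by ring
      _ ≤ 44 ^ τ * (44 ^ τ * (2 ^ (21 * τ) * 2 ^ (21 * τ)) * (R ^ 22) ^ τ * c0 ^ τ) := by
          gcongr
      _ = c1 ^ τ := by
          rw [hc1, ← pow_add, show 21 * τ + 21 * τ = 42 * τ by ring, pow_mul, ← mul_pow, ← mul_pow,
            ← mul_pow, ← mul_pow]
  have hA : ‖(p1 / q1 : ℂ) - α‖ ^ (10 * τ - j) ≤ d ^ (10 * τ) / q1 ^ (32 * τ - 16) := by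
    calc _ ≤ (d / q1 ^ 4) ^ (10 * τ - j) := pow_le_pow_left₀ (norm_nonneg _) hn1 _
      _ ≤ (d / q1 ^ 4) ^ (8 * τ - 4) := pow_le_pow_of_le_one (by positivity) hdq (by omega)
      _ = d ^ (8 * τ - 4) / q1 ^ (32 * τ - 16) := by
        rw [div_pow, ← pow_mul]; congr 2; omega
      _ ≤ _ := by
        exact div_le_div_of_nonneg_right (pow_le_pow_right₀ hd1 (by omega)) (by positivity)
  have hB : d / q2 ^ 4 ≤ d ^ (10 * τ) / q2 ^ 4 := by
    gcongr
    exact le_self_pow₀ hd1 (by omega)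
  have hfin : (1:ℝ) ≤ (q1:ℝ) ^ (21 * τ) * q2 * (c1 ^ τ *
      (d ^ (10 * τ) / q1 ^ (32 * τ - 16) + d ^ (10 * τ) / q2 ^ 4)) := by
    refine hlo.trans ?_
    gcongr
    refine hup.trans ?_
    gcongr
    exact hn2.trans hB
  have ht1 : (q1:ℝ) ^ (21 * τ) * q2 / q1 ^ (32 * τ - 16) ≤ 1 / q1 ^ τ := by
    rw [div_le_div_iff₀ (by positivity) (by positivity), one_mul]
    calc (q1:ℝ) ^ (21 * τ) * q2 * q1 ^ τ ≤ q1 ^ (21 * τ) * q1 ^ (9 * τ + 9) * q1 ^ τ := by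
          gcongr; exact_mod_cast hupp.le
      _ = q1 ^ (31 * τ + 9) := by rw [← pow_add, ← pow_add]; congr 1; ring
      _ ≤ q1 ^ (32 * τ - 16) := pow_le_pow_right₀ hq1r1 (by omega)
  have ht2 : (q1:ℝ) ^ (21 * τ) * q2 / q2 ^ 4 ≤ 1 / q1 ^ τ := by
    rw [div_le_div_iff₀ (by positivity) (by positivity), one_mul]
    have h3 : (q1:ℝ) ^ (9 * τ) ≤ q2 := by exact_mod_cast hlow
    have h4 : (q1:ℝ) ^ (21 * τ) * q1 ^ τ ≤ q2 ^ 3 := by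
      calc (q1:ℝ) ^ (21 * τ) * q1 ^ τ = q1 ^ (22 * τ) := by rw [← pow_add]; congr 1; ring
        _ ≤ q1 ^ (9 * τ * 3) := pow_le_pow_right₀ hq1r1 (by omega)
        _ = (q1 ^ (9 * τ)) ^ 3 := pow_mul _ _ _
        _ ≤ q2 ^ 3 := by gcongr
    calc (q1:ℝ) ^ (21 * τ) * q2 * q1 ^ τ = (q1:ℝ) ^ (21 * τ) * q1 ^ τ * q2 := by ring
      _ ≤ q2 ^ 3 * q2 := by gcongr
      _ = q2 ^ 4 := by ring
  have hfin2 : (1:ℝ) ≤ c2 ^ τ * (2 / q1 ^ τ) := by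
    refine hfin.trans ?_
    have e : (q1:ℝ) ^ (21 * τ) * q2 * (c1 ^ τ *
      (d ^ (10 * τ) / q1 ^ (32 * τ - 16) + d ^ (10 * τ) / q2 ^ 4)) = c2 ^ τ *
        ((q1:ℝ) ^ (21 * τ) * q2 / q1 ^ (32 * τ - 16) + (q1:ℝ) ^ (21 * τ) * q2 / q2 ^ 4) := by
      rw [hc2, mul_pow c1, ← pow_mul]; ring
    rw [e]
    have : (2:ℝ) / q1 ^ τ = 1 / q1 ^ τ + 1 / q1 ^ τ := by ring
    rw [this]
    gcongr
  rw [← mul_div_assoc, le_div_iff₀ (by positivity), one_mul] at hfin2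
  have h5 : c2 ^ τ * 2 ≤ (2 * c2) ^ τ := by
    rw [mul_pow, mul_comm (2 ^ τ)]
    exact mul_le_mul_of_nonneg_left (le_self_pow₀ (by norm_num) (by omega)) (by positivity)
  have h6 : (2 * c2) ^ τ < (q1:ℝ) ^ τ := by
    apply pow_lt_pow_left₀ _ (by positivity) (by omega)
    linarith
  linarith


theorem near_root (S : Finset ℂ) (hS : S.Nonempty) : ∃ c : ℝ, 0 < c ∧ ∀ x : ℂ, ∃ α ∈ S,
    ‖x - α‖ ≤ c * ∏ β ∈ S, ‖x - β‖ := by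
  classical
  obtain ⟨e, he, hsep⟩ : ∃ e : ℝ, 0 < e ∧ ∀ α ∈ S, ∀ β ∈ S, α ≠ β → 2 * e ≤ ‖α - β‖ := by
    by_cases hne : (S.offDiag).Nonempty
    · obtain ⟨m, hm, hmin⟩ := S.offDiag.exists_min_image (fun ab => ‖ab.1 - ab.2‖) hne
      refine ⟨‖m.1 - m.2‖ / 2, ?_, ?_⟩
      · rw [Finset.mem_offDiag] at hm
        have := norm_pos_iff.mpr (sub_ne_zero.mpr hm.2.2)
        linarith
      · intro α hα β hβ hab
        have := hmin (α, β) (Finset.mem_offDiag.mpr ⟨hα, hβ, hab⟩)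
        simp only at this
        linarith
    · refine ⟨1, one_pos, ?_⟩
      intro α hα β hβ hab
      exact absurd ⟨(α, β), Finset.mem_offDiag.mpr ⟨hα, hβ, hab⟩⟩ hne
  refine ⟨(e ^ (S.card - 1))⁻¹, by positivity, ?_⟩
  intro x
  obtain ⟨α, hα, hmin⟩ := S.exists_min_image (fun a => ‖x - a‖) hS
  refine ⟨α, hα, ?_⟩
  rw [← Finset.mul_prod_erase S _ hα]
  have h1 : e ^ (S.card - 1) ≤ ∏ β ∈ S.erase α, ‖x - β‖ := by
    rw [← Finset.card_erase_of_mem hα, ← Finset.prod_const]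
    apply Finset.prod_le_prod
    · intro _ _; exact he.le
    · intro β hβ
      rw [Finset.mem_erase] at hβ
      have h2 := hmin β hβ.2
      have h3 := hsep α hα β hβ.2 (Ne.symm hβ.1)
      have h4 : ‖α - β‖ ≤ ‖x - β‖ + ‖x - α‖ := by
        have : α - β = (x - β) - (x - α) := by ring
        rw [this]; exact norm_sub_le _ _
      linarith
  have h5 : 0 < e ^ (S.card - 1) := by positivity
  rw [inv_mul_eq_div, le_div_iff₀ h5]
  exact mul_le_mul_of_nonneg_left h1 (norm_nonneg _)

theorem isSquare_of_sq {D a b : ℤ} (hb : b ≠ 0) (h : a ^ 2 = D * b ^ 2) : IsSquare D := by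
  have : b ∣ a := by
    rw [← Int.pow_dvd_pow_iff (n := 2) (by norm_num), h]
    exact dvd_mul_left _ _
  obtain ⟨t, rfl⟩ := this
  refine ⟨t, ?_⟩
  have hb2 : b ^ 2 ≠ 0 := pow_ne_zero _ hb
  apply mul_right_cancel₀ hb2
  rw [← h]; ring

theorem thue_apply (D R z y : ℤ) (hD : 0 < D) (hDs : ¬ IsSquare D) (hy : y ≠ 0)
    (hdel : y ^ 2 ≠ R * z ^ 2) (H : ℝ) : ∃ Q : ℕ, ∀ (μ : ℤ) (ν : ℕ), 0 < ν →
      (μ ^ 2 - R * ν ^ 2) ^ 2 - 4 * D * (z * μ - y * ν) ^ 2 * ν ^ 2 ≠ (0:ℤ) →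
      |(((μ ^ 2 - R * ν ^ 2) ^ 2 - 4 * D * (z * μ - y * ν) ^ 2 * ν ^ 2 : ℤ) : ℝ)| ≤ H → ν < Q := by
  classical
  obtain ⟨w, hw⟩ : ∃ w : ℂ, w ^ 2 = (D : ℂ) := IsAlgClosed.exists_pow_nat_eq _ (by norm_num)
  have hw0 : w ≠ 0 := by
    rintro rfl
    have : (D : ℂ) ≠ 0 := by exact_mod_cast hD.ne'
    apply this; rw [← hw]; norm_num
  obtain ⟨e1, he1⟩ : ∃ e : ℂ, e ^ 2 = D * z ^ 2 + R - 2 * w * y :=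
    IsAlgClosed.exists_pow_nat_eq _ (by norm_num)
  obtain ⟨e2, he2⟩ : ∃ e : ℂ, e ^ 2 = D * z ^ 2 + R + 2 * w * y :=
    IsAlgClosed.exists_pow_nat_eq _ (by norm_num)
  have hno : ∀ t : ℂ, t ^ 2 = 4 → (D * z ^ 2 + R : ℂ) + t * w * y ≠ 0 := by
    intro t ht h0
    apply hDs
    apply isSquare_of_sq (a := D * z ^ 2 + R) (b := 2 * y) (by simpa using hy)
    have : ((D * z ^ 2 + R : ℤ) : ℂ) ^ 2 = ((D * (2 * y) ^ 2 : ℤ) : ℂ) := by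
      push_cast
      have : (D * z ^ 2 + R : ℂ) = - (t * w * y) := by linear_combination h0
      rw [this]
      linear_combination w ^ 2 * y ^ 2 * ht + 4 * y ^ 2 * hw
    exact_mod_cast this
  have he1n : e1 ≠ 0 := by
    rintro rfl
    apply hno (-2) (by norm_num)
    linear_combination -he1
  have he2n : e2 ≠ 0 := by
    rintro rfl
    apply hno 2 (by norm_num)
    linear_combination -he2
  have hcross : ∀ x : ℂ, (x - w * z) ^ 2 = e1 ^ 2 → (x + w * z) ^ 2 = e2 ^ 2 → False := by
    intro x h1 h2
    have h3 : w * (x * z - y) = 0 := by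
      linear_combination (-h1 + h2 - he1 + he2) / 4
    have h4 : x * z = y := by
      have := (mul_eq_zero.mp h3).resolve_left hw0
      linear_combination this
    have h5 : x ^ 2 = R := by
      linear_combination h1 + he1 + 2 * w * h4 - z ^ 2 * hw
    apply hdel
    have : ((y ^ 2 : ℤ) : ℂ) = ((R * z ^ 2 : ℤ) : ℂ) := by
      push_cast
      rw [← h4, ← h5]; ring
    exact_mod_cast this
  set S : Finset ℂ := {w * z + e1, w * z - e1, -(w * z) + e2, -(w * z) - e2} with hSdef
  have n12 : w * z + e1 ≠ w * z - e1 := by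
    intro h; apply he1n; linear_combination h / 2
  have n34 : -(w * z) + e2 ≠ -(w * z) - e2 := by
    intro h; apply he2n; linear_combination h / 2
  have n13 : w * z + e1 ≠ -(w * z) + e2 := fun h =>
    hcross (w * z + e1) (by ring) (by rw [h]; ring)
  have n14 : w * z + e1 ≠ -(w * z) - e2 := fun h =>
    hcross (w * z + e1) (by ring) (by rw [h]; ring)
  have n23 : w * z - e1 ≠ -(w * z) + e2 := fun h =>
    hcross (w * z - e1) (by ring) (by rw [h]; ring)
  have n24 : w * z - e1 ≠ -(w * z) - e2 := fun h =>
    hcross (w * z - e1) (by ring) (by rw [h]; ring)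
  have hprod : ∀ f : ℂ → ℝ, ∏ β ∈ S, f β = f (w * z + e1) * (f (w * z - e1) *
      (f (-(w * z) + e2) * f (-(w * z) - e2))) := by
    intro f
    rw [hSdef, Finset.prod_insert, Finset.prod_insert, Finset.prod_insert, Finset.prod_singleton]
    · simpa using n34
    · simp [n23, n24]
    · simp [n12, n13, n14]
  have hcard : S.card = 4 := by
    rw [hSdef, Finset.card_insert_of_notMem, Finset.card_insert_of_notMem,
      Finset.card_insert_of_notMem, Finset.card_singleton]
    · simpa using n34
    · simp [n23, n24]
    · simp [n12, n13, n14]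
  have hG : ∀ x : ℂ, (x - (w * z + e1)) * ((x - (w * z - e1)) * ((x - (-(w * z) + e2)) *
      (x - (-(w * z) - e2)))) = (x ^ 2 - R) ^ 2 - 4 * D * (z * x - y) ^ 2 := by
    intro x
    have ha : (x - (w * z + e1)) * (x - (w * z - e1)) = x ^ 2 - R - 2 * w * (z * x - y) := by
      linear_combination -he1 + z ^ 2 * hw
    have hb : (x - (-(w * z) + e2)) * (x - (-(w * z) - e2)) = x ^ 2 - R + 2 * w * (z * x - y) := by
      linear_combination -he2 + z ^ 2 * hw
    rw [← mul_assoc, ha, hb]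
    linear_combination -4 * (z * x - y) ^ 2 * hw
  have hmem0 : ∀ x ∈ S, (x ^ 2 - R) ^ 2 - 4 * D * (z * x - y) ^ 2 = (0:ℂ) := by
    intro x hx
    rw [← hG]
    simp only [hSdef, Finset.mem_insert, Finset.mem_singleton] at hx
    rcases hx with rfl | rfl | rfl | rfl <;> simp
  let g : Fin 4 → ℤ := ![4 * D * y ^ 2 - R ^ 2, -8 * D * z * y, 2 * R + 4 * D * z ^ 2, 0]
  have hroot : ∀ x ∈ S, x ^ 4 = ∑ l, (g l : ℂ) * x ^ (l : ℕ) := by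
    intro x hx
    have := hmem0 x hx
    simp [g, Fin.sum_univ_four]
    linear_combination this
  have hSne : S.Nonempty := Finset.card_pos.mp (by omega)
  obtain ⟨c, hc, hnear⟩ := near_root S hSne
  have hQ : ∀ α ∈ S, ∃ Q : ℕ, ∀ (p : ℤ) (q : ℕ), Q ≤ q → 0 < q → ((p : ℂ) / q) ∉ S →
      ‖(p : ℂ) / q - α‖ ≤ c * H / q ^ 4 → False := by
    intro α hα
    by_cases him : α.im = 0
    · have hre : α = ((α.re : ℝ) : ℂ) := by
        apply Complex.ext <;> simp [him]
      obtain ⟨Q, hQ⟩ := thue_quartic g S hcard hroot α.re (by rw [← hre]; exact hα) (c * H)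
      refine ⟨Q, fun p q hq _ hn hle => hQ p q hq hn ?_⟩
      rw [hre] at hle
      have e : (p / q : ℂ) - (α.re : ℝ) = ((p / q - α.re : ℝ) : ℂ) := by push_cast; ring
      rw [e, Complex.norm_real, Real.norm_eq_abs, abs_sub_comm] at hle
      exact hle
    · obtain ⟨Q, hQ⟩ := exists_nat_gt (c * H / |α.im|)
      have him' : 0 < |α.im| := abs_pos.mpr him
      refine ⟨Q, fun p q hq hq0 hn hle => ?_⟩
      have h1 : |α.im| ≤ ‖(p : ℂ) / q - α‖ := by
        have := Complex.abs_im_le_norm ((p : ℂ) / q - α)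
        have e : ((p : ℂ) / q - α).im = - α.im := by
          have : (p / q : ℂ) = ((p / q : ℝ) : ℂ) := by push_cast; ring
          rw [this, Complex.sub_im, Complex.ofReal_im]; ring
        rwa [e, abs_neg] at this
      have hq1 : (1:ℝ) ≤ q := by exact_mod_cast hq0
      have h2 := h1.trans hle
      rw [le_div_iff₀ (by positivity)] at h2
      rw [div_lt_iff₀ him'] at hQ
      have h3 : (Q:ℝ) ≤ q ^ 4 := by
        calc (Q:ℝ) ≤ q := by exact_mod_cast hq
          _ ≤ q ^ 4 := le_self_pow₀ hq1 (by norm_num)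
      nlinarith
  choose! Qf hQf using hQ
  refine ⟨∑ α ∈ S, Qf α, ?_⟩
  intro μ ν hν hne hle
  by_contra hlt
  push Not at hlt
  obtain ⟨α, hα, hα2⟩ := hnear ((μ : ℂ) / ν)
  have hν0 : (ν : ℂ) ≠ 0 := by exact_mod_cast hν.ne'
  have hνR : (0 : ℝ) < ν := by exact_mod_cast hν
  have hval : ((μ / ν : ℂ) ^ 2 - R) ^ 2 - 4 * D * (z * (μ / ν) - y) ^ 2 =
      (((μ ^ 2 - R * ν ^ 2) ^ 2 - 4 * D * (z * μ - y * ν) ^ 2 * ν ^ 2 : ℤ) : ℂ) / ν ^ 4 := by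
    push_cast
    field_simp
  refine hQf α hα μ ν ((Finset.single_le_sum (f := Qf) (fun _ _ => Nat.zero_le _) hα).trans hlt)
    hν ?_ ?_
  · intro hm
    have := hmem0 _ hm
    rw [hval, div_eq_zero_iff] at this
    rcases this with h | h
    · exact hne (by exact_mod_cast h)
    · exact pow_ne_zero _ hν0 h
  · refine hα2.trans ?_
    rw [hprod, ← norm_mul, ← norm_mul, ← norm_mul, hG, hval, norm_div, norm_pow,
      Complex.norm_natCast, Complex.norm_intCast, mul_div_assoc]
    gcongr


theorem finite_quad_bound {A : ℤ} (hA : A ≠ 0) (B M : ℤ) : {V : ℤ | |A * V ^ 2 + B| ≤ M}.Finite := by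
  apply (Set.finite_Icc (-(|M| + |B|)) (|M| + |B|)).subset
  intro V hV
  simp only [Set.mem_ofPred_eq] at hV
  have h1 : |A * V ^ 2| ≤ |M| + |B| := by
    calc |A * V ^ 2| = |(A * V ^ 2 + B) - B| := by congr 1; ring
      _ ≤ |A * V ^ 2 + B| + |B| := abs_sub _ _
      _ ≤ |M| + |B| := by
        have := le_abs_self M
        linarith
  have h2 : |V| ≤ |A * V ^ 2| := by
    rw [abs_mul, abs_pow]
    have hA1 := Int.one_le_abs hA
    have : |V| ≤ |V| ^ 2 := by
      rcases eq_or_ne V 0 with rfl | hV0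
      · simp
      · exact le_self_pow₀ (Int.one_le_abs hV0) (by norm_num)
    nlinarith [abs_nonneg V, pow_nonneg (abs_nonneg V) 2]
  exact abs_le.mp (h2.trans h1)

theorem mu_bound (D R z y Δ : ℤ) (hD : 0 < D) (Q : ℕ) : ∃ M : ℤ, ∀ (μ ν : ℤ), 0 < ν → ν < Q →
    (μ ^ 2 - R * ν ^ 2) ^ 2 - 4 * D * (z * μ - y * ν) ^ 2 * ν ^ 2 ≤ (2 * Δ) ^ 2 → |μ| ≤ M := by
  refine ⟨|2 * Δ| + 2 * D * (|z| + |y| * Q) * Q + |R| * Q ^ 2, ?_⟩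
  intro μ ν hν hνQ hle
  by_contra hlt
  push Not at hlt
  have hν1 : 1 ≤ ν := hν
  have hQ1 : (1:ℤ) ≤ Q := by linarith
  obtain ⟨m, hm⟩ : ∃ m, m = |μ| := ⟨_, rfl⟩
  rw [← hm] at hlt
  have hm1 : 1 ≤ m := by
    have a1 := abs_nonneg (2 * Δ)
    have a2 : 0 ≤ 2 * D * (|z| + |y| * Q) * Q := by positivity
    have a3 : 0 ≤ |R| * (Q:ℤ) ^ 2 := by positivity
    linarith
  have hzy : |z * μ - y * ν| ≤ (|z| + |y| * Q) * m := by
    calc |z * μ - y * ν| ≤ |z * μ| + |y * ν| := abs_sub _ _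
      _ = |z| * m + |y| * ν := by rw [abs_mul z, abs_mul y, abs_of_pos hν, hm]
      _ ≤ |z| * m + |y| * (Q * m) := by
        have : ν ≤ Q * m := by nlinarith
        gcongr
      _ = _ := by ring
  obtain ⟨K, hK⟩ : ∃ K, K = |z| + |y| * (Q:ℤ) := ⟨_, rfl⟩
  have hK0 : 0 ≤ K := by rw [hK]; positivity
  rw [← hK] at hzy hlt
  have h3 : (z * μ - y * ν) ^ 2 * ν ^ 2 ≤ (K * m * Q) ^ 2 := by
    rw [← mul_pow, ← sq_abs]
    apply pow_le_pow_left₀ (abs_nonneg _)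
    rw [abs_mul, abs_of_pos hν]
    gcongr
  have h4 : (μ ^ 2 - R * ν ^ 2) ^ 2 ≤ ((|2 * Δ| + 2 * D * K * Q) * m) ^ 2 := by
    have h5 : (2 * Δ) ^ 2 ≤ (|2 * Δ| * m) ^ 2 := by
      rw [← sq_abs (2 * Δ)]
      apply pow_le_pow_left₀ (abs_nonneg _)
      nlinarith [abs_nonneg (2 * Δ)]
    have h6 : 4 * D * ((z * μ - y * ν) ^ 2 * ν ^ 2) ≤ (2 * D * K * Q * m) ^ 2 := by
      calc 4 * D * ((z * μ - y * ν) ^ 2 * ν ^ 2) ≤ 4 * D * (K * m * Q) ^ 2 := by gcongr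
        _ ≤ 4 * (D * D) * (K * m * Q) ^ 2 := by
          have : D ≤ D * D := by nlinarith
          gcongr
        _ = _ := by ring
    have h7 : 0 ≤ (|2 * Δ| * m) * (2 * D * K * Q * m) := by positivity
    nlinarith
  have h8 : |μ ^ 2 - R * ν ^ 2| ≤ (|2 * Δ| + 2 * D * K * Q) * m := by
    apply abs_le_of_sq_le_sq h4
    positivity
  have h9 : m ^ 2 ≤ (|2 * Δ| + 2 * D * K * Q) * m + |R| * Q ^ 2 * m := by
    calc m ^ 2 = |μ ^ 2| := by rw [hm, abs_pow]
      _ = |(μ ^ 2 - R * ν ^ 2) + R * ν ^ 2| := by congr 1; ring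
      _ ≤ |μ ^ 2 - R * ν ^ 2| + |R * ν ^ 2| := abs_add_le _ _
      _ ≤ (|2 * Δ| + 2 * D * K * Q) * m + |R| * Q ^ 2 * m := by
        apply add_le_add h8
        rw [abs_mul, abs_pow, abs_of_pos hν]
        calc |R| * ν ^ 2 ≤ |R| * Q ^ 2 := by gcongr
          _ ≤ |R| * Q ^ 2 * m := le_mul_of_one_le_right (by positivity) hm1
  nlinarith
theorem base_finite (D E A B : ℤ) (hD : 0 < D) (hDs : ¬ IsSquare D) (hA : A ≠ 0)
    (hne : D * B ^ 2 + E ≠ 0) (V1 s1 : ℤ) (hs1 : s1 ≠ 0)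
    (h1 : D * (A * V1 ^ 2 + B) ^ 2 + E = s1 ^ 2) :
    {V : ℤ | ∃ p q : ℤ, p ^ 2 - D * q ^ 2 = 1 ∧
      A * V ^ 2 + B = (A * V1 ^ 2 + B) * (p ^ 2 + D * q ^ 2) + 2 * s1 * p * q}.Finite := by
  set X1 := A * V1 ^ 2 + B with hX1
  set z := A * V1 with hz
  set y := A * s1 with hy
  set R := A * D * (X1 + B) with hR
  have hdelta : y ^ 2 - R * z ^ 2 = A ^ 2 * (D * B ^ 2 + E) := by
    rw [hy, hR, hz]
    have : (A * V1) ^ 2 = A * (X1 - B) := by rw [hX1]; ring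
    rw [this]
    linear_combination -A ^ 2 * h1
  set Δ := y ^ 2 - R * z ^ 2 with hΔ
  have hΔ0 : Δ ≠ 0 := by rw [hdelta]; exact mul_ne_zero (pow_ne_zero _ hA) hne
  obtain ⟨Q, hQ⟩ := thue_apply D R z y hD hDs (mul_ne_zero hA hs1) (fun h => hΔ0 (by rw [hΔ, h, sub_self]))
    (((2 * Δ) ^ 2 : ℤ) : ℝ)
  clear_value Δ R y z X1
  obtain ⟨M, hM⟩ := mu_bound D R z y Δ hD Q
  let f : (ℤ × ℤ) × ℤ → ℤ := fun x =>
    (z * ((x.1.1 ^ 2 - R * x.1.2 ^ 2) / x.2) + (2 * (y * x.1.2 - z * x.1.1)) / x.2 * x.1.1) / A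
  have hfin : (Set.image f ((Set.Icc (-M) M ×ˢ Set.Icc 0 (Q:ℤ)) ×ˢ Set.Icc (-|2 * Δ|) |2 * Δ|)).Finite :=
    (((Set.finite_Icc _ _).prod (Set.finite_Icc _ _)).prod (Set.finite_Icc _ _)).image f
  apply (hfin.union (finite_quad_bound hA B |X1|)).subset
  rintro V ⟨p, q, hpq, hV⟩
  by_cases hq0 : q = 0
  · right
    subst hq0
    simp only [Set.mem_ofPred_eq]
    rw [hV]
    have : p ^ 2 = 1 := by linear_combination hpq
    simp [this]
  left
  set W := A * V - z * p with hW
  have hkey : W * (W + 2 * z * p) = q * (2 * y * p + R * q) := by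
    rw [hW, hR, hy]
    have e1 : z ^ 2 = A * (X1 - B) := by rw [hz, hX1]; ring
    linear_combination A * hV - p ^ 2 * e1 + A * B * hpq
  -- gcd decomposition
  obtain ⟨g, μ, ν, hg0, hν, hcop, hWg, hqg⟩ : ∃ g μ ν : ℤ, g ≠ 0 ∧ 0 < ν ∧ IsCoprime μ ν ∧
      W = g * μ ∧ q = g * ν := by
    have hgpos : 0 < Int.gcd W q := Int.gcd_pos_of_ne_zero_right _ hq0
    obtain ⟨hc⟩ : Nonempty (IsCoprime (W / Int.gcd W q) (q / Int.gcd W q)) :=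
      ⟨Int.isCoprime_iff_gcd_eq_one.mpr (Int.gcd_ediv_gcd_ediv_gcd hgpos)⟩
    have d1 : W = Int.gcd W q * (W / Int.gcd W q) := (Int.mul_ediv_cancel' (Int.gcd_dvd_left _ _)).symm
    have d2 : q = Int.gcd W q * (q / Int.gcd W q) := (Int.mul_ediv_cancel' (Int.gcd_dvd_right _ _)).symm
    have hgz : ((Int.gcd W q : ℕ) : ℤ) ≠ 0 := by exact_mod_cast hgpos.ne'
    rcases lt_trichotomy (q / Int.gcd W q) 0 with h | h | h
    · refine ⟨-(Int.gcd W q : ℤ), -(W / Int.gcd W q), -(q / Int.gcd W q), by simpa using hgz,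
        by linarith, hc.neg_neg, by rw [neg_mul_neg]; exact d1, by rw [neg_mul_neg]; exact d2⟩
    · rw [h, mul_zero] at d2; exact absurd d2 hq0
    · exact ⟨Int.gcd W q, _, _, hgz, h, hc, d1, d2⟩
  set L := y * ν - z * μ with hL
  have hk2 : g * (μ ^ 2 - R * ν ^ 2) = 2 * p * L := by
    rw [hWg, hqg] at hkey
    apply mul_left_cancel₀ hg0
    rw [hL]
    linear_combination hkey
  have hgp : IsCoprime g p := by
    refine ⟨-D * g * ν ^ 2, p, ?_⟩
    rw [hqg] at hpq
    linear_combination hpq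
  have hgL : g ∣ 2 * L := by
    apply hgp.dvd_of_dvd_mul_left
    exact ⟨μ ^ 2 - R * ν ^ 2, by linear_combination -hk2⟩
  obtain ⟨h, hh⟩ := hgL
  have hph : μ ^ 2 - R * ν ^ 2 = p * h := by
    apply mul_left_cancel₀ hg0
    linear_combination hk2 + p * hh
  have hThue : (μ ^ 2 - R * ν ^ 2) ^ 2 - 4 * D * (z * μ - y * ν) ^ 2 * ν ^ 2 = h ^ 2 := by
    rw [hph]
    have : 4 * (z * μ - y * ν) ^ 2 = (g * h) ^ 2 := by rw [← hh, hL]; ring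
    rw [hqg] at hpq
    linear_combination h ^ 2 * hpq - D * ν ^ 2 * this
  have hhν : IsCoprime h ν := by
    rw [Int.isCoprime_iff_gcd_eq_one]
    by_contra hgne
    obtain ⟨P, hP, hPd⟩ := Nat.exists_prime_and_dvd hgne
    have hP1 : (P:ℤ) ∣ h := (Int.natCast_dvd_natCast.mpr hPd).trans (Int.gcd_dvd_left _ _)
    have hP2 : (P:ℤ) ∣ ν := (Int.natCast_dvd_natCast.mpr hPd).trans (Int.gcd_dvd_right _ _)
    have hP3 : (P:ℤ) ∣ μ ^ 2 := by
      have : μ ^ 2 = p * h + R * ν * ν := by linear_combination hph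
      rw [this]
      exact dvd_add (hP1.mul_left _) (hP2.mul_left _)
    have hP4 : (P:ℤ) ∣ μ := (Nat.prime_iff_prime_int.mp hP).dvd_of_dvd_pow hP3
    have := hcop.isUnit_of_dvd' hP4 hP2
    exact (Nat.prime_iff_prime_int.mp hP).not_isUnit this
  have hhΔ : h ∣ 2 * Δ := by
    have h5 : h ∣ (2 * Δ) * ν ^ 2 := by
      refine ⟨g * (y * ν + z * μ) + 2 * z ^ 2 * p, ?_⟩
      rw [hΔ]
      have : 2 * L * (y * ν + z * μ) = 2 * (y ^ 2 * ν ^ 2 - z ^ 2 * μ ^ 2) := by rw [hL]; ring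
      linear_combination -this + (y * ν + z * μ) * hh + 2 * z ^ 2 * hph
    exact (hhν.pow_right).dvd_of_dvd_mul_right h5
  have hh0 : h ≠ 0 := by
    rintro rfl
    rw [zero_dvd_iff] at hhΔ
    exact hΔ0 (by linarith)
  have hhb : |h| ≤ |2 * Δ| := by
    apply Int.le_of_dvd (abs_pos.mpr (by simpa using hΔ0))
    exact (abs_dvd_abs _ _).mpr hhΔ
  have hh2 : h ^ 2 ≤ (2 * Δ) ^ 2 := sq_le_sq.mpr hhb
  have hνQ : ν < Q := by
    have hnn : ((ν.toNat : ℕ) : ℤ) = ν := Int.toNat_of_nonneg hν.le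
    have := hQ μ ν.toNat (by omega) (by rw [hnn, hThue]; exact pow_ne_zero _ hh0) (by
      rw [hnn, hThue]
      rw [abs_of_nonneg (by exact_mod_cast sq_nonneg h)]
      exact_mod_cast hh2)
    omega
  have hμM := hM μ ν hν hνQ (by rw [hThue]; exact hh2)
  refine ⟨((μ, ν), h), ⟨⟨abs_le.mp hμM, hν.le, hνQ.le⟩, abs_le.mp hhb⟩, ?_⟩
  simp only [f]
  rw [hph, ← hL, hh, Int.mul_ediv_cancel _ hh0, Int.mul_ediv_cancel _ hh0, ← hWg, hW]
  rw [show z * p + (A * V - z * p) = A * V by ring, Int.mul_ediv_cancel_left _ hA]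


theorem pell_class (D : ℤ) (hD : 0 < D) (hDs : ¬ IsSquare D) :
    ∃ c : Pell.Solution₁ D → Bool × Bool, ∀ a a', c a = c a' → ∃ b, a = a' * b ^ 2 := by
  classical
  obtain ⟨e, he⟩ := Pell.IsFundamental.exists_of_not_isSquare hD hDs
  have h := fun a => he.eq_zpow_or_neg_zpow a
  choose n hn using h
  refine ⟨fun a => (decide (a = e ^ n a), decide (Even (n a))), ?_⟩
  intro a a' haa
  simp only [Prod.mk.injEq, decide_eq_decide] at haa
  have hev : Even (n a - n a') := by
    rw [Int.even_sub]; exact haa.2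
  obtain ⟨r, hr⟩ := hev
  refine ⟨e ^ r, ?_⟩
  have e1 : e ^ n a = e ^ n a' * (e ^ r) ^ 2 := by
    rw [← zpow_natCast, ← zpow_mul, ← zpow_add]
    congr 1
    push_cast
    linarith
  by_cases h1 : a = e ^ n a
  · have h2 := haa.1.mp h1
    calc a = e ^ n a := h1
      _ = e ^ n a' * (e ^ r) ^ 2 := e1
      _ = a' * (e ^ r) ^ 2 := by rw [← h2]
  · have h2 : ¬ a' = e ^ n a' := fun h => h1 (haa.1.mpr h)
    have h3 := (hn a).resolve_left h1
    have h4 := (hn a').resolve_left h2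
    calc a = - e ^ n a := h3
      _ = - e ^ n a' * (e ^ r) ^ 2 := by rw [e1, neg_mul]
      _ = a' * (e ^ r) ^ 2 := by rw [← h4]

theorem dioph_finite (D E A B : ℤ) (hD : 0 < D) (hE : E ≠ 0) (hA : A ≠ 0)
    (hne : D * B ^ 2 + E ≠ 0) :
    {V : ℤ | ∃ s : ℤ, D * (A * V ^ 2 + B) ^ 2 + E = s ^ 2}.Finite := by
  classical
  by_cases hDs : IsSquare D
  · obtain ⟨r, hr⟩ := hDs
    apply (finite_quad_bound hA B |E|).subset
    rintro V ⟨s, hs⟩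
    simp only [Set.mem_ofPred_eq]
    set x := A * V ^ 2 + B with hx
    have hr0 : r ≠ 0 := by rintro rfl; omega
    have h1 : (s - r * x) * (s + r * x) = E := by
      rw [hr] at hs; linear_combination -hs
    have d1 : |s - r * x| ≤ |E| := Int.le_of_dvd (abs_pos.mpr hE)
      ((abs_dvd_abs _ _).mpr ⟨_, h1.symm⟩)
    have d2 : |s + r * x| ≤ |E| := Int.le_of_dvd (abs_pos.mpr hE)
      ((abs_dvd_abs _ _).mpr ⟨_, by rw [mul_comm]; exact h1.symm⟩)
    have h2 : |2 * (r * x)| ≤ |E| + |E| := by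
      calc |2 * (r * x)| = |(s + r * x) - (s - r * x)| := by congr 1; ring
        _ ≤ |s + r * x| + |s - r * x| := abs_sub _ _
        _ ≤ _ := add_le_add d2 d1
    rw [abs_mul, abs_mul, abs_two] at h2
    have := Int.one_le_abs hr0
    nlinarith [abs_nonneg x]
  · -- remove V with s = 0
    have hsplit : {V : ℤ | ∃ s : ℤ, D * (A * V ^ 2 + B) ^ 2 + E = s ^ 2} ⊆
        {V : ℤ | ∃ s : ℤ, s ≠ 0 ∧ D * (A * V ^ 2 + B) ^ 2 + E = s ^ 2} ∪
        {V : ℤ | |A * V ^ 2 + B| ≤ |E|} := by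
      rintro V ⟨s, hs⟩
      by_cases hs0 : s = 0
      · right
        subst hs0
        simp only [Set.mem_ofPred_eq]
        set x := A * V ^ 2 + B with hx
        have h1 : D * x ^ 2 = -E := by linear_combination hs
        have h2 : |x| ^ 2 ≤ |E| := by
          rw [sq_abs, ← abs_neg, ← h1, abs_of_nonneg (by positivity)]
          nlinarith [sq_nonneg x]
        rcases eq_or_ne x 0 with h0 | h0
        · rw [h0]; simp
        · exact (le_self_pow₀ (Int.one_le_abs h0) (by norm_num)).trans h2
      · left; exact ⟨s, hs0, hs⟩
    refine Set.Finite.subset (Set.Finite.union ?_ (finite_quad_bound hA B |E|)) hsplit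
    set T := {V : ℤ | ∃ s : ℤ, s ≠ 0 ∧ D * (A * V ^ 2 + B) ^ 2 + E = s ^ 2} with hT
    have hs : ∀ V, ∃ s : ℤ, V ∈ T → s ≠ 0 ∧ D * (A * V ^ 2 + B) ^ 2 + E = s ^ 2 := by
      intro V
      by_cases h : V ∈ T
      · obtain ⟨s, hs⟩ := h; exact ⟨s, fun _ => hs⟩
      · exact ⟨0, fun h' => absurd h' h⟩
    choose s hs using hs
    have : NeZero E.natAbs := ⟨by simpa using hE⟩
    let f : ℤ → ZMod E.natAbs × ZMod E.natAbs := fun V => ((s V : ZMod _), ((A * V ^ 2 + B : ℤ) : ZMod _))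
    apply Set.Finite.of_finite_fibers f (Set.toFinite _)
    rintro _ ⟨V0, hV0, rfl⟩
    -- units
    have hu : ∀ V, ∃ a : Pell.Solution₁ D, V ∈ T ∩ f ⁻¹' {f V0} →
        s V = s V0 * a.x + D * (A * V0 ^ 2 + B) * a.y ∧
        A * V ^ 2 + B = (A * V0 ^ 2 + B) * a.x + s V0 * a.y := by
      intro V
      by_cases h : V ∈ T ∩ f ⁻¹' {f V0}
      · obtain ⟨hVT, hfV⟩ := h
        have hfV' : f V = f V0 := hfV
        simp only [f, Prod.mk.injEq] at hfV'
        obtain ⟨m1, m2⟩ := hfV'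
        rw [ZMod.intCast_eq_intCast_iff_dvd_sub] at m1 m2
        have m1' : E ∣ s V0 - s V := Int.natAbs_dvd.mp m1
        have m2' : E ∣ (A * V0 ^ 2 + B) - (A * V ^ 2 + B) := Int.natAbs_dvd.mp m2
        obtain ⟨u, hu⟩ := m1'
        obtain ⟨v, hv⟩ := m2'
        have e0 := (hs V0 hV0).2
        have e1 := (hs V hVT).2
        generalize hx0 : A * V0 ^ 2 + B = x0 at *
        generalize hx : A * V ^ 2 + B = x at *
        have es : s V = s V0 - E * u := by linarith
        have ex : x = x0 - E * v := by linarith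
        have hp : s V * s V0 - D * x * x0 = E * (1 - u * s V0 + D * v * x0) := by
          rw [es, ex]; linear_combination -e0
        have hq : x * s V0 - s V * x0 = E * (u * x0 - v * s V0) := by
          rw [es, ex]; ring
        refine ⟨Pell.Solution₁.mk (1 - u * s V0 + D * v * x0) (u * x0 - v * s V0) ?_, fun _ => ?_⟩
        · have hE2 : E ^ 2 ≠ 0 := pow_ne_zero _ hE
          apply mul_left_cancel₀ hE2
          have h5 : E ^ 2 * ((1 - u * s V0 + D * v * x0) ^ 2 - D * (u * x0 - v * s V0) ^ 2) =
            (E * (1 - u * s V0 + D * v * x0)) ^ 2 - D * (E * (u * x0 - v * s V0)) ^ 2 := by ring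
          rw [h5, ← hp, ← hq]
          linear_combination (D * x0 ^ 2 - s V0 ^ 2) * e1 - E * e0
        · rw [Pell.Solution₁.x_mk, Pell.Solution₁.y_mk]
          constructor
          · apply mul_left_cancel₀ hE
            linear_combination s V0 * hp + D * x0 * hq + s V * e0
          · apply mul_left_cancel₀ hE
            linear_combination x0 * hp + s V0 * hq + x * e0
      · exact ⟨1, fun h' => absurd h' h⟩
    choose a ha using hu
    obtain ⟨c, hc⟩ := pell_class D hD hDs
    apply Set.Finite.of_finite_fibers (fun V => c (a V)) (Set.toFinite _)
    rintro _ ⟨V1, hV1, rfl⟩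
    refine (base_finite D E A B hD hDs hA hne V1 (s V1) (hs V1 hV1.1).1 (hs V1 hV1.1).2).subset ?_
    rintro V ⟨hV, hcV⟩
    obtain ⟨b, hb⟩ := hc _ _ hcV
    refine ⟨b.x, b.y, b.prop, ?_⟩
    have h1 := ha V hV
    have h2 := ha V1 hV1
    rw [h1.2, h2.2, h2.1, hb, pow_two b]
    simp only [Pell.Solution₁.x_mul, Pell.Solution₁.y_mul]
    ring


lemma jac_key (α b e : ℕ) (s δ τ : ℤ) (hα : (α % 8 = 5 ∧ (δ = 1 ∨ δ = -1)) ∨ (α % 8 = 3 ∧ δ = 1))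
    (hb : b % 4 = 1) (he : Odd e) (hτ : τ = 1 ∨ τ = -1)
    (h1 : (α : ℤ) ∣ b - δ * 2 ^ e) (h2 : (b : ℤ) ∣ s ^ 2 - τ * α * (2 ^ e) ^ 2) : False := by
  have hαo : Odd α := by rw [Nat.odd_iff]; omega
  have hbo : Odd b := by rw [Nat.odd_iff]; omega
  have hJ2 : jacobiSym 2 α = -1 := by
    rw [jacobiSym.at_two hαo, ZMod.χ₈_nat_eq_if_mod_eight]
    rcases hα with ⟨h, _⟩ | ⟨h, _⟩ <;> simp [h] <;> omega
  have hJh : jacobiSym (2 ^ e) α = -1 := by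
    rw [jacobiSym.pow_left, hJ2, he.neg_one_pow]
  have hJd : jacobiSym δ α = 1 := by
    rcases hα with ⟨h, rfl | rfl⟩ | ⟨h, rfl⟩
    · simp
    · rw [jacobiSym.at_neg_one hαo]
      exact ZMod.χ₄_nat_one_mod_four (by omega)
    · simp
  have hJb : jacobiSym b α = -1 := by
    have : jacobiSym b α = jacobiSym (δ * 2 ^ e) α := by
      apply jacobiSym.mod_left'
      exact (Int.emod_eq_emod_iff_emod_sub_eq_zero.2 <| Int.emod_eq_zero_of_dvd h1)
    rw [this, jacobiSym.mul_left, hJd, hJh]; norm_num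
  have hrec : jacobiSym b α = jacobiSym α b :=
    jacobiSym.quadratic_reciprocity_one_mod_four hb hαo
  have hJt : jacobiSym τ b = 1 := by
    rcases hτ with rfl | rfl
    · simp
    · rw [jacobiSym.at_neg_one hbo]
      exact ZMod.χ₄_nat_one_mod_four hb
  have hcop : Int.gcd (2 ^ e) b = 1 := by
    rw [Int.gcd_eq_natAbs]
    simp only [Int.natAbs_pow, Int.natAbs_natCast]
    apply Nat.Coprime.pow_left
    exact (Nat.coprime_two_left).2 hbo
  have h3 : jacobiSym (s ^ 2) b = jacobiSym (τ * α * (2 ^ e) ^ 2) b := by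
    apply jacobiSym.mod_left'
    exact Int.emod_eq_emod_iff_emod_sub_eq_zero.2 <| Int.emod_eq_zero_of_dvd h2
  rw [jacobiSym.mul_left, jacobiSym.mul_left, hJt, jacobiSym.sq_one' hcop, ← hrec, hJb,
    jacobiSym.pow_left] at h3
  nlinarith [sq_nonneg (jacobiSym s b)]


lemma sq_mod8_of_odd {x : ℤ} (hx : Odd x) : x ^ 2 % 8 = 1 := by
  have h := Int.odd_iff.1 hx
  have : x % 8 = 1 ∨ x % 8 = 3 ∨ x % 8 = 5 ∨ x % 8 = 7 := by omega
  rw [pow_two, Int.mul_emod]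
  rcases this with h | h | h | h <;> rw [h] <;> norm_num

def Uo (k : ℤ) : ℕ → ℤ
  | 0 => -k
  | m + 1 => k * Uo k m * (Uo k m + 2 ^ 2 ^ (m + 1))

lemma Uo_one (k : ℤ) : Uo k 1 = k ^ 2 * (k - 4) := by
  simp [Uo]; ring

lemma Uo_odd (k : ℤ) (hk : Odd k) (m : ℕ) : Odd (Uo k m) := by
  induction m with
  | zero => simpa [Uo] using hk
  | succ m ih =>
    simp only [Uo]
    refine (hk.mul ih).mul (ih.add_even ?_)
    exact (even_two).pow_of_ne_zero (by positivity)

lemma M_mod8 (m : ℕ) : (8 : ℤ) ∣ 2 ^ 2 ^ (m + 2) := by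
  have : 3 ≤ 2 ^ (m + 2) := by
    have := Nat.one_le_two_pow (n := m); rw [pow_add]; omega
  exact (by norm_num : (8 : ℤ) = 2 ^ 3) ▸ pow_dvd_pow 2 this

lemma Uo_mod8 (k : ℤ) (hk : Odd k) (m : ℕ) : Uo k (m + 2) % 8 = k % 8 := by
  obtain ⟨c, hc⟩ := M_mod8 m
  have ho := Uo_odd k hk (m + 1)
  have h8 : Uo k (m + 1) ^ 2 % 8 = 1 := sq_mod8_of_odd ho 
  have e : Uo k (m + 2) = k * Uo k (m + 1) ^ 2 + 8 * (k * Uo k (m + 1) * c) := by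
    rw [Uo]; rw [show m + 1 + 1 = m + 2 from rfl, hc]; ring
  rw [e, Int.add_mul_emod_self_left, Int.mul_emod, h8]; simp

lemma Uo_mod4 (k : ℤ) (hk : Odd k) (m : ℕ) : Uo k (m + 1) % 4 = k % 4 := by
  cases m with
  | zero =>
    have h8 : k ^ 2 % 8 = 1 := sq_mod8_of_odd hk
    have : k ^ 2 % 4 = 1 := by omega
    rw [Uo_one, Int.mul_emod, this]; omega
  | succ m => have := Uo_mod8 k hk m; change Uo k (m + 2) % 4 = _; omega

lemma Uo_dvd (k : ℤ) (m : ℕ) : (k - 4) ∣ Uo k (m + 1) := by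
  induction m with
  | zero => rw [Uo_one]; exact dvd_mul_left _ _
  | succ m ih => rw [Uo]; exact (ih.mul_left k).mul_right _

lemma Uo_dvd_k (k : ℤ) (m : ℕ) : k ∣ Uo k m := by
  cases m with
  | zero => simp [Uo]
  | succ m => rw [Uo, mul_assoc]; exact dvd_mul_right _ _

lemma M_sq (m : ℕ) : (2 : ℤ) ^ 2 ^ (m + 1) = (2 ^ 2 ^ m) ^ 2 := by
  rw [← pow_mul, pow_succ]

lemma Uo_pos (k : ℤ) (hk : 5 ≤ k) (m : ℕ) : 0 < Uo k (m + 1) := by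
  induction m with
  | zero => rw [Uo_one]; nlinarith
  | succ m ih => rw [Uo]; positivity

lemma Uo_neg (k : ℤ) (hk : k ≤ -5) (m : ℕ) : Uo k (m + 1) ≤ -2 * 2 ^ 2 ^ (m + 2) := by
  induction m with
  | zero => rw [Uo_one]; norm_num; nlinarith
  | succ m ih =>
    rw [Uo, M_sq (m + 2)]
    have hM : (0 : ℤ) < 2 ^ 2 ^ (m + 2) := by positivity
    change k * Uo k (m + 1) * (Uo k (m + 1) + 2 ^ 2 ^ (m + 2)) ≤ _
    generalize (2 : ℤ) ^ 2 ^ (m + 2) = M at *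
    generalize Uo k (m + 1) = U at *
    have h1 : 2 * M ^ 2 ≤ U * (U + M) := by nlinarith
    nlinarith

lemma Uo_k1 (m : ℕ) : -2 ^ 2 ^ (m + 2) ≤ 4 * Uo 1 (m + 1) ∧ Uo 1 (m + 1) ≤ 0 := by
  induction m with
  | zero => rw [Uo_one]; norm_num
  | succ m ih =>
    rw [Uo, M_sq (m + 2)]
    have hM : (0 : ℤ) < 2 ^ 2 ^ (m + 2) := by positivity
    change _ ≤ 4 * (1 * Uo 1 (m + 1) * (Uo 1 (m + 1) + 2 ^ 2 ^ (m + 2))) ∧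
      1 * Uo 1 (m + 1) * (Uo 1 (m + 1) + 2 ^ 2 ^ (m + 2)) ≤ 0
    generalize (2 : ℤ) ^ 2 ^ (m + 2) = M at *
    generalize Uo 1 (m + 1) = U at *
    constructor
    · nlinarith [sq_nonneg (2 * U + M)]
    · nlinarith

lemma Uo_km1 (m : ℕ) : -2 ^ 2 ^ (m + 2) ≤ 2 * Uo (-1) (m + 1) ∧
    4 * Uo (-1) (m + 1) ≤ 2 ^ 2 ^ (m + 2) := by
  induction m with
  | zero => rw [Uo_one]; norm_num
  | succ m ih =>
    rw [Uo, M_sq (m + 2)]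
    have hM : (0 : ℤ) < 2 ^ 2 ^ (m + 2) := by positivity
    change _ ≤ 2 * (-1 * Uo (-1) (m + 1) * (Uo (-1) (m + 1) + 2 ^ 2 ^ (m + 2))) ∧
      4 * (-1 * Uo (-1) (m + 1) * (Uo (-1) (m + 1) + 2 ^ 2 ^ (m + 2))) ≤ _
    generalize (2 : ℤ) ^ 2 ^ (m + 2) = M at *
    generalize Uo (-1) (m + 1) = U at *
    constructor
    · nlinarith
    · nlinarith [sq_nonneg (2 * U + M)]

lemma Uo_not_sq (k : ℤ) (hk : Odd k) (j : ℕ) (s σ : ℤ) (hσ : σ = 1 ∨ σ = -1)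
    (h : Uo k (j + 2) + 2 ^ 2 ^ (j + 3) = σ * s ^ 2) : False := by
  have h8 := Uo_mod8 k hk j
  have hM8 := M_mod8 (j + 1)
  have hTo : Odd (σ * s ^ 2) := by
    rw [← h]; exact (Uo_odd k hk _).add_even ((even_two).pow_of_ne_zero (by positivity))
  have hso : Odd s := by
    have := (Int.odd_mul.1 hTo).2
    exact (Int.odd_pow' (by norm_num)).1 this
  have hs8 := sq_mod8_of_odd hso
  have hkσ : k % 8 = σ % 8 := by
    change (8 : ℤ) ∣ 2 ^ 2 ^ (j + 3) at hM8
    rcases hσ with rfl | rfl <;> omega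
  -- auxiliary quantities
  obtain ⟨e, he⟩ : ∃ e, 2 ^ (j + 2) = e + 1 := ⟨2 ^ (j + 2) - 1, by
    have := Nat.one_le_two_pow (n := j + 2); omega⟩
  have heo : Odd e := by
    rw [pow_succ] at he
    rw [Nat.odd_iff]; omega
  have he3 : 3 ≤ e := by
    have := Nat.one_le_two_pow (n := j); rw [pow_add] at he; omega
  have hM2 : (2 : ℤ) ^ 2 ^ (j + 2) = 2 * 2 ^ e := by rw [he, pow_succ]; ring
  have hM3 : (2 : ℤ) ^ 2 ^ (j + 3) = (2 * 2 ^ e) ^ 2 := by rw [M_sq (j + 2), hM2]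
  have hh8 : (8 : ℤ) ∣ 2 ^ e := (by norm_num : (8 : ℤ) = 2 ^ 3) ▸ pow_dvd_pow 2 he3
  have h4 := Uo_mod4 k hk j
  have hd := Uo_dvd k j
  have hUrec : Uo k (j + 2) = k * Uo k (j + 1) * (Uo k (j + 1) + 2 * 2 ^ e) := by
    rw [← hM2]; rfl
  have hT : k * (Uo k (j + 1) + 2 ^ e) ^ 2 + (4 - k) * (2 ^ e) ^ 2 = σ * s ^ 2 := by
    rw [← h, hUrec, hM3]; ring
  have hs0 : 0 < s ^ 2 := by
    have : s ≠ 0 := by rintro rfl; simp at hso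
    positivity
  have hhpos : (0 : ℤ) < 2 ^ e := by positivity
  have hpos := Uo_pos k
  have hneg := Uo_neg k
  rcases hσ with rfl | rfl
  · rcases lt_trichotomy k 1 with hk1 | rfl | hk1
    · have := hneg (by omega) (j + 1)
      have h2 : (0 : ℤ) < 2 ^ 2 ^ (j + 3) := by positivity
      change Uo k (j + 2) ≤ -2 * 2 ^ 2 ^ (j + 3) at this
      linarith
    · have h1 := Uo_k1 j
      rw [hM2] at h1
      have hN : 0 ≤ Uo 1 (j + 1) + 2 ^ e := by linarith [h1.1]
      obtain ⟨b, hb⟩ := Int.eq_ofNat_of_zero_le hN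
      refine jac_key 3 b e s 1 1 (Or.inr ⟨rfl, rfl⟩) (by clear hd; omega) heo (Or.inl rfl) ?_ ?_
      · rw [← hb]
        have : (1 - 4 : ℤ) = -3 := by norm_num
        rw [this, neg_dvd] at hd
        simpa using hd
      · rw [← hb]; refine ⟨Uo 1 (j + 1) + 2 ^ e, ?_⟩
        push_cast; linear_combination -hT
    · have hN : 0 ≤ Uo k (j + 1) + 2 ^ e := by linarith [hpos (by omega) j]
      obtain ⟨b, hb⟩ := Int.eq_ofNat_of_zero_le hN
      obtain ⟨α, hα⟩ := Int.eq_ofNat_of_zero_le (show 0 ≤ k - 4 by omega)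
      refine jac_key α b e s 1 (-1) (Or.inl ⟨by omega, Or.inl rfl⟩) (by omega) heo (Or.inr rfl) ?_ ?_
      · rw [← hb, ← hα]; simpa using hd
      · rw [← hb, ← hα]; refine ⟨k * (Uo k (j + 1) + 2 ^ e), ?_⟩
        linear_combination -hT
  · rcases lt_trichotomy k (-1) with hk1 | rfl | hk1
    · have h5 := hneg (by omega) j
      rw [hM2] at h5
      have hN : 0 ≤ -(Uo k (j + 1) + 2 ^ e) := by linarith
      obtain ⟨b, hb⟩ := Int.eq_ofNat_of_zero_le hN
      obtain ⟨α, hα⟩ := Int.eq_ofNat_of_zero_le (show 0 ≤ 4 - k by omega)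
      refine jac_key α b e s (-1) (-1) (Or.inl ⟨by omega, Or.inr rfl⟩) (by omega) heo (Or.inr rfl) ?_ ?_
      · rw [← hb, ← hα]
        have : -(Uo k (j + 1) + 2 ^ e) - -1 * 2 ^ e = - Uo k (j + 1) := by ring
        rw [this, dvd_neg, ← neg_dvd]; simpa using hd
      · rw [← hb, ← hα]; refine ⟨k * (Uo k (j + 1) + 2 ^ e), ?_⟩
        linear_combination hT
    · have := (Uo_km1 (j + 1)).1
      change -2 ^ 2 ^ (j + 3) ≤ 2 * Uo (-1) (j + 2) at this
      have h2 : (0 : ℤ) < 2 ^ 2 ^ (j + 3) := by positivity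
      linarith
    · have := hpos (by omega) (j + 1)
      change 0 < Uo k (j + 2) at this
      have h2 : (0 : ℤ) < 2 ^ 2 ^ (j + 3) := by positivity
      linarith


def orb (k : ℤ) : ℕ → ℚ
  | 0 => -(k / 2)
  | n + 1 => orb k n ^ 2 + k * orb k n

lemma exists_prime_odd_val (T : ℤ) (hT : T ≠ 0) (h : ∀ s σ : ℤ, (σ = 1 ∨ σ = -1) → T ≠ σ * s ^ 2) :
    ∃ p : ℕ, p.Prime ∧ (p : ℤ) ∣ T ∧ Odd (padicValRat p (T : ℚ)) := by
  obtain ⟨a, b, hab, hsf⟩ := Nat.sq_mul_squarefree T.natAbs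
  have hT' : T.natAbs ≠ 0 := Int.natAbs_ne_zero.2 hT
  have hb0 : b ≠ 0 := by rintro rfl; simp at hab; exact hT' hab.symm
  have ha0 : a ≠ 0 := hsf.ne_zero
  have ha : a ≠ 1 := by
    rintro rfl
    rw [mul_one] at hab
    rcases Int.natAbs_eq T with h1 | h1
    · exact h b 1 (Or.inl rfl) (by rw [h1, ← hab]; push_cast; ring)
    · exact h b (-1) (Or.inr rfl) (by rw [h1, ← hab]; push_cast; ring)
  have hp := Nat.minFac_prime ha
  refine ⟨a.minFac, hp, ?_, ?_⟩
  · rw [Int.natCast_dvd, ← hab]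
    exact (Nat.minFac_dvd a).mul_left _
  · have := Fact.mk hp
    rw [padicValRat.of_int, padicValInt, ← hab, padicValNat.mul (by positivity) ha0,
      padicValNat.pow]
    have : padicValNat a.minFac a = 1 := by
      apply le_antisymm
      · by_contra hc
        have h2 : a.minFac ^ 2 ∣ a := (padicValNat_dvd_iff_le ha0).2 (by omega)
        rw [pow_two] at h2
        have := hsf _ h2
        exact hp.one_lt.ne' (Nat.isUnit_iff.1 this)
      · exact one_le_padicValNat_of_dvd ha0 (Nat.minFac_dvd a)
    rw [this]
    exact ⟨padicValNat a.minFac b, by push_cast; ring⟩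

lemma orb_odd (k : ℤ) (m : ℕ) : orb k (m + 1) = k * Uo k m / 2 ^ 2 ^ (m + 1) := by
  induction m with
  | zero => simp [orb, Uo]; ring
  | succ m ih =>
    rw [orb, ih, Uo, pow_succ 2 (m + 1), pow_mul]
    push_cast
    field_simp

lemma cc_odd (k : ℤ) (m : ℕ) : orb k (m + 1) + k =
    ((k * (Uo k m + 2 ^ 2 ^ (m + 1)) : ℤ) : ℚ) / (2 ^ 2 ^ m) ^ 2 := by
  rw [orb_odd, ← pow_mul, ← pow_succ]
  push_cast
  field_simp

lemma isCoprime_T (k : ℤ) (hk : Odd k) (m : ℕ) : IsCoprime k (Uo k m + 2 ^ 2 ^ (m + 1)) := by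
  obtain ⟨c, hc⟩ := Uo_dvd_k k m
  rw [hc, add_comm, IsCoprime.add_mul_left_right_iff]
  apply IsCoprime.pow_right
  exact (Int.isCoprime_iff_gcd_eq_one).2 (by
    rw [Int.gcd_eq_natAbs]; exact (Nat.coprime_two_right).2 (Int.natAbs_odd.2 hk))

lemma odd_N2 (k : ℤ) (hk : Odd k) (j : ℕ) : ∃ p : ℕ, p.Prime ∧ p ≠ 2 ∧ ¬ (p : ℤ) ∣ k ∧
    Odd (padicValRat p (orb k (j + 3) + k)) := by
  have hk0 : k ≠ 0 := by rintro rfl; simp at hk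
  have hTodd : Odd (Uo k (j + 2) + 2 ^ 2 ^ (j + 3)) :=
    (Uo_odd k hk _).add_even ((even_two).pow_of_ne_zero (by positivity))
  have hT0 : Uo k (j + 2) + 2 ^ 2 ^ (j + 3) ≠ 0 := by intro h; rw [h] at hTodd; simp at hTodd
  obtain ⟨p, hp, hpT, hodd⟩ := exists_prime_odd_val _ hT0
    (fun s σ hσ h => Uo_not_sq k hk j s σ hσ h)
  have := Fact.mk hp
  have hpk : ¬ (p : ℤ) ∣ k := by
    intro h
    have := (isCoprime_T k hk (j + 2)).isUnit_of_dvd' h hpT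
    rw [Int.isUnit_iff_natAbs_eq] at this
    exact hp.one_lt.ne' (by simpa using this)
  have hp2 : p ≠ 2 := by
    rintro rfl
    have := (Int.not_even_iff_odd.2 hTodd)
    exact this (even_iff_two_dvd.2 (by exact_mod_cast hpT))
  refine ⟨p, hp, hp2, hpk, ?_⟩
  rw [cc_odd k (j + 2), padicValRat.div (by exact_mod_cast mul_ne_zero hk0 hT0) (by positivity),
    Int.cast_mul, padicValRat.mul (by exact_mod_cast hk0) (by exact_mod_cast hT0),
    padicValRat.pow, padicValRat.of_int (z := k),
    padicValInt.eq_zero_of_not_dvd hpk]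
  have := hodd
  obtain ⟨c, hc⟩ := hodd
  refine ⟨c - padicValRat p (2 ^ 2 ^ (j + 2)), ?_⟩
  rw [show j + 2 + 1 = j + 3 from rfl, hc]; push_cast; ring

lemma isSquare_div_sq {x : ℤ} {d : ℚ} (hd : d ≠ 0) (h : IsSquare ((x : ℚ) / d ^ 2)) : IsSquare x := by
  obtain ⟨r, hr⟩ := h
  rw [← Rat.isSquare_intCast_iff]
  refine ⟨r * d, ?_⟩
  field_simp at hr
  rw [hr]; ring

lemma odd_N1 (k : ℤ) (hk : Odd k) (m : ℕ) : ¬ IsSquare (orb k (m + 2) + k) := by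
  intro h
  rw [cc_odd k (m + 1)] at h
  have h := isSquare_div_sq (by positivity) h
  have hco := isCoprime_T k hk (m + 1)
  cases m with
  | zero =>
    obtain ⟨w, hw⟩ := h
    rw [Uo_one] at hw
    norm_num at hw
    have h8 := sq_mod8_of_odd hk
    have hwo : Odd (w * w) := by
      rw [← hw]
      refine hk.mul (Odd.add_even ((hk.pow).mul (hk.sub_even (by decide))) (by decide))
    have hwo := sq_mod8_of_odd (Int.odd_mul.1 hwo).1
    obtain ⟨c, hc⟩ : ∃ c, k ^ 2 = 8 * c + 1 := ⟨k ^ 2 / 8, by omega⟩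
    have e : w ^ 2 = (8 * c + 1) ^ 2 - 4 * k * (8 * c + 1) + 16 * k := by
      rw [← hc, pow_two, ← hw]; ring
    obtain ⟨l, hl⟩ := hk
    have : w ^ 2 = 8 * (8 * c ^ 2 + 2 * c - 4 * k * c + 2 * k - l - 1) + 5 := by
      rw [e, hl]; ring
    omega
  | succ j =>
    obtain ⟨w, hw⟩ := h
    obtain ⟨s, hs⟩ := Int.sq_of_gcd_eq_one (Int.isCoprime_iff_gcd_eq_one.1 hco.symm)
      (show _ = w ^ 2 by rw [mul_comm, hw, pow_two])
    rcases hs with hs | hs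
    · exact Uo_not_sq k hk j s 1 (Or.inl rfl) (by rw [one_mul]; exact hs)
    · exact Uo_not_sq k hk j s (-1) (Or.inr rfl) (by rw [neg_one_mul]; exact hs)

lemma k_sub_four (k : ℤ) (h0 : k ≠ 0) (h4 : k ≠ 4) : ¬ IsSquare ((k : ℚ) ^ 2 - 4 * k) := by
  intro h
  have h : IsSquare (k ^ 2 - 4 * k) := by
    rw [← Rat.isSquare_intCast_iff]; push_cast; exact h
  obtain ⟨w, hw⟩ := h
  have e : (k - 2 - w) * (k - 2 + w) = 4 := by linear_combination hw
  have hd : (k - 2 - w) ∣ 4 := ⟨_, e.symm⟩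
  have h1 : (k - 2 - w) ≤ 4 := Int.le_of_dvd (by norm_num) hd
  have h2 : -(k - 2 - w) ≤ 4 := Int.le_of_dvd (by norm_num) ((neg_dvd).2 hd)
  generalize hu : k - 2 - w = u at *
  have hv : k - 2 + w = 2 * (k - 2) - u := by rw [← hu]; ring
  rw [hv] at e
  have : -4 ≤ u := by omega
  interval_cases u <;> omega


def xs (κ : ℤ) : ℕ → ℤ
  | 0 => 1 - κ
  | m + 1 => κ * (xs κ m ^ 2 - 1) + 1

lemma orb_even (κ : ℤ) (m : ℕ) : orb (2 * κ) (m + 1) = ((κ * (xs κ m - 1) : ℤ) : ℚ) := by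
  induction m with
  | zero => simp [orb, xs]; ring
  | succ m ih => rw [orb, ih, xs]; push_cast; ring

lemma cc_even (κ : ℤ) (m : ℕ) : orb (2 * κ) (m + 1) + ((2 * κ : ℤ) : ℚ) =
    ((κ * (xs κ m + 1) : ℤ) : ℚ) := by
  rw [orb_even]; push_cast; ring

lemma xs_growth (κ : ℤ) (hκ : 3 ≤ κ ∨ κ ≤ -2) (m : ℕ) :
    |κ - 1| ≤ |xs κ m| ∧ (m : ℤ) + 2 ≤ |xs κ m| := by
  induction m with
  | zero =>
    simp only [xs]
    rw [abs_sub_comm]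
    refine ⟨le_refl _, ?_⟩
    rcases hκ with h | h
    · rw [abs_of_neg (by omega)]; push_cast; omega
    · rw [abs_of_pos (by omega)]; push_cast; omega
  | succ m ih =>
    have hκ2 : 2 ≤ |κ| := by
      rcases hκ with h | h
      · rw [abs_of_pos (by omega)]; omega
      · rw [abs_of_neg (by omega)]; omega
    have h2 : 2 ≤ |xs κ m| := by have := ih.2; omega
    have key : |xs κ m| + 1 ≤ |xs κ (m + 1)| := by
      have e : |κ| * (|xs κ m| ^ 2 - 1) ≤ |xs κ (m + 1)| + 1 := by
        have h1 : |κ * (xs κ m ^ 2 - 1)| ≤ |xs κ (m + 1)| + 1 := by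
          have : κ * (xs κ m ^ 2 - 1) = xs κ (m + 1) - 1 := by rw [xs]; ring
          rw [this]
          exact (abs_sub _ _).trans (by simp)
        rw [abs_mul, abs_of_nonneg (show 0 ≤ xs κ m ^ 2 - 1 by rw [← sq_abs]; nlinarith)] at h1
        rwa [sq_abs]
      have e2 : 2 * (|xs κ m| ^ 2 - 1) ≤ |κ| * (|xs κ m| ^ 2 - 1) :=
        mul_le_mul_of_nonneg_right hκ2 (by nlinarith)
      nlinarith
    push_cast
    omega

lemma even_N1 (κ : ℤ) (hκ : 3 ≤ κ ∨ κ ≤ -2) (m : ℕ) :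
    ¬ IsSquare (orb (2 * κ) (m + 2) + ((2 * κ : ℤ) : ℚ)) := by
  rw [cc_even κ (m + 1), Rat.isSquare_intCast_iff, xs]
  rintro ⟨w, hw⟩
  have h1 := (xs_growth κ hκ m).1
  have e : |w| ^ 2 = (|κ| * |xs κ m|) ^ 2 + κ * (2 - κ) := by
    rw [mul_pow, sq_abs, sq_abs, sq_abs, pow_two, ← hw]; ring
  have hz : |κ| * |κ - 1| ≤ |κ| * |xs κ m| := mul_le_mul_of_nonneg_left h1 (abs_nonneg _)
  have hw0 := abs_nonneg w
  generalize |κ| * |xs κ m| = z at *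
  generalize |w| = w at *
  have hb : (κ * (2 - κ) < 2 * z - 1 ∧ -(κ * (2 - κ)) < 2 * z - 1) ∧ 0 ≤ z ∧ κ * (2 - κ) < 0 := by
    rcases hκ with h | h
    · rw [abs_of_pos (show 0 < κ by omega), abs_of_pos (show 0 < κ - 1 by omega)] at hz
      refine ⟨⟨?_, ?_⟩, ?_, ?_⟩ <;> nlinarith
    · rw [abs_of_neg (show κ < 0 by omega), abs_of_neg (show κ - 1 < 0 by omega)] at hz
      refine ⟨⟨?_, ?_⟩, ?_, ?_⟩ <;> nlinarith
  obtain ⟨⟨_, h3⟩, h4, h5⟩ := hb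
  rcases lt_or_ge w z with h | h
  · nlinarith
  · nlinarith

lemma even_fin (κ D E : ℤ) (hκ : 3 ≤ κ ∨ κ ≤ -2) (hD : 0 < D) (hE : E ≠ 0)
    (hne : D * (1 - κ) ^ 2 + E ≠ 0) :
    ∃ n0, ∀ m, n0 ≤ m → ∀ s : ℤ, D * xs κ (m + 1) ^ 2 + E ≠ s ^ 2 := by
  have hf := dioph_finite D E κ (1 - κ) hD hE (by omega) hne
  obtain ⟨B, hB⟩ := hf.bddAbove
  obtain ⟨B', hB'⟩ := hf.bddBelow
  refine ⟨(|B| + |B'|).toNat, fun m hm s hs => ?_⟩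
  have hmem : xs κ m ∈ {V : ℤ | ∃ s : ℤ, D * (κ * V ^ 2 + (1 - κ)) ^ 2 + E = s ^ 2} :=
    ⟨s, by rw [← hs, xs]; ring⟩
  have h1 := hB hmem
  have h2 := hB' hmem
  have h3 := (xs_growth κ hκ m).2
  have h4 : |B| + |B'| ≤ m := by omega
  have := le_abs_self B
  have := neg_abs_le B'
  have : |xs κ m| ≤ |B| + |B'| := abs_le.2 ⟨by linarith [abs_nonneg B], by linarith [abs_nonneg B']⟩
  linarith

lemma xs_even_of_odd (κ : ℤ) (h : Odd κ) (m : ℕ) : Even (xs κ m) := by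
  induction m with
  | zero => exact (odd_one).sub_odd h
  | succ m ih =>
    rw [xs]
    have : Odd (xs κ m ^ 2 - 1) := (ih.pow_of_ne_zero (by norm_num)).sub_odd odd_one
    exact (h.mul this).add_odd odd_one

lemma xs_odd_of_even (κ : ℤ) (h : Even κ) (m : ℕ) : Odd (xs κ m) := by
  cases m with
  | zero => exact (odd_one).sub_even h
  | succ m => rw [xs]; exact (h.mul_right _).add_odd odd_one

/-- Passing from the odd part of `x + 1` to the valuation of `c`. -/
lemma even_val (κ : ℤ) (hκ0 : κ ≠ 0) (m : ℕ) (c μ : ℤ) (hc : c = 1 ∨ c = 2)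
    (hμ : Odd μ) (hY : xs κ (m + 1) + 1 = c * μ)
    (h : ∀ s σ : ℤ, (σ = 1 ∨ σ = -1) → μ ≠ σ * s ^ 2) :
    ∃ p : ℕ, p.Prime ∧ p ≠ 2 ∧ ¬ (p : ℤ) ∣ 2 * κ ∧
    Odd (padicValRat p (orb (2 * κ) (m + 2) + ((2 * κ : ℤ) : ℚ))) := by
  have hμ0 : μ ≠ 0 := by rintro rfl; simp at hμ
  have hc0 : c ≠ 0 := by rcases hc with rfl | rfl <;> norm_num
  obtain ⟨p, hp, hpT, hodd⟩ := exists_prime_odd_val μ hμ0 h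
  have := Fact.mk hp
  have hp2 : p ≠ 2 := by
    rintro rfl
    exact (Int.not_even_iff_odd.2 hμ) (even_iff_two_dvd.2 (by exact_mod_cast hpT))
  have hpZ : Prime (p : ℤ) := Nat.prime_iff_prime_int.1 hp
  have hp2' : ¬ (p : ℤ) ∣ 2 := by
    intro h
    have : p ∣ 2 := by exact_mod_cast h
    exact hp2 ((Nat.prime_dvd_prime_iff_eq hp Nat.prime_two).1 this)
  have hpκ : ¬ (p : ℤ) ∣ κ := by
    intro h
    apply hp2'
    have h1 : (p : ℤ) ∣ κ * (xs κ m ^ 2 - 1) := h.mul_right _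
    have h2 : (p : ℤ) ∣ xs κ (m + 1) + 1 := hY ▸ hpT.mul_left c
    have := dvd_sub h2 h1
    rwa [show xs κ (m + 1) + 1 - κ * (xs κ m ^ 2 - 1) = 2 by rw [xs]; ring] at this
  have hpc : ¬ (p : ℤ) ∣ c := by
    rcases hc with rfl | rfl
    · exact fun h => hpZ.not_isUnit (isUnit_of_dvd_one h)
    · exact hp2'
  refine ⟨p, hp, hp2, fun h => (hpZ.dvd_or_dvd h).elim hp2' hpκ, ?_⟩
  rw [cc_even κ (m + 1), hY, Int.cast_mul, Int.cast_mul,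
    padicValRat.mul (by exact_mod_cast hκ0) (by exact_mod_cast mul_ne_zero hc0 hμ0),
    padicValRat.mul (by exact_mod_cast hc0) (by exact_mod_cast hμ0),
    padicValRat.of_int (z := κ), padicValRat.of_int (z := c), padicValInt.eq_zero_of_not_dvd hpκ,
    padicValInt.eq_zero_of_not_dvd hpc]
  simpa using hodd

lemma even_N2 (κ : ℤ) (hκ : 3 ≤ κ ∨ κ ≤ -2) : ∃ n0, ∀ m, n0 ≤ m →
    ∃ p : ℕ, p.Prime ∧ p ≠ 2 ∧ ¬ (p : ℤ) ∣ 2 * κ ∧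
    Odd (padicValRat p (orb (2 * κ) (m + 3) + ((2 * κ : ℤ) : ℚ))) := by
  have hκ0 : κ ≠ 0 := by omega
  have hYe : ∀ m, xs κ (m + 2) + 1 = κ * xs κ (m + 1) ^ 2 + (2 - κ) := fun m => by
    rw [xs]; ring
  have hsq : ∀ m, 4 ≤ xs κ m ^ 2 := fun m => by
    have := (xs_growth κ hκ m).2
    rw [← sq_abs]; nlinarith
  rcases Int.even_or_odd κ with he | ho
  · obtain ⟨l, hl⟩ := he
    have hY2 : ∀ m, xs κ (m + 2) + 1 = 2 * (l * (xs κ (m + 1) ^ 2 - 1) + 1) := fun m => by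
      rw [hYe]; rw [hl]; ring
    have h8 : ∀ m, (8 : ℤ) ∣ xs κ (m + 1) ^ 2 - 1 := fun m => by
      have := sq_mod8_of_odd (xs_odd_of_even κ ⟨l, hl⟩ (m + 1)); omega
    have hμ8 : ∀ m, (8 : ℤ) ∣ (l * (xs κ (m + 1) ^ 2 - 1) + 1) - 1 := fun m => by
      rw [add_sub_cancel_right]; exact (h8 m).mul_left _
    have hμo : ∀ m, Odd (l * (xs κ (m + 1) ^ 2 - 1) + 1) := fun m => by
      have := hμ8 m
      rw [Int.odd_iff]; omega
    have hneg : ∀ m (s : ℤ), l * (xs κ (m + 1) ^ 2 - 1) + 1 ≠ -1 * s ^ 2 := by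
      intro m s h
      have h1 := hμo m
      rw [h] at h1
      have := sq_mod8_of_odd ((Int.odd_pow' (two_ne_zero)).1 (Int.odd_mul.1 h1).2)
      have h2 := hμ8 m
      rw [h] at h2
      omega
    rcases hκ with hκ3 | hκ2
    · obtain ⟨n0, hn0⟩ := even_fin κ (2 * κ) (2 * (2 - κ)) (Or.inl hκ3) (by omega) (by omega)
        (by nlinarith)
      refine ⟨n0, fun m hm => even_val κ hκ0 (m + 1) 2 _ (Or.inr rfl) (hμo m) (hY2 m) ?_⟩
      rintro s σ (rfl | rfl)
      · intro h
        apply hn0 m hm (2 * s)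
        have := hYe m
        rw [hY2 m, h] at this
        linear_combination -2 * this
      · exact hneg m s
    · refine ⟨0, fun m hm => even_val κ hκ0 (m + 1) 2 _ (Or.inr rfl) (hμo m) (hY2 m) ?_⟩
      rintro s σ (rfl | rfl)
      · intro h
        have := hsq (m + 1)
        nlinarith [sq_nonneg s]
      · exact hneg m s
  · have hYo : ∀ m, Odd (xs κ (m + 2) + 1) := fun m =>
      (xs_even_of_odd κ ho (m + 2)).add_one
    rcases hκ with hκ3 | hκ2
    · obtain ⟨n0, hn0⟩ := even_fin κ κ (2 - κ) (Or.inl hκ3) (by omega) (by omega)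
        (by nlinarith)
      refine ⟨n0, fun m hm => even_val κ hκ0 (m + 1) 1 _ (Or.inl rfl) (hYo m) (one_mul _).symm ?_⟩
      rintro s σ (rfl | rfl)
      · intro h
        apply hn0 m hm s
        rw [← hYe m, h]; ring
      · intro h
        have := hsq (m + 1)
        rw [hYe m] at h
        nlinarith [sq_nonneg s]
    · obtain ⟨n0, hn0⟩ := even_fin κ (-κ) (κ - 2) (Or.inr hκ2) (by omega) (by omega)
        (by nlinarith)
      refine ⟨n0, fun m hm => even_val κ hκ0 (m + 1) 1 _ (Or.inl rfl) (hYo m) (one_mul _).symm ?_⟩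
      rintro s σ (rfl | rfl)
      · intro h
        have := hsq (m + 1)
        rw [hYe m] at h
        nlinarith [sq_nonneg s]
      · intro h
        apply hn0 m hm s
        have := hYe m
        rw [h] at this
        linear_combination this

theorem arith_N1 (k : ℤ) (hk : k ∉ ({-2, 0, 2, 4} : Set ℤ)) (n : ℕ) (hn : 2 ≤ n) :
    ¬ IsSquare (orb k n + k) := by
  simp only [Set.mem_insert_iff, Set.mem_singleton_iff, not_or] at hk
  obtain ⟨m, rfl⟩ := Nat.exists_eq_add_of_le' hn
  rcases Int.even_or_odd' k with ⟨κ, rfl | hκ⟩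
  · exact even_N1 κ (by omega) m
  · exact odd_N1 k ⟨κ, hκ⟩ m

theorem arith_N2 (k : ℤ) (hk : k ∉ ({-2, 0, 2, 4} : Set ℤ)) : ∃ n0, ∀ n, n0 ≤ n →
    ∃ p : ℕ, p.Prime ∧ p ≠ 2 ∧ ¬ (p : ℤ) ∣ k ∧ Odd (padicValRat p (orb k n + k)) := by
  simp only [Set.mem_insert_iff, Set.mem_singleton_iff, not_or] at hk
  rcases Int.even_or_odd' k with ⟨κ, rfl | hκ⟩
  · obtain ⟨n0, h⟩ := even_N2 κ (by omega)
    refine ⟨n0 + 3, fun n hn => ?_⟩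
    obtain ⟨m, rfl⟩ := Nat.exists_eq_add_of_le' (show 3 ≤ n by omega)
    exact h m (by omega)
  · refine ⟨3, fun n hn => ?_⟩
    obtain ⟨m, rfl⟩ := Nat.exists_eq_add_of_le' hn
    exact odd_N2 k ⟨κ, hκ⟩ m


open Polynomial

def ph {R : Type*} [CommRing R] (k : ℤ) (x : R) : R := x ^ 2 + (k : R) * x

lemma map_ph {R S F : Type*} [CommRing R] [CommRing S] [FunLike F R S] [RingHomClass F R S]
    (f : F) (k : ℤ) (x : R) : f (ph k x) = ph k (f x) := by
  simp [ph]

lemma map_ph_iter {R S F : Type*} [CommRing R] [CommRing S] [FunLike F R S] [RingHomClass F R S]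
    (f : F) (k : ℤ) (n : ℕ) (x : R) : f ((ph k)^[n] x) = (ph k)^[n] (f x) := by
  induction n with
  | zero => rfl
  | succ n ih => rw [Function.iterate_succ_apply', Function.iterate_succ_apply', map_ph, ih]

lemma ph_iter_zero {R : Type*} [CommRing R] (k : ℤ) (n : ℕ) : (ph k)^[n] (0 : R) = 0 := by
  induction n with
  | zero => rfl
  | succ n ih => rw [Function.iterate_succ_apply', ih]; simp [ph]

lemma ph_neg {R : Type*} [CommRing R] (k : ℤ) : ph k (-(k : R)) = 0 := by
  simp [ph]; ring

lemma witt_charZero (p : ℕ) [Fact p.Prime] :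
    CharZero (WittVector p (AlgebraicClosure (ZMod p))) := by
  refine charZero_of_inj_zero fun n hn => ?_
  by_contra h0
  obtain ⟨a, u, hu, hnu⟩ := Nat.exists_eq_pow_mul_and_not_dvd h0 p (Fact.out : p.Prime).ne_one
  rw [hnu] at hn
  push_cast at hn
  rcases mul_eq_zero.1 hn with h | h
  · exact pow_ne_zero a (WittVector.irreducible p (k := AlgebraicClosure (ZMod p))).ne_zero h
  · have := congrArg (WittVector.constantCoeff) h
    rw [map_natCast, map_zero] at this
    exact hu ((CharP.cast_eq_zero_iff (AlgebraicClosure (ZMod p)) p u).1 this)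

lemma witt_isUnit (p : ℕ) [Fact p.Prime] (x : WittVector p (AlgebraicClosure (ZMod p)))
    (hx : WittVector.constantCoeff x ≠ 0) : IsUnit x :=
  WittVector.isUnit_of_coeff_zero_ne_zero x hx

lemma witt_sqrt (p : ℕ) [Fact p.Prime] (hp2 : p ≠ 2) (x : WittVector p (AlgebraicClosure (ZMod p)))
    (hx : WittVector.constantCoeff x ≠ 0) : ∃ y, y ^ 2 = x := by
  have hH : HenselianRing (WittVector p (AlgebraicClosure (ZMod p)))
    (Ideal.span {(p : WittVector p (AlgebraicClosure (ZMod p)))}) := inferInstance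
  obtain ⟨b, hb⟩ := IsAlgClosed.exists_pow_nat_eq (WittVector.constantCoeff x) (n := 2) two_pos
  obtain ⟨y0, rfl⟩ := WittVector.constantCoeff_surjective (p := p) b
  have h2 : (2 : AlgebraicClosure (ZMod p)) ≠ 0 := by
    have := (CharP.cast_eq_zero_iff (AlgebraicClosure (ZMod p)) p 2).not.2 (by
      intro h
      exact hp2 ((Nat.prime_dvd_prime_iff_eq Fact.out Nat.prime_two).1 h))
    exact_mod_cast this
  have hy0 : WittVector.constantCoeff y0 ≠ 0 := by
    intro h; rw [h] at hb; apply hx; rw [← hb]; simp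
  obtain ⟨y, hy, -⟩ := hH.is_henselian (X ^ 2 - C x) (monic_X_pow_sub_C x two_ne_zero) y0 (by
    rw [← WittVector.ker_constantCoeff, RingHom.mem_ker]
    simp [hb, -WittVector.constantCoeff_apply]) (by
    apply IsUnit.map
    apply witt_isUnit
    simp only [derivative_sub, derivative_X_pow, derivative_C, sub_zero, eval_mul, eval_pow, eval_X, eval_ofNat,
      Nat.cast_ofNat, map_mul, map_ofNat, map_pow]
    refine mul_ne_zero (h2) (by simpa [-WittVector.constantCoeff_apply] using hy0))
  refine ⟨y, ?_⟩
  have : y ^ 2 - x = 0 := by simpa [IsRoot] using hy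
  linear_combination this


open Polynomial

lemma orb_eq_iter (k : ℤ) (n : ℕ) : orb k n = (ph k)^[n] (-(k / 2) : ℚ) := by
  induction n with
  | zero => rfl
  | succ n ih => rw [Function.iterate_succ_apply', ← ih]; rfl

lemma orb_denom (k : ℤ) (n : ℕ) : ∃ (A : ℤ) (e : ℕ), orb k n = A / 2 ^ e := by
  induction n with
  | zero => exact ⟨-k, 1, by simp [orb]; ring⟩
  | succ n ih =>
    obtain ⟨A, e, h⟩ := ih
    refine ⟨A ^ 2 + k * A * 2 ^ e, 2 * e, ?_⟩
    rw [orb, h, pow_mul']; push_cast; field_simp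

lemma cc_factor (k : ℤ) (n p : ℕ) (hp : p.Prime) (hp2 : p ≠ 2)
    (hv : Odd (padicValRat p (orb k n + k))) :
    ∃ (e i : ℕ) (u : ℤ), ¬ (p : ℤ) ∣ u ∧ (orb k n + k) * (2 ^ e) ^ 2 = p ^ (2 * i + 1) * u := by
  have := Fact.mk hp
  obtain ⟨A, e, h⟩ := orb_denom k n
  have hZ : (orb k n + k) * (2 ^ e) ^ 2 = (((A + k * 2 ^ e) * 2 ^ e : ℤ) : ℚ) := by
    rw [h]; push_cast; field_simp
  generalize (A + k * 2 ^ e) * 2 ^ e = Z at hZ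
  have h20 : padicValRat p ((2 : ℚ)) = 0 := by
    have : ((2 : ℕ) : ℚ) = 2 := by norm_num
    rw [← this, padicValRat.of_nat, padicValNat.eq_zero_of_not_dvd]
    · rfl
    · intro h; exact hp2 ((Nat.prime_dvd_prime_iff_eq hp Nat.prime_two).1 h)
  have hc0 : orb k n + k ≠ 0 := by
    intro h0; rw [h0] at hv; simp at hv
  have hZ0 : Z ≠ 0 := by
    rintro rfl
    simp [hc0] at hZ
  have hval : padicValRat p (orb k n + k) = padicValInt p Z := by
    rw [← padicValRat.of_int, ← hZ, padicValRat.mul hc0 (by positivity), padicValRat.pow,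
      padicValRat.pow, h20]; ring
  rw [hval] at hv
  have hv' : Odd (padicValInt p Z) := by exact_mod_cast hv
  obtain ⟨i, hi⟩ := hv'
  obtain ⟨u, hu⟩ := padicValInt_dvd (p := p) Z
  refine ⟨e, i, u, ?_, ?_⟩
  · rintro ⟨w, rfl⟩
    have h1 : (p : ℤ) ^ (padicValInt p Z + 1) ∣ Z := ⟨w, by
      conv_lhs => rw [hu]
      ring⟩
    rcases (padicValInt_dvd_iff _ _).1 h1 with h | h
    · exact hZ0 h
    · omega
  · rw [hZ, ← hi]; exact_mod_cast hu

lemma ph_zero_cases {R : Type*} [CommRing R] [IsDomain R] (k : ℤ) (n : ℕ) (s : R)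
    (h : (ph k)^[n] s = 0) : s = 0 ∨ ∃ i < n, (ph k)^[i] s = -(k : R) := by
  induction n with
  | zero => exact Or.inl h
  | succ n ih =>
    rw [Function.iterate_succ_apply'] at h
    have h' : (ph k)^[n] s * ((ph k)^[n] s + k) = 0 := by rw [← h]; unfold ph; ring
    rcases mul_eq_zero.1 h' with h1 | h1
    · rcases ih h1 with h2 | ⟨i, hi, h2⟩
      · exact Or.inl h2
      · exact Or.inr ⟨i, by omega, h2⟩
    · exact Or.inr ⟨n, by omega, eq_neg_of_add_eq_zero_left h1⟩

theorem unram_core {W κ F Ω L : Type*} [CommRing W] [IsDomain W] [IsIntegrallyClosed W]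
    [Field κ] (π : W →+* κ) [Field F] [CharZero F] [Algebra W F] [IsFractionRing W F]
    [Field Ω] [Algebra F Ω] [Field L] [Algebra ℚ L] (ι : L →+* Ω) (p : ℕ)
    (hp : p.Prime) (hpW : Prime (p : W)) (hpκ : ∀ z : ℤ, (z : κ) = 0 ↔ (p : ℤ) ∣ z)
    (hun : ∀ x, π x ≠ 0 → IsUnit x) (hsq : ∀ x, π x ≠ 0 → ∃ y, y ^ 2 = x)
    (h2 : p ≠ 2) (k : ℤ) (hk : ¬ (p : ℤ) ∣ k) (n : ℕ)
    (hv : Odd (padicValRat p (orb k n + k)))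
    (x : L) (hx : x ∈ IntermediateField.adjoin ℚ {x : L | (ph k)^[n] x = 0})
    (hxc : x ^ 2 = algebraMap ℚ L (orb k n + k)) : False := by
  have : CharZero Ω := charZero_of_injective_algebraMap (algebraMap F Ω).injective
  have : CharZero L := algebraRat.charZero L
  set j : W →+* Ω := (algebraMap F Ω).comp (algebraMap W F) with hj
  have hjinj : Function.Injective j :=
    (algebraMap F Ω).injective.comp (IsFractionRing.injective W F)
  obtain ⟨e, i, u, hu, hcZ⟩ := cc_factor k n p hp h2 hv
  have hκ2 : (2 : κ) ≠ 0 := by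
    have := (hpκ 2).not.2 (by
      intro h; exact h2 ((Nat.prime_dvd_prime_iff_eq hp Nat.prime_two).1 (by exact_mod_cast h)))
    exact_mod_cast this
  obtain ⟨hf, hhf⟩ := (hun 2 (by rw [map_ofNat]; exact hκ2)).exists_right_inv
  have hjh : j hf = 1 / 2 := by
    have := congrArg j hhf
    rw [map_mul, map_ofNat, map_one] at this
    field_simp; linear_combination this
  -- the orbit in `W`
  have horb : ∀ m, j ((ph k)^[m] (-(k : W) * hf)) = ((orb k m : ℚ) : Ω) := by
    intro m
    rw [map_ph_iter, orb_eq_iter, ← eq_ratCast (Rat.castHom Ω), map_ph_iter, map_mul, hjh]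
    congr 1
    simp; ring
  have hcW : ((ph k)^[n] (-(k : W) * hf) + k) * (2 ^ e) ^ 2 = (p : W) ^ (2 * i + 1) * u := by
    apply hjinj
    have h := congrArg (fun q : ℚ => (q : Ω)) hcZ
    simp only [map_mul, map_add, horb, map_pow, map_ofNat, map_natCast, map_intCast]
    push_cast at h
    exact h
  have hπc : π ((ph k)^[n] (-(k : W) * hf) + k) = 0 := by
    have h := congrArg π hcW
    rw [map_mul, map_mul] at h
    have hp0 : (p : κ) = 0 := by simpa using (hpκ p).2 (dvd_refl _)
    have h3 : π ((p : W) ^ (2 * i + 1)) = 0 := by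
      rw [map_pow, map_natCast, hp0, pow_succ, mul_zero]
    rw [h3, zero_mul] at h
    refine (mul_eq_zero.1 h).resolve_right ?_
    rw [map_pow, map_pow, map_ofNat]
    exact pow_ne_zero _ (pow_ne_zero _ hκ2)
  have hlift : ∀ m, m + 1 ≤ n → ∀ β : L, (ph k)^[m] β = -(k : L) → ∃ w, j w = ι β := by
    intro m
    induction m with
    | zero =>
      intro _ β hβ
      exact ⟨-(k : W), by rw [show β = -(k : L) from hβ]; simp⟩
    | succ m ih =>
      intro hm γ hγ
      obtain ⟨w, hw⟩ := ih (by omega) (ph k γ) hγ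
      have hwk : (ph k)^[m] w = -(k : W) := by
        apply hjinj
        rw [map_ph_iter, hw, ← map_ph_iter, ← Function.iterate_succ_apply, hγ]
        simp
      have hx0 : π ((k : W) ^ 2 + 4 * w) ≠ 0 := by
        intro h0
        have e1 : π w = ph k (π (-(k : W) * hf)) := by
          have h4 := congrArg π hhf
          simp only [map_add, map_mul, map_pow, map_intCast, map_ofNat, map_one] at h0 h4
          simp only [ph, map_mul, map_neg, map_intCast]
          have h44 : (4 : κ) ≠ 0 := by
            rw [show (4 : κ) = 2 * 2 by norm_num]; exact mul_ne_zero hκ2 hκ2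
          apply mul_left_cancel₀ h44
          have h5 : π hf = 1 / 2 := by field_simp; linear_combination h4
          rw [h5]; field_simp; linear_combination h0
        have e2 : (ph k)^[m + 1] (π (-(k : W) * hf)) = -(k : κ) := by
          rw [Function.iterate_succ_apply, ← e1, ← map_ph_iter, hwk]; simp
        have e3 : (ph k)^[n] (π (-(k : W) * hf)) = 0 := by
          obtain ⟨d, rfl⟩ := Nat.exists_eq_add_of_le' hm
          rw [Function.iterate_add_apply, Function.iterate_succ_apply', e2, ph_neg, ph_iter_zero]
        rw [map_add, map_ph_iter, e3, zero_add, map_intCast] at hπc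
        exact hk ((hpκ k).1 hπc)
      obtain ⟨y, hy⟩ := hsq _ hx0
      have e4 : (2 * ι γ + k) ^ 2 = j y ^ 2 := by
        rw [← map_pow, hy]
        simp only [map_add, map_mul, map_pow, map_intCast, map_ofNat]
        rw [hw]; simp only [ph, map_add, map_mul, map_pow, map_intCast]; ring
      rcases sq_eq_sq_iff_eq_or_eq_neg.1 e4 with h | h
      · exact ⟨hf * (y - k), by
          rw [map_mul, map_sub, map_intCast, hjh]; linear_combination -(1/2) * h⟩
      · exact ⟨hf * (-y - k), by
          rw [map_mul, map_sub, map_neg, map_intCast, hjh]; linear_combination -(1/2) * h⟩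
  have hrange : ι x ∈ (algebraMap F Ω).fieldRange := by
    refine IntermediateField.adjoin_induction (p := fun x _ => ι x ∈ (algebraMap F Ω).fieldRange)
      (F := ℚ) ?_ ?_ ?_ ?_ ?_ hx
    · intro s hs
      rcases ph_zero_cases k n s hs with rfl | ⟨m, hm, h⟩
      · rw [map_zero]; exact zero_mem _
      · obtain ⟨w, hw⟩ := hlift m hm s h
        rw [← hw]; exact ⟨_, rfl⟩
    · intro q
      rw [eq_ratCast, map_ratCast]
      exact SubfieldClass.ratCast_mem _ q
    · intro a b _ _ ha hb; rw [map_add]; exact add_mem ha hb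
    · intro a _ ha; rw [map_inv₀]; exact inv_mem ha
    · intro a b _ _ ha hb; rw [map_mul]; exact mul_mem ha hb
  obtain ⟨f, hf'⟩ := hrange
  have hfF : (f * 2 ^ e) ^ 2 = (p : F) ^ (2 * i + 1) * u := by
    apply (algebraMap F Ω).injective
    have h := congrArg (fun q : ℚ => (q : Ω)) hcZ
    push_cast at h
    simp only [map_mul, map_pow, map_ofNat, map_natCast, map_intCast, hf']
    rw [← h, mul_pow, ← map_pow ι, hxc, eq_ratCast, map_ratCast]; push_cast; rfl
  have hpF : (p : F) ≠ 0 := by exact_mod_cast hp.ne_zero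
  have hg : (f * 2 ^ e / p ^ i) ^ 2 = algebraMap W F (p * u) := by
    rw [div_pow, hfF, map_mul, map_natCast, map_intCast]; field_simp; ring
  obtain ⟨z, hz⟩ := IsIntegrallyClosed.exists_algebraMap_eq_of_isIntegral_pow (R := W)
    (x := f * 2 ^ e / (p : F) ^ i) (n := 2) two_pos (by rw [hg]; exact isIntegral_algebraMap)
  rw [← hz, ← map_pow] at hg
  have hg := IsFractionRing.injective W F hg
  obtain ⟨z', hz'⟩ := hpW.dvd_of_dvd_pow (⟨_, hg⟩ : (p : W) ∣ z ^ 2)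
  rw [hz'] at hg
  have e6 : (p : W) * z' ^ 2 = u := mul_left_cancel₀ hpW.ne_zero (by rw [← hg]; ring)
  have h7 := congrArg π e6
  have hp0 : (p : κ) = 0 := by simpa using (hpκ p).2 (dvd_refl _)
  rw [map_mul, map_natCast, hp0, zero_mul, map_intCast] at h7
  exact hu ((hpκ u).1 h7.symm)

theorem not_sq_Kn {L : Type*} [Field L] [Algebra ℚ L] [Algebra.IsAlgebraic ℚ L] (k : ℤ) (n p : ℕ) (hp : p.Prime) (h2 : p ≠ 2) (hk : ¬ (p : ℤ) ∣ k)
    (hv : Odd (padicValRat p (orb k n + k))) (x : L)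
    (hx : x ∈ IntermediateField.adjoin ℚ {x : L | (ph k)^[n] x = 0})
    (hxc : x ^ 2 = algebraMap ℚ L (orb k n + k)) : False := by
  have := Fact.mk hp
  have := witt_charZero p
  let W := WittVector p (AlgebraicClosure (ZMod p))
  let F := FractionRing W
  have : CharZero F := charZero_of_injective_algebraMap (IsFractionRing.injective W F)
  let Ω := AlgebraicClosure F
  have : CharZero Ω := charZero_of_injective_algebraMap (algebraMap F Ω).injective
  let ι : L →ₐ[ℚ] Ω := IsAlgClosed.lift
  exact unram_core (W := W) (F := F) (Ω := Ω) WittVector.constantCoeff ι.toRingHom p hp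
    (WittVector.irreducible p).prime
    (fun z => CharP.intCast_eq_zero_iff (AlgebraicClosure (ZMod p)) p z)
    (witt_isUnit p) (witt_sqrt p h2) h2 k hk n hv x hx hxc


open Polynomial

section
set_option linter.unusedSectionVars false
variable {L : Type*} [Field L] [CharZero L] [IsAlgClosed L]

noncomputable def rt (k : ℤ) (β : L) : L :=
  (IsAlgClosed.exists_pow_nat_eq ((k : L) ^ 2 + 4 * β) (n := 2) two_pos).choose

lemma rt_sq (k : ℤ) (β : L) : rt k β ^ 2 = (k : L) ^ 2 + 4 * β :=
  (IsAlgClosed.exists_pow_nat_eq ((k : L) ^ 2 + 4 * β) (n := 2) two_pos).choose_spec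

open Classical in
noncomputable def Bs (L : Type*) [Field L] [IsAlgClosed L] (k : ℤ) : ℕ → Finset L
  | 0 => {-(k : L)}
  | m + 1 => (Bs L k m).biUnion fun β => {(rt k β - k) / 2, (-rt k β - k) / 2}

lemma ph_eq_iff (k : ℤ) (γ β : L) :
    ph k γ = β ↔ γ = (rt k β - k) / 2 ∨ γ = (-rt k β - k) / 2 := by
  have h := rt_sq k β
  have e : ph k γ - β = (γ - (rt k β - k) / 2) * (γ - (-rt k β - k) / 2) := by
    unfold ph; linear_combination (1 / 4) * h
  rw [← sub_eq_zero, e, mul_eq_zero, sub_eq_zero, sub_eq_zero]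

lemma mem_Bs_succ (k : ℤ) (m : ℕ) (γ : L) : γ ∈ Bs L k (m + 1) ↔ ph k γ ∈ Bs L k m := by
  classical
  simp only [Bs, Finset.mem_biUnion, Finset.mem_insert, Finset.mem_singleton]
  constructor
  · rintro ⟨β, hβ, h⟩
    rwa [(ph_eq_iff k γ β).2 h]
  · intro h
    exact ⟨_, h, (ph_eq_iff k γ _).1 rfl⟩

lemma mem_Bs (k : ℤ) (m : ℕ) (γ : L) : γ ∈ Bs L k m ↔ (ph k)^[m] γ = -(k : L) := by
  induction m generalizing γ with
  | zero => simp [Bs]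
  | succ m ih => rw [mem_Bs_succ, ih, Function.iterate_succ_apply]


lemma Bs_card_prod (k : ℤ) (m : ℕ) (h : ∀ i < m, ∀ β ∈ Bs L k i, rt k β ≠ 0) :
    (Bs L k m).card = 2 ^ m ∧
    ∀ y : L, (ph k)^[m] y + k = ∏ β ∈ Bs L k m, (y - β) := by
  classical
  induction m with
  | zero => simp [Bs]
  | succ m ih =>
    obtain ⟨ih1, ih2⟩ := ih fun i hi => h i (by omega)
    have hne : ∀ β ∈ Bs L k m, (rt k β - k) / 2 ≠ (-rt k β - k) / 2 := by
      intro β hβ he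
      apply h m (by omega) β hβ
      linear_combination he
    have hdis : Set.PairwiseDisjoint (Bs L k m : Set L)
        (fun β => ({(rt k β - k) / 2, (-rt k β - k) / 2} : Finset L)) := by
      intro β _ β' _ hb
      refine Finset.disjoint_left.2 fun γ h1 h2 => hb ?_
      simp only [Finset.mem_insert, Finset.mem_singleton] at h1 h2
      rw [← (ph_eq_iff k γ β).2 h1, ← (ph_eq_iff k γ β').2 h2]
    constructor
    · rw [Bs, Finset.card_biUnion hdis, Finset.sum_congr rfl
        (fun β hβ => Finset.card_pair (hne β hβ))]
      simp [ih1, pow_succ]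
    · intro y
      rw [Function.iterate_succ_apply, ih2, Bs, Finset.prod_biUnion hdis]
      refine Finset.prod_congr rfl fun β hβ => ?_
      rw [Finset.prod_pair (hne β hβ)]
      have h := rt_sq k β
      unfold ph; linear_combination (1 / 4) * h

lemma Bs_disc (k : ℤ) (m : ℕ) (h : ∀ i < m, ∀ β ∈ Bs L k i, rt k β ≠ 0) :
    ∏ β ∈ Bs L k m, ((k : L) ^ 2 + 4 * β) =
      (((-4) ^ 2 ^ m * (orb k (m + 1) + k) : ℚ) : L) := by
  obtain ⟨h1, h2⟩ := Bs_card_prod k m h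
  have h3 := h2 (((-(k ^ 2 / 4) : ℚ) : ℚ) : L)
  have h4 : (ph k)^[m] (((-(k ^ 2 / 4) : ℚ) : ℚ) : L) = (orb k (m + 1) : L) := by
    rw [orb_eq_iter, Function.iterate_succ_apply, ← eq_ratCast (Rat.castHom L), ← map_ph_iter,
      eq_ratCast]
    congr 2
    unfold ph; ring
  rw [h4] at h3
  push_cast
  rw [h3, ← h1, ← Finset.prod_const, ← Finset.prod_mul_distrib]
  refine Finset.prod_congr rfl fun β _ => ?_
  push_cast; ring

/-- the discriminant-type product over level `m`, as a rational number. -/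
def dsc (k : ℤ) (m : ℕ) : ℚ := (-4) ^ 2 ^ m * (orb k (m + 1) + k)

lemma dsc_not_sq (k : ℤ) (hk : k ∉ ({-2, 0, 2, 4} : Set ℤ)) (m : ℕ) : ¬ IsSquare (dsc k m) := by
  cases m with
  | zero =>
    have e : dsc k 0 = (k : ℚ) ^ 2 - 4 * k := by simp [dsc, orb]; ring
    rw [e]
    simp only [Set.mem_insert_iff, Set.mem_singleton_iff, not_or] at hk
    exact k_sub_four k hk.2.1 hk.2.2.2
  | succ m =>
    rintro ⟨r, hr⟩
    apply arith_N1 k hk (m + 2) (by omega)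
    refine ⟨r / (-4) ^ 2 ^ m, ?_⟩
    unfold dsc at hr
    rw [pow_succ 2 m, pow_mul] at hr
    field_simp
    rw [pow_two r, ← hr]; ring

lemma rt_ne_zero (k : ℤ) (hk : k ∉ ({-2, 0, 2, 4} : Set ℤ)) (m : ℕ) :
    ∀ β ∈ Bs L k m, rt k β ≠ 0 := by
  induction m using Nat.strong_induction_on with
  | _ m ih =>
    intro β hβ h0
    have h1 := Bs_disc (L := L) k m ih
    have h2 : (k : L) ^ 2 + 4 * β = 0 := by rw [← rt_sq, h0]; ring
    rw [Finset.prod_eq_zero hβ h2] at h1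
    have h3 : dsc k m = 0 := by
      have : ((dsc k m : ℚ) : L) = 0 := h1.symm
      exact_mod_cast this
    exact dsc_not_sq k hk m (h3 ▸ ⟨0, by simp⟩)

lemma Bs_card (k : ℤ) (hk : k ∉ ({-2, 0, 2, 4} : Set ℤ)) (m : ℕ) : (Bs L k m).card = 2 ^ m :=
  (Bs_card_prod k m fun i _ => rt_ne_zero k hk i).1

lemma rt_prod_sq (k : ℤ) (hk : k ∉ ({-2, 0, 2, 4} : Set ℤ)) (m : ℕ) :
    (∏ β ∈ Bs L k m, rt k β) ^ 2 = ((dsc k m : ℚ) : L) := by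
  rw [← Finset.prod_pow, Finset.prod_congr rfl fun β _ => rt_sq k β]
  exact Bs_disc k m fun i _ => rt_ne_zero k hk i

end


open Polynomial

section
set_option linter.unusedSectionVars false
variable {L : Type*} [Field L] [CharZero L] [Algebra ℚ L] [Algebra.IsAlgebraic ℚ L] [IsAlgClosed L]

lemma ph_eq_ph (k : ℤ) {a b : L} (h : ph k a = ph k b) : a = b ∨ a = -k - b := by
  have e : (a - b) * (a - (-k - b)) = 0 := by unfold ph at h; linear_combination h
  rcases mul_eq_zero.1 e with h | h
  · exact Or.inl (sub_eq_zero.1 h)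
  · exact Or.inr (sub_eq_zero.1 h)

lemma isGal : IsGalois ℚ L := by
  have : IsAlgClosure ℚ L := ⟨inferInstance, inferInstance⟩
  have : Normal ℚ L := IsAlgClosure.normal ℚ L
  exact ⟨⟩

lemma gal_Bs (k : ℤ) (m : ℕ) (σ : L ≃ₐ[ℚ] L) {β : L} (h : β ∈ Bs L k m) : σ β ∈ Bs L k m := by
  rw [mem_Bs] at h ⊢
  rw [← map_ph_iter, h]; simp

lemma gal_rt (k : ℤ) (σ : L ≃ₐ[ℚ] L) (β : L) :
    σ (rt k β) = rt k (σ β) ∨ σ (rt k β) = -rt k (σ β) := by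
  apply sq_eq_sq_iff_eq_or_eq_neg.1
  rw [← map_pow, rt_sq, rt_sq]
  simp only [map_add, map_mul, map_pow, map_intCast, map_ofNat]

lemma rat_of_fixed (x : L) (h : ∀ σ : L ≃ₐ[ℚ] L, σ x = x) : ∃ q : ℚ, (q : L) = x := by
  have := isGal (L := L)
  obtain ⟨q, hq⟩ := (InfiniteGalois.mem_range_algebraMap_iff_fixed (k := ℚ) x).2 h
  exact ⟨q, by rw [← hq, eq_ratCast]⟩

lemma gal_trans (k : ℤ) (hk : k ∉ ({-2, 0, 2, 4} : Set ℤ)) (m : ℕ) :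
    ∀ β ∈ Bs L k m, ∀ β' ∈ Bs L k m, ∃ σ : L ≃ₐ[ℚ] L, σ β = β' := by
  induction m with
  | zero =>
    intro β hβ β' hβ'
    simp only [Bs, Finset.mem_singleton] at hβ hβ'
    exact ⟨1, by rw [hβ, hβ']; rfl⟩
  | succ m ih =>
    intro γ hγ γ' hγ'
    have hβ := (mem_Bs_succ k m γ).1 hγ
    have hβ' := (mem_Bs_succ k m γ').1 hγ'
    obtain ⟨σ, hσ⟩ := ih _ hβ _ hβ'
    by_cases hstab : ∀ τ : L ≃ₐ[ℚ] L, τ (ph k γ') = ph k γ' → τ γ' = γ'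
    · exfalso
      choose! s hs using ih _ hβ'
      have hR : ∀ τ : L ≃ₐ[ℚ] L, ∀ β ∈ Bs L k m, τ (s β (2 * γ' + k)) = s (τ β) (2 * γ' + k) := by
        intro τ β hb
        have h1 : ((s (τ β))⁻¹ * (τ * s β)) (ph k γ') = ph k γ' := by
          rw [AlgEquiv.mul_apply, AlgEquiv.mul_apply, hs β hb]
          have h0 := (s (τ β)).symm_apply_apply (ph k γ')
          rw [hs (τ β) (gal_Bs k m τ hb)] at h0
          exact h0
        have h2 := hstab _ h1
        have h3 : ((s (τ β))⁻¹ * (τ * s β)) (2 * γ' + k) = 2 * γ' + k := by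
          simp only [map_add, map_mul, map_ofNat, map_intCast] at h2 ⊢
          rw [h2]
        have h4 := congrArg (s (τ β)) h3
        rw [← h4]
        exact ((s (τ β)).apply_symm_apply (τ (s β (2 * γ' + k)))).symm
      obtain ⟨q, hq⟩ := rat_of_fixed (∏ β ∈ Bs L k m, s β (2 * γ' + k)) (by
        intro τ
        rw [map_prod, Finset.prod_congr rfl (hR τ)]
        refine Finset.prod_nbij' (fun b => τ b) (fun b => τ.symm b) ?_ ?_ ?_ ?_ ?_
        · intro b hb; exact gal_Bs k m τ hb
        · intro b hb; exact gal_Bs k m τ.symm hb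
        · intro b _; exact τ.symm_apply_apply b
        · intro b _; exact τ.apply_symm_apply b
        · intro b _; rfl)
      apply dsc_not_sq k hk m
      refine ⟨q, ?_⟩
      have : ((dsc k m : ℚ) : L) = ((q * q : ℚ) : L) := by
        rw [← rt_prod_sq k hk m, Rat.cast_mul, hq, ← pow_two, ← Finset.prod_pow, ← Finset.prod_pow]
        refine Finset.prod_congr rfl fun β hb => ?_
        rw [rt_sq, ← map_pow]
        have e : (2 * γ' + k) ^ 2 = (k : L) ^ 2 + 4 * ph k γ' := by unfold ph; ring
        rw [e]
        simp only [map_add, map_mul, map_pow, map_ofNat, map_intCast]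
        rw [hs β hb]
      exact_mod_cast this
    · push Not at hstab
      obtain ⟨τ, h1, h2⟩ := hstab
      have h3 : τ γ' = -k - γ' := (ph_eq_ph k (by rw [← map_ph, h1])).resolve_left h2
      rcases ph_eq_ph k (show ph k (σ γ) = ph k γ' by rw [← map_ph, hσ]) with h | h
      · exact ⟨σ, h⟩
      · refine ⟨τ * σ, ?_⟩
        rw [AlgEquiv.mul_apply, h]
        simp [h3]

lemma gal_pow (k : ℤ) (σ : L ≃ₐ[ℚ] L) (m : ℕ) : ∀ β ∈ Bs L k m, (σ ^ 2 ^ m) β = β := by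
  induction m with
  | zero =>
    intro β hβ
    simp only [Bs, Finset.mem_singleton] at hβ
    rw [hβ]; simp
  | succ m ih =>
    intro γ hγ
    have h := ih _ ((mem_Bs_succ k m γ).1 hγ)
    rw [pow_succ, pow_mul, pow_two, AlgEquiv.mul_apply]
    rcases ph_eq_ph k (show ph k ((σ ^ 2 ^ m) γ) = ph k γ by rw [← map_ph, h]) with h1 | h1
    · rw [h1, h1]
    · rw [h1, map_sub, h1, map_neg, map_intCast]; ring

/-- The field generated by the zeros of the `n`-th iterate. -/
noncomputable def Kf (L : Type*) [Field L] [Algebra ℚ L] (k : ℤ) (n : ℕ) : IntermediateField ℚ L :=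
  IntermediateField.adjoin ℚ {x : L | (ph k)^[n] x = 0}

lemma gal_Kf (k : ℤ) (n : ℕ) (σ : L ≃ₐ[ℚ] L) {x : L} (h : x ∈ Kf L k n) : σ x ∈ Kf L k n := by
  refine IntermediateField.adjoin_induction (p := fun x _ => σ x ∈ Kf L k n) (F := ℚ)
    ?_ ?_ ?_ ?_ ?_ h
  · intro s hs
    apply IntermediateField.subset_adjoin
    change (ph k)^[n] (σ s) = 0
    rw [← map_ph_iter, show (ph k)^[n] s = 0 from hs, map_zero]
  · intro q
    rw [AlgEquiv.commutes]; exact IntermediateField.algebraMap_mem _ q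
  · intro a b _ _ ha hb; rw [map_add]; exact add_mem ha hb
  · intro a _ ha; rw [map_inv₀]; exact inv_mem ha
  · intro a b _ _ ha hb; rw [map_mul]; exact mul_mem ha hb

lemma Bs_sub_Kf (k : ℤ) (m : ℕ) {β : L} (h : β ∈ Bs L k m) : β ∈ Kf L k (m + 1) := by
  apply IntermediateField.subset_adjoin
  change (ph k)^[m + 1] β = 0
  rw [Function.iterate_succ_apply', (mem_Bs k m β).1 h, ph_neg]

open scoped Pointwise in
lemma no_rel (k : ℤ) (hk : k ∉ ({-2, 0, 2, 4} : Set ℤ)) (m : ℕ)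
    (hns : ∏ β ∈ Bs L k m, rt k β ∉ Kf L k (m + 1)) (t0 : Finset L) (ht0 : t0 ⊆ Bs L k m)
    (hne : t0.Nonempty) : ∏ β ∈ t0, rt k β ∉ Kf L k (m + 1) := by
  classical
  intro hmem0
  let S : SubMulAction (L ≃ₐ[ℚ] L) (Finset L) :=
    { carrier := {t | t ⊆ Bs L k m ∧ ∏ β ∈ t, rt k β ∈ Kf L k (m + 1)}
      smul_mem' := by
        rintro σ t ⟨h1, h2⟩
        constructor
        · intro b hb
          obtain ⟨a, ha, rfl⟩ := Finset.mem_smul_finset.1 hb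
          exact gal_Bs k m σ (h1 ha)
        · have e : ∏ β ∈ σ • t, rt k β = ∏ β ∈ t, rt k (σ β) := by
            rw [← Finset.image_smul]
            exact Finset.prod_image (g := fun x : L => σ • x) (fun a _ b _ h => σ.injective h)
          rw [e]
          have hsq : (∏ β ∈ t, rt k (σ β)) ^ 2 = (σ (∏ β ∈ t, rt k β)) ^ 2 := by
            rw [map_prod, ← Finset.prod_pow, ← Finset.prod_pow]
            refine Finset.prod_congr rfl fun b _ => ?_
            rcases gal_rt k σ b with h | h <;> rw [h]
            ring
          have h3 := gal_Kf k (m + 1) σ h2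
          rcases sq_eq_sq_iff_eq_or_eq_neg.1 hsq with h | h
          · rw [h]; exact h3
          · rw [h]; exact neg_mem h3 }
  have hSfin : Finite S := by
    have : Set.Finite {t : Finset L | t ⊆ Bs L k m ∧ ∏ β ∈ t, rt k β ∈ Kf L k (m + 1)} :=
      (Bs L k m).powerset.finite_toSet.subset fun t ht => by
        simpa using ht.1
    exact this
  have hmem : ∀ t : Finset L, t ∈ S ↔ (t ⊆ Bs L k m ∧ ∏ β ∈ t, rt k β ∈ Kf L k (m + 1)) :=
    fun t => Iff.rfl
  clear_value S
  let Z : S := ⟨∅, (hmem _).2 ⟨by simp, by simp⟩⟩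
  let T0 : S := ⟨t0, (hmem _).2 ⟨ht0, hmem0⟩⟩
  -- parity
  have hsym : ∀ t ∈ S, symmDiff t t0 ∈ S := by
    intro t ht
    obtain ⟨h1, h2⟩ := (hmem t).1 ht
    refine (hmem _).2 ⟨?_, ?_⟩
    · intro b hb
      rcases Finset.mem_symmDiff.1 hb with h | h
      · exact h1 h.1
      · exact ht0 h.1
    · have h3 : (∏ β ∈ symmDiff t t0, rt k β) * ∏ β ∈ t ∩ t0, ((k : L) ^ 2 + 4 * β) =
          (∏ β ∈ t, rt k β) * ∏ β ∈ t0, rt k β := by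
        rw [← Finset.prod_union_inter, ← Finset.prod_congr rfl fun β _ => rt_sq k β,
          Finset.prod_pow, pow_two, ← mul_assoc]
        congr 1
        rw [← Finset.prod_union]
        · congr 1
          ext b
          simp only [Finset.mem_union, Finset.mem_symmDiff, Finset.mem_inter]
          tauto
        · rw [Finset.disjoint_left]
          intro b hb hb'
          simp only [Finset.mem_symmDiff, Finset.mem_inter] at hb hb'
          tauto
      have h4 : ∏ β ∈ t ∩ t0, ((k : L) ^ 2 + 4 * β) ≠ 0 := by
        refine Finset.prod_ne_zero_iff.2 fun b hb => ?_
        rw [← rt_sq]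
        exact pow_ne_zero _ (rt_ne_zero k hk m b (h1 (Finset.mem_inter.1 hb).1))
      have h5 : ∏ β ∈ t ∩ t0, ((k : L) ^ 2 + 4 * β) ∈ Kf L k (m + 1) := by
        refine prod_mem fun b hb => ?_
        have hb' := Bs_sub_Kf k m (h1 (Finset.mem_inter.1 hb).1)
        refine add_mem (pow_mem (intCast_mem _ k) 2) (mul_mem (ofNat_mem _ 4) hb')
      rw [eq_div_of_mul_eq h4 h3]
      exact div_mem (mul_mem h2 hmem0) h5
  have hcard : 2 ∣ Nat.card S := by
    by_contra hc
    let f : S → S := fun t => ⟨symmDiff t.1 t0, hsym t.1 t.2⟩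
    have hf : Function.Involutive f := by
      intro t; apply Subtype.ext; simp [f]
    have := Fintype.ofFinite S
    rw [Nat.card_eq_fintype_card] at hc
    obtain ⟨a, ha⟩ := Equiv.Perm.exists_fixed_point_of_prime (p := 2) (n := 1) hc
      (σ := hf.toPerm) (by
        ext t : 1
        rw [pow_one, pow_two, Equiv.Perm.mul_apply]
        exact hf t)
    have h1 : symmDiff a.1 t0 = a.1 := congrArg Subtype.val ha
    have h2 : t0 = ∅ := by
      have := symmDiff_eq_left.1 h1
      simpa using this
    exact hne.ne_empty h2
  -- the 2-group
  let H := (MulAction.toPermHom (L ≃ₐ[ℚ] L) S).range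
  have hfix : ∀ σ : L ≃ₐ[ℚ] L, ∀ t : S, (σ ^ 2 ^ m) • t = t := by
    intro σ t
    apply Subtype.ext
    rw [SubMulAction.val_smul]
    have ht := ((hmem _).1 t.2).1
    rw [← Finset.image_smul]
    conv_rhs => rw [← Finset.image_id (s := t.1)]
    exact Finset.image_congr fun b hb => gal_pow k σ m b (ht hb)
  have hP : IsPGroup 2 H := by
    rintro ⟨_, σ, rfl⟩
    refine ⟨m, ?_⟩
    apply Subtype.ext
    rw [SubmonoidClass.coe_pow, ← map_pow]
    ext t : 1
    exact hfix σ t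
  have := Fact.mk Nat.prime_two
  have hZ : Z ∈ MulAction.fixedPoints H S := by
    rintro ⟨_, σ, rfl⟩
    apply Subtype.ext
    change σ • (∅ : Finset L) = ∅
    simp
  obtain ⟨T, hT, hTZ⟩ := hP.exists_fixed_point_of_prime_dvd_card_of_fixed_point S hcard hZ
  have hTne : T.1.Nonempty := by
    rw [Finset.nonempty_iff_ne_empty]
    intro h; exact hTZ (Subtype.ext h.symm)
  obtain ⟨hT1, hT2⟩ := (hmem _).1 T.2
  have hTfix : ∀ σ : L ≃ₐ[ℚ] L, σ • T.1 = T.1 := fun σ =>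
    congrArg Subtype.val (hT ⟨_, σ, rfl⟩)
  obtain ⟨b, hb⟩ := hTne
  have : T.1 = Bs L k m := by
    apply Finset.Subset.antisymm hT1
    intro c hc
    obtain ⟨σ, rfl⟩ := gal_trans k hk m b (hT1 hb) c hc
    rw [← hTfix σ]
    exact Finset.smul_mem_smul_finset hb
  rw [this] at hT2
  exact hns hT2

end


open Polynomial

section
set_option linter.unusedSectionVars false
variable {L : Type*} [Field L] [CharZero L] [Algebra ℚ L] [Algebra.IsAlgebraic ℚ L] [IsAlgClosed L]

lemma mem_of_fixed (E : IntermediateField ℚ L) (x : L)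
    (h : ∀ σ : L ≃ₐ[ℚ] L, (∀ y ∈ E, σ y = y) → σ x = x) : x ∈ E := by
  have := isGal (L := L)
  rw [← InfiniteGalois.fixedField_fixingSubgroup E, IntermediateField.mem_fixedField_iff]
  intro σ hσ
  exact h σ ((IntermediateField.mem_fixingSubgroup_iff _ _).1 hσ)

lemma fix_adj (E : IntermediateField ℚ L) (a : L) (σ : L ≃ₐ[ℚ] L) (h : ∀ y ∈ E, σ y = y)
    (ha : σ a = a) : ∀ x ∈ IntermediateField.adjoin ℚ ((E : Set L) ∪ {a}), σ x = x := by
  intro x hx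
  refine IntermediateField.adjoin_induction (p := fun x _ => σ x = x) (F := ℚ)
    ?_ ?_ ?_ ?_ ?_ hx
  · rintro s (hs | hs)
    · exact h s hs
    · rw [Set.mem_singleton_iff.1 hs, ha]
  · intro q; exact AlgEquiv.commutes σ q
  · intro a b _ _ ha hb; rw [map_add, ha, hb]
  · intro a _ ha; rw [map_inv₀, ha]
  · intro a b _ _ ha hb; rw [map_mul, ha, hb]

lemma quad_step (E : IntermediateField ℚ L) (a x : L) (ha : a ^ 2 ∈ E) (hx : x ^ 2 ∈ E)
    (hx' : x ∈ IntermediateField.adjoin ℚ ((E : Set L) ∪ {a})) : x ∈ E ∨ x * a ∈ E := by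
  by_contra hcon
  push Not at hcon
  obtain ⟨h1, h2⟩ := hcon
  have sg : ∀ z : L, z ^ 2 ∈ E → ∀ σ : L ≃ₐ[ℚ] L, (∀ y ∈ E, σ y = y) → σ z = z ∨ σ z = -z := by
    intro z hz σ hσ
    apply sq_eq_sq_iff_eq_or_eq_neg.1
    rw [← map_pow, hσ _ hz]
  obtain ⟨σ, hσ, hσx⟩ : ∃ σ : L ≃ₐ[ℚ] L, (∀ y ∈ E, σ y = y) ∧ σ x ≠ x := by
    by_contra hc
    push Not at hc
    exact h1 (mem_of_fixed E x hc)
  have hσx' := (sg x hx σ hσ).resolve_left hσx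
  have hσa : σ a = -a := (sg a ha σ hσ).resolve_left fun h => hσx (fix_adj E a σ hσ h x hx')
  apply h2
  apply mem_of_fixed
  intro τ hτ
  rw [map_mul]
  rcases sg a ha τ hτ with h | h
  · rw [h, fix_adj E a τ hτ h x hx']
  · have h3 : (σ * τ) x = x := by
      refine fix_adj E a (σ * τ) (fun y hy => ?_) ?_ x hx'
      · rw [AlgEquiv.mul_apply, hτ y hy, hσ y hy]
      · rw [AlgEquiv.mul_apply, h, map_neg, hσa, neg_neg]
    rw [AlgEquiv.mul_apply] at h3
    have h4 : τ x = -x := by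
      apply σ.injective
      rw [h3, map_neg, hσx', neg_neg]
    rw [h, h4]; ring

lemma finrank_double (E F : IntermediateField ℚ L) [FiniteDimensional ℚ F] (h : E ≤ F)
    (hne : E ≠ F) : 2 * Module.finrank ℚ E ≤ Module.finrank ℚ F := by
  obtain ⟨c, hc⟩ := IntermediateField.finrank_dvd_of_le_right h
  have hpos : 0 < Module.finrank ℚ F := Module.finrank_pos
  rw [hc] at hpos ⊢
  rcases Nat.lt_or_ge c 2 with h2 | h2
  · interval_cases c
    · simp at hpos
    · exact absurd (IntermediateField.eq_of_le_of_finrank_eq h (by rw [hc, mul_one])) hne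
  · rw [mul_comm]; exact Nat.mul_le_mul_left _ h2

lemma kummer (s : Finset L) (r : L → L) (F : IntermediateField ℚ L) [FiniteDimensional ℚ F] :
    ∀ E : IntermediateField ℚ L, E ≤ F → (∀ i ∈ s, r i ∈ F) → (∀ i ∈ s, r i ^ 2 ∈ E) →
    (∀ t ⊆ s, t.Nonempty → ∏ i ∈ t, r i ∉ E) →
    2 ^ s.card * Module.finrank ℚ E ≤ Module.finrank ℚ F := by
  classical
  induction s using Finset.induction_on with
  | empty =>
    intro E hE _ _ _
    simpa using Nat.le_of_dvd Module.finrank_pos (IntermediateField.finrank_dvd_of_le_right hE)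
  | insert a s has ih =>
    intro E hE hF hsq hrel
    set E' := IntermediateField.adjoin ℚ ((E : Set L) ∪ {r a}) with hE'
    have hEE' : E ≤ E' := fun x hx => IntermediateField.subset_adjoin ℚ _ (Or.inl hx)
    have haE' : r a ∈ E' := IntermediateField.subset_adjoin ℚ _ (Or.inr rfl)
    have hE'F : E' ≤ F := by
      rw [hE', IntermediateField.adjoin_le_iff]
      rintro x (hx | hx)
      · exact hE hx
      · rw [Set.mem_singleton_iff.1 hx]; exact hF a (Finset.mem_insert_self _ _)
    have hfd : FiniteDimensional ℚ E' :=
      Submodule.finiteDimensional_of_le (S₁ := E'.toSubalgebra.toSubmodule)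
        (S₂ := F.toSubalgebra.toSubmodule) hE'F
    have hne : E ≠ E' := by
      intro h
      apply hrel {a} (by simp) (by simp)
      rw [Finset.prod_singleton, h]; exact haE'
    have h1 := finrank_double E E' hEE' hne
    have h2 := ih E' hE'F (fun i hi => hF i (Finset.mem_insert_of_mem hi))
      (fun i hi => hEE' (hsq i (Finset.mem_insert_of_mem hi))) (by
        intro t ht htn hmem
        have hat : a ∉ t := fun h => has (ht h)
        rcases quad_step E (r a) _ (hsq a (Finset.mem_insert_self _ _)) (by
          rw [← Finset.prod_pow]
          exact prod_mem fun i hi => hsq i (Finset.mem_insert_of_mem (ht hi))) hmem with h | h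
        · exact hrel t (ht.trans (Finset.subset_insert _ _)) htn h
        · apply hrel (insert a t) (Finset.insert_subset_insert _ ht) (by simp)
          rw [Finset.prod_insert hat, mul_comm]; exact h)
    rw [Finset.card_insert_of_notMem has, pow_succ, mul_assoc]
    exact (Nat.mul_le_mul_left _ h1).trans h2

lemma finite_zeros (k : ℤ) (n : ℕ) : {x : L | (ph k)^[n] x = 0}.Finite := by
  induction n with
  | zero => simp
  | succ n ih =>
    have e : {x : L | (ph k)^[n + 1] x = 0} = {x : L | (ph k)^[n] x = 0} ∪ (Bs L k n : Set L) := by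
      ext x
      simp only [Set.mem_union, Set.mem_ofPred_eq, Finset.mem_coe, mem_Bs]
      rw [Function.iterate_succ_apply']
      generalize (ph k)^[n] x = y
      unfold ph
      constructor
      · intro h
        have : y * (y + k) = 0 := by rw [← h]; ring
        rcases mul_eq_zero.1 this with h | h
        · exact Or.inl h
        · exact Or.inr (eq_neg_of_add_eq_zero_left h)
      · rintro (h | h) <;> rw [h] <;> ring
    rw [e]
    exact ih.union (Finset.finite_toSet _)

lemma Kf_fd (k : ℤ) (n : ℕ) : FiniteDimensional ℚ (Kf L k n) := by
  have := (finite_zeros (L := L) k n).to_subtype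
  exact IntermediateField.finiteDimensional_adjoin fun x _ => Algebra.IsIntegral.isIntegral x

lemma Kf_mono (k : ℤ) (n : ℕ) : Kf L k n ≤ Kf L k (n + 1) := by
  apply IntermediateField.adjoin.mono
  intro x hx
  change (ph k)^[n + 1] x = 0
  rw [Function.iterate_succ_apply', show (ph k)^[n] x = 0 from hx]
  simp [ph]

lemma Kf_step (k : ℤ) (hk : k ∉ ({-2, 0, 2, 4} : Set ℤ)) (m : ℕ)
    (hns : ∏ β ∈ Bs L k m, rt k β ∉ Kf L k (m + 1)) :
    2 ^ 2 ^ m * Module.finrank ℚ (Kf L k (m + 1)) ≤ Module.finrank ℚ (Kf L k (m + 2)) := by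
  have := Kf_fd (L := L) k (m + 2)
  have h := kummer (Bs L k m) (rt k) (Kf L k (m + 2)) (Kf L k (m + 1)) (Kf_mono k (m + 1)) (by
    intro β hβ
    have hγ : (rt k β - k) / 2 ∈ Bs L k (m + 1) := by
      rw [mem_Bs_succ, (ph_eq_iff k _ β).2 (Or.inl rfl)]; exact hβ
    have h2 := Bs_sub_Kf k (m + 1) hγ
    have e : rt k β = 2 * ((rt k β - k) / 2) + k := by field_simp; ring
    rw [e]
    exact add_mem (mul_mem (ofNat_mem _ 2) h2) (intCast_mem _ k)) (by
    intro β hβ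
    rw [rt_sq]
    exact add_mem (pow_mem (intCast_mem _ k) 2) (mul_mem (ofNat_mem _ 4) (Bs_sub_Kf k m hβ)))
    (fun t ht htn => no_rel k hk m hns t ht htn)
  rwa [Bs_card k hk m] at h

lemma hns_of (k : ℤ) (hk : k ∉ ({-2, 0, 2, 4} : Set ℤ)) (m : ℕ)
    (hp : ∃ p : ℕ, p.Prime ∧ p ≠ 2 ∧ ¬ (p : ℤ) ∣ k ∧ Odd (padicValRat p (orb k (m + 2) + k))) :
    ∏ β ∈ Bs L k (m + 1), rt k β ∉ Kf L k (m + 2) := by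
  obtain ⟨p, hp, h2, hpk, hv⟩ := hp
  intro hmem
  set P := ∏ β ∈ Bs L k (m + 1), rt k β with hP
  have h4 : ((-4 : L)) ^ 2 ^ m ≠ 0 := pow_ne_zero _ (by norm_num)
  refine not_sq_Kn (L := L) k (m + 2) p hp h2 hpk hv (P / (-4) ^ 2 ^ m) ?_ ?_
  · exact div_mem hmem (pow_mem (neg_mem (ofNat_mem _ 4)) _)
  · rw [div_pow, hP, rt_prod_sq k hk (m + 1), dsc, ← pow_mul, ← pow_succ, eq_ratCast,
      div_eq_iff (pow_ne_zero _ (by norm_num))]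
    push_cast
    ring

lemma Kf_bound (k : ℤ) (hk : k ∉ ({-2, 0, 2, 4} : Set ℤ)) :
    ∃ C : ℕ, ∀ n, 1 ≤ n → 2 ^ (2 ^ (n - 1) - 1) ≤ C * Module.finrank ℚ (Kf L k n) := by
  obtain ⟨n0, h0⟩ := arith_N2 k hk
  have hstep : ∀ m, n0 ≤ m → 2 ^ 2 ^ (m + 1) * Module.finrank ℚ (Kf L k (m + 2)) ≤
      Module.finrank ℚ (Kf L k (m + 3)) := fun m hm =>
    Kf_step k hk (m + 1) (hns_of k hk m (h0 (m + 2) (by omega)))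
  have hpos : ∀ n, 0 < Module.finrank ℚ (Kf L k n) := fun n => by
    have := Kf_fd (L := L) k n
    exact Module.finrank_pos
  have hlarge : ∀ j, 2 ^ (2 ^ (n0 + j + 1) - 1) ≤
      2 ^ 2 ^ (n0 + 1) * Module.finrank ℚ (Kf L k (n0 + j + 2)) := by
    intro j
    induction j with
    | zero =>
      calc 2 ^ (2 ^ (n0 + 0 + 1) - 1) ≤ 2 ^ 2 ^ (n0 + 1) * 1 := by
            rw [mul_one]; exact Nat.pow_le_pow_right (by norm_num) (Nat.sub_le _ _)
        _ ≤ _ := Nat.mul_le_mul_left _ (hpos _)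
    | succ j ih =>
      have h1 := hstep (n0 + j) (by omega)
      have e : 2 ^ (n0 + (j + 1) + 1) - 1 = 2 ^ (n0 + j + 1) + (2 ^ (n0 + j + 1) - 1) := by
        have : 2 ^ (n0 + (j + 1) + 1) = 2 * 2 ^ (n0 + j + 1) := by ring
        have : 0 < 2 ^ (n0 + j + 1) := by positivity
        omega
      rw [e, pow_add]
      calc _ ≤ 2 ^ 2 ^ (n0 + j + 1) * (2 ^ 2 ^ (n0 + 1) * Module.finrank ℚ (Kf L k (n0 + j + 2))) :=
            Nat.mul_le_mul_left _ ih
        _ = 2 ^ 2 ^ (n0 + 1) * (2 ^ 2 ^ (n0 + j + 1) * Module.finrank ℚ (Kf L k (n0 + j + 2))) := by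
            ring
        _ ≤ _ := Nat.mul_le_mul_left _ h1
  refine ⟨2 ^ 2 ^ (n0 + 1), fun n hn => ?_⟩
  rcases Nat.lt_or_ge n (n0 + 2) with h | h
  · calc 2 ^ (2 ^ (n - 1) - 1) ≤ 2 ^ 2 ^ (n0 + 1) * 1 := by
          rw [mul_one]
          refine Nat.pow_le_pow_right (by norm_num) ((Nat.sub_le _ _).trans ?_)
          exact Nat.pow_le_pow_right (by norm_num) (by omega)
      _ ≤ _ := Nat.mul_le_mul_left _ (hpos _)
  · obtain ⟨j, rfl⟩ := Nat.exists_eq_add_of_le h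
    have := hlarge j
    rw [show n0 + 2 + j = n0 + j + 2 by ring]
    exact this

end

lemma algQ : Algebra.IsAlgebraic ℚ (AlgebraicClosure ℚ) := by
  have h := AlgebraicClosure.isAlgebraic ℚ
  rwa [Subsingleton.elim (AlgebraicClosure.instAlgebra ℚ)
    (DivisionRing.toRatAlgebra : Algebra ℚ (AlgebraicClosure ℚ))] at h

lemma iterComp_monic (k : ℤ) (n : ℕ) :
    (iterComp (X ^ 2 + Polynomial.C (k : ℚ) * X) n).Monic ∧
    0 < (iterComp (X ^ 2 + Polynomial.C (k : ℚ) * X) n).natDegree := by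
  have hd : (X ^ 2 + Polynomial.C (k : ℚ) * X : ℚ[X]).natDegree = 2 := by compute_degree!
  have hm : (X ^ 2 + Polynomial.C (k : ℚ) * X : ℚ[X]).Monic := by monicity!
  induction n with
  | zero => exact ⟨monic_X, by simp [iterComp]⟩
  | succ n ih =>
    constructor
    · exact hm.comp ih.1 ih.2.ne'
    · rw [iterComp, natDegree_comp, hd]
      exact Nat.mul_pos (by norm_num) ih.2

lemma aeval_iterComp_s5 (k : ℤ) (n : ℕ) (x : AlgebraicClosure ℚ) :
    aeval x (iterComp (X ^ 2 + Polynomial.C (k : ℚ) * X) n) = (ph k)^[n] x := by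
  induction n with
  | zero => simp [iterComp]
  | succ n ih =>
    rw [iterComp, aeval_comp, ih, Function.iterate_succ_apply']
    simp [ph]

lemma splitFld_eq (k : ℤ) (n : ℕ) :
    splitFld (iterComp (X ^ 2 + Polynomial.C (k : ℚ) * X) n) = Kf (AlgebraicClosure ℚ) k n := by
  unfold splitFld Kf
  congr 1
  ext x
  rw [mem_rootSet_of_ne (iterComp_monic k n).1.ne_zero, aeval_iterComp_s5]
  rfl

/-- for `k ∈ ℤ \ {−2,0,2,4}` and `φ(X) = X² + kX`, there is a constant `C`
such that for every `n ≥ 1`, `2^(2^(n−1) − 1) ≤ C · [K_n : ℚ]`, where `K_n` is the splitting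
field of `φ^{∘n}` over `ℚ`. -/
theorem stmt_5 (k : ℤ) (hk : k ∉ ({-2, 0, 2, 4} : Set ℤ)) :
    ∃ C : ℕ, ∀ n : ℕ, 1 ≤ n →
      2 ^ (2 ^ (n - 1) - 1) ≤
        C * Module.finrank ℚ ↥(splitFld (iterComp (X ^ 2 + Polynomial.C (k : ℚ) * X) n)) := by
  have := algQ
  obtain ⟨C, hC⟩ := Kf_bound (L := AlgebraicClosure ℚ) k hk
  refine ⟨C, fun n hn => ?_⟩
  rw [splitFld_eq]
  exact hC n hn
end

section
/- Let φ(X) = X² − 2X ∈ ℚ[X]. Then for every n ≥ 1, the splitting field K_n of the n-fold iterate φ^{∘n} over ℚ satisfies [K_n : ℚ] = 2^(n−1). -/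
open Polynomial

/-- Integral model of the iterates. -/
noncomputable def iterZ : ℕ → ℤ[X]
  | 0 => X
  | n + 1 => (iterZ n) ^ 2 - C 2 * iterZ n

theorem iterZ_map (n : ℕ) :
    (iterZ n).map (Int.castRingHom ℚ) = iterComp (X ^ 2 - C (2 : ℚ) * X) n := by
  induction n with
  | zero => simp [iterZ, iterComp]
  | succ k ih =>
    simp [iterZ, iterComp, ih]
    exact Or.inl rfl

theorem iterZ_monic (n : ℕ) : (iterZ n).Monic ∧ (iterZ n).natDegree = 2 ^ n := by
  induction n with
  | zero => exact ⟨monic_X, by simp [iterZ]⟩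
  | succ k ih =>
    obtain ⟨h1, h2⟩ := ih
    have hm : ((iterZ k) ^ 2).Monic := h1.pow 2
    have hd : ((iterZ k) ^ 2).natDegree = 2 ^ (k + 1) := by
      rw [h1.natDegree_pow, h2]; ring
    have hlt : (C 2 * iterZ k).natDegree < ((iterZ k) ^ 2).natDegree := by
      refine lt_of_le_of_lt (natDegree_C_mul_le _ _) ?_
      rw [hd, h2]
      exact Nat.pow_lt_pow_right (by norm_num) (by omega)
    refine ⟨hm.sub_of_left (degree_lt_degree hlt), ?_⟩
    rw [iterZ, natDegree_sub_eq_left_of_natDegree_lt hlt, hd]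

theorem iterZ_mod (n : ℕ) : (iterZ n).map (Int.castRingHom (ZMod 2)) = X ^ (2 ^ n) := by
  induction n with
  | zero => simp [iterZ]
  | succ k ih =>
    have : (C (2 : ZMod 2)) = 0 := by rw [show (2 : ZMod 2) = 0 from rfl, C_0]
    have h2 : (2 : (ZMod 2)[X]) = 0 := this
    simp [iterZ, ih, h2, pow_succ, pow_mul]

theorem iterZ_zero (n : ℕ) : (iterZ n).coeff 0 = 0 := by
  rw [coeff_zero_eq_eval_zero]
  induction n with
  | zero => simp [iterZ]
  | succ k ih => simp [iterZ, ih]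

theorem iterZ_deg_lt (n : ℕ) : (C (2 : ℤ)).degree < (iterZ n).degree := by
  apply degree_lt_degree
  rw [(iterZ_monic n).2, natDegree_C]
  positivity

theorem iterZ_irr (n : ℕ) : Irreducible (iterZ n - C 2) := by
  have hm : (iterZ n - C 2).Monic := (iterZ_monic n).1.sub_of_left (iterZ_deg_lt n)
  have hd : (iterZ n - C 2).natDegree = 2 ^ n := by
    rw [natDegree_sub_C, (iterZ_monic n).2]
  have hp : (Ideal.span {(2 : ℤ)}).IsPrime :=
    (Ideal.span_singleton_prime (by norm_num)).2 Int.prime_two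
  have he : (iterZ n - C 2).IsEisensteinAt (Ideal.span {(2 : ℤ)}) := by
    refine ⟨?_, ?_, ?_⟩
    · rw [hm.leadingCoeff, Ideal.mem_span_singleton]; norm_num
    · intro k hk
      rw [hd] at hk
      rw [Ideal.mem_span_singleton, coeff_sub]
      refine dvd_sub ?_ ?_
      · have := congrArg (fun p => coeff p k) (iterZ_mod n)
        simp only [coeff_map, coeff_X_pow, if_neg hk.ne] at this
        exact (ZMod.intCast_zmod_eq_zero_iff_dvd _ 2).1 (by simpa using this)
      · rw [coeff_C]; split_ifs <;> simp
    · rw [coeff_sub, iterZ_zero, coeff_C_zero, Ideal.span_singleton_pow,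
        Ideal.mem_span_singleton]
      norm_num
  exact he.irreducible hp hm.isPrimitive (by rw [hd]; positivity)

abbrev QQ := AlgebraicClosure ℚ

theorem aeval_iter (n : ℕ) (z : QQ) (hz : z ≠ 0) :
    aeval (z + z⁻¹ + 1) (iterComp (X ^ 2 - C (2 : ℚ) * X) n)
      = z ^ (2 ^ n) + (z ^ (2 ^ n))⁻¹ + 1 := by
  induction n with
  | zero => simp [iterComp]
  | succ k ih =>
    rw [iterComp, aeval_comp, ih, pow_succ 2 k, pow_mul]
    have : z ^ (2 ^ k) ≠ 0 := pow_ne_zero _ hz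
    simp
    field_simp
    ring

theorem finrank_root (m : ℕ) (a : QQ)
    (ha : aeval a (iterComp (X ^ 2 - C (2 : ℚ) * X) m) = 2) :
    Module.finrank ℚ (IntermediateField.adjoin ℚ {a}) = 2 ^ m := by
  have hm : (iterZ m - C 2).Monic := (iterZ_monic m).1.sub_of_left (iterZ_deg_lt m)
  have hi := (hm.isPrimitive.irreducible_iff_irreducible_map_fraction_map (K := ℚ)).1 (iterZ_irr m)
  have hmap : (iterZ m - C 2).map (algebraMap ℤ ℚ)
      = iterComp (X ^ 2 - C (2 : ℚ) * X) m - C 2 := by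
    rw [Polynomial.map_sub, ← iterZ_map]; simp; rfl
  have h0 : aeval a ((iterZ m - C 2).map (algebraMap ℤ ℚ)) = 0 := by
    rw [hmap, map_sub, ha]; simp
  have hint : IsIntegral ℚ a := (AlgebraicClosure.isAlgebraic ℚ).isAlgebraic a |>.isIntegral
  rw [IntermediateField.adjoin.finrank hint,
    ← minpoly.eq_of_irreducible_of_monic hi h0 (hm.map _), hm.natDegree_map, natDegree_sub_C,
    (iterZ_monic m).2]

theorem mem_pow (E : IntermediateField ℚ QQ) (z : QQ) (hz : z ≠ 0) (h : z + z⁻¹ ∈ E) (k : ℕ) :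
    z ^ k + (z ^ k)⁻¹ ∈ E ∧ z ^ (k + 1) + (z ^ (k + 1))⁻¹ ∈ E := by
  induction k with
  | zero => 
    refine ⟨?_, by simpa using h⟩
    simpa using E.add_mem E.one_mem E.one_mem
  | succ k ih =>
    refine ⟨ih.2, ?_⟩
    have : z ^ (k + 1 + 1) + (z ^ (k + 1 + 1))⁻¹
        = (z + z⁻¹) * (z ^ (k + 1) + (z ^ (k + 1))⁻¹) - (z ^ k + (z ^ k)⁻¹) := by
      field_simp
      ring
    rw [this]
    exact E.sub_mem (E.mul_mem h ih.2) ih.1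

theorem exists_z (y : QQ) : ∃ z : QQ, z ≠ 0 ∧ y = z + z⁻¹ := by
  have hd : (X ^ 2 - C y * X + 1 : QQ[X]).degree = 2 := by compute_degree!
  obtain ⟨z, hz⟩ := IsAlgClosed.exists_root (X ^ 2 - C y * X + 1 : QQ[X]) (by rw [hd]; norm_num)
  simp [IsRoot] at hz
  have h0 : z ≠ 0 := by rintro rfl; simp at hz
  refine ⟨z, h0, ?_⟩
  field_simp
  linear_combination -hz

/-- with `φ(X) = X² − 2X`, for every `n ≥ 1` the splitting field `K_n` of
`φ^{∘n}` over `ℚ` satisfies `[K_n : ℚ] = 2^(n−1)`. -/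
theorem stmt_6 (n : ℕ) (hn : 1 ≤ n) :
    Module.finrank ℚ ↥(splitFld (iterComp (X ^ 2 - C (2 : ℚ) * X) n)) = 2 ^ (n - 1) := by
  obtain ⟨m, rfl⟩ : ∃ m, n = m + 1 := ⟨n - 1, by omega⟩
  rw [Nat.add_sub_cancel]
  have hN : 2 ^ m * 6 ≠ 0 := by positivity
  have : NeZero (2 ^ m * 6) := ⟨hN⟩
  obtain ⟨ζ, hζ⟩ := HasEnoughRootsOfUnity.exists_primitiveRoot QQ (2 ^ m * 6)
  have hζ0 : ζ ≠ 0 := hζ.ne_zero hN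
  have hw : IsPrimitiveRoot (ζ ^ (2 ^ m)) 6 := hζ.pow (Nat.pos_of_ne_zero hN) rfl
  have hw1 : (ζ ^ (2 ^ m)) ^ 2 - ζ ^ (2 ^ m) + 1 = 0 := by
    set w := ζ ^ (2 ^ m)
    have h6 := hw.pow_eq_one
    have h3 : w ^ 3 - 1 ≠ 0 := sub_ne_zero.2 (hw.pow_ne_one_of_pos_of_lt (by norm_num) (by norm_num))
    have h2 : w ^ 2 - 1 ≠ 0 := sub_ne_zero.2 (hw.pow_ne_one_of_pos_of_lt (by norm_num) (by norm_num))
    have h1 : w + 1 ≠ 0 := fun h => h2 (by linear_combination (w - 1) * h)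
    have : (w ^ 3 - 1) * ((w + 1) * (w ^ 2 - w + 1)) = 0 := by linear_combination h6
    simpa [h3, h1] using this
  have hw0 : ζ ^ (2 ^ m) ≠ 0 := pow_ne_zero _ hζ0
  have hwi : ζ ^ (2 ^ m) + (ζ ^ (2 ^ m))⁻¹ = 1 := by
    field_simp
    linear_combination hw1
  have hE := finrank_root m (ζ + ζ⁻¹ + 1) (by rw [aeval_iter m ζ hζ0, hwi]; norm_num)
  have hne : iterComp (X ^ 2 - C (2 : ℚ) * X) (m + 1) ≠ 0 := by
    rw [← iterZ_map]
    exact ((iterZ_monic (m + 1)).1.map _).ne_zero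
  have key : splitFld (iterComp (X ^ 2 - C (2 : ℚ) * X) (m + 1))
      = IntermediateField.adjoin ℚ {ζ + ζ⁻¹ + 1} := by
    apply le_antisymm
    · refine IntermediateField.adjoin_le_iff.2 ?_
      intro x hx
      have hx0 := (mem_rootSet.1 hx).2
      obtain ⟨z, hz0, hz⟩ := exists_z (x - 1)
      have hxz : x = z + z⁻¹ + 1 := by linear_combination hz
      rw [hxz, aeval_iter _ z hz0] at hx0
      have hz1 : z ^ (2 ^ m * 6) = 1 := by
        have e : z ^ (2 ^ m * 6) = (z ^ 2 ^ (m + 1)) ^ 3 := by rw [← pow_mul]; ring_nf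
        rw [e]
        have hv : z ^ 2 ^ (m + 1) ≠ 0 := pow_ne_zero _ hz0
        set v := z ^ 2 ^ (m + 1)
        field_simp at hx0
        linear_combination (v - 1) * hx0
      obtain ⟨i, -, hi⟩ := hζ.eq_pow_of_pow_eq_one hz1
      have hmem : ζ + ζ⁻¹ + 1 ∈ IntermediateField.adjoin ℚ {ζ + ζ⁻¹ + 1} :=
        IntermediateField.mem_adjoin_simple_self ℚ _
      have hmem' : ζ + ζ⁻¹ ∈ IntermediateField.adjoin ℚ {ζ + ζ⁻¹ + 1} := by
        simpa using sub_mem hmem (one_mem _)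
      have := (mem_pow _ ζ hζ0 hmem' i).1
      rw [hi] at this
      rw [hxz]
      exact add_mem this (one_mem _)
    · refine IntermediateField.adjoin.mono ℚ _ _ ?_
      rw [Set.singleton_subset_iff, mem_rootSet]
      refine ⟨hne, ?_⟩
      rw [aeval_iter _ ζ hζ0, pow_succ 2 m, pow_mul]
      field_simp
      linear_combination ((ζ ^ 2 ^ m) ^ 2 + ζ ^ 2 ^ m + 1) * hw1
  rw [key]
  exact hE
end

section
/- Let n ≥ 0 be an integer, let ζ ∈ ℂ be a primitive (3·2^(n+1))-th root of unity, and let ψ(x) = x² − 2. Then the n-fold iterate of ψ satisfies ψ^{∘n}(ζ + ζ^{−1}) = 1. -/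
/-- if `ζ ∈ ℂ` is a primitive `(3·2^(n+1))`-th root of unity and
`ψ(x) = x² − 2`, then `ψ^{∘n}(ζ + ζ⁻¹) = 1`. -/
theorem stmt_7 (n : ℕ) (ζ : ℂ) (hζ : IsPrimitiveRoot ζ (3 * 2 ^ (n + 1))) :
    (fun x : ℂ => x ^ 2 - 2)^[n] (ζ + ζ⁻¹) = 1 := by
  induction n generalizing ζ with
  | zero =>
    have h0 : ζ ≠ 0 := hζ.ne_zero (by norm_num)
    have h6 : ζ ^ 6 = 1 := by simpa using hζ.pow_eq_one
    have h3 : ζ ^ 3 - 1 ≠ 0 := sub_ne_zero.mpr (hζ.pow_ne_one_of_pos_of_lt (by norm_num) (by norm_num))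
    have h2 : ζ ^ 2 ≠ 1 := hζ.pow_ne_one_of_pos_of_lt (by norm_num) (by norm_num)
    have h1 : ζ + 1 ≠ 0 := fun h => h2 (by linear_combination (ζ - 1) * h)
    have key : ζ ^ 2 - ζ + 1 = 0 := by
      apply mul_left_cancel₀ h1
      apply mul_left_cancel₀ h3
      linear_combination h6
    simp only [Function.iterate_zero, id]
    field_simp
    linear_combination key
  | succ n ih =>
    have h0 : ζ ≠ 0 := hζ.ne_zero (by positivity)
    have h := ih (ζ ^ 2) (hζ.pow (by positivity) (by ring))
    rw [Function.iterate_succ_apply]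
    have e : (ζ + ζ⁻¹) ^ 2 - 2 = ζ ^ 2 + (ζ ^ 2)⁻¹ := by
      field_simp
      ring
    simp only [e]
    exact h
end

section
/- Let φ(X) = X² + 4X ∈ ℚ[X]. Then for every n ≥ 2, the splitting field K_n of the n-fold iterate φ^{∘n} over ℚ satisfies [K_n : ℚ] = 2^(n−2). -/
open Polynomial

/-- Iterates of `Y² - 2` over `ℤ`. -/
noncomputable def chebP : ℕ → ℤ[X]
  | 0 => X
  | n + 1 => (chebP n) ^ 2 - C 2

lemma chebP_monic (n : ℕ) : (chebP n).Monic ∧ (chebP n).natDegree = 2 ^ n := by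
  induction n with
  | zero => exact ⟨monic_X, by simp [chebP]⟩
  | succ k ih =>
    obtain ⟨h1, h2⟩ := ih
    have hd : ((chebP k) ^ 2).natDegree = 2 ^ (k + 1) := by
      rw [h1.natDegree_pow, h2]; ring
    constructor
    · apply (h1.pow 2).sub_of_left
      apply degree_lt_degree
      rw [hd, natDegree_C]; positivity
    · rw [chebP, natDegree_sub_C, hd]

lemma chebP_map (n : ℕ) : (chebP n).map (Int.castRingHom (ZMod 2)) = X ^ (2 ^ n) := by
  induction n with
  | zero => simp [chebP]
  | succ k ih =>
    have : ((2 : ℤ) : ZMod 2) = 0 := by decide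
    rw [chebP, Polynomial.map_sub, Polynomial.map_pow, ih, map_C]
    simp only [eq_intCast, this, C_0, sub_zero]
    rw [← pow_mul, pow_succ]

lemma chebP_zero (n : ℕ) : (chebP (n + 2)).coeff 0 = 2 := by
  induction n with
  | zero => simp [chebP, coeff_zero_eq_eval_zero]
  | succ k ih =>
    rw [chebP, coeff_zero_eq_eval_zero] at *
    simp only [eval_sub, eval_pow, eval_C] at *
    rw [show k + 1 + 1 = (k + 1) + 1 from rfl, chebP]
    simp only [eval_sub, eval_pow, eval_C] at *
    rw [ih]; norm_num

lemma chebP_zero' (n : ℕ) : (chebP (n + 1)).coeff 0 = 2 ∨ (chebP (n + 1)).coeff 0 = -2 := by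
  cases n with
  | zero => right; simp [chebP, coeff_zero_eq_eval_zero]
  | succ k => left; exact chebP_zero k

lemma chebP_irred (n : ℕ) : Irreducible (chebP n) := by
  cases n with
  | zero => exact irreducible_X
  | succ k =>
    obtain ⟨h1, h2⟩ := chebP_monic (k + 1)
    have hp : (Ideal.span {(2 : ℤ)}).IsPrime := by
      rw [Ideal.span_singleton_prime (by norm_num)]
      exact Int.prime_two
    have hE : (chebP (k + 1)).IsEisensteinAt (Ideal.span {(2 : ℤ)}) := by
      refine ⟨?_, ?_, ?_⟩
      · rw [h1.leadingCoeff, Ideal.mem_span_singleton]; norm_num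
      · intro i hi
        rw [Ideal.mem_span_singleton]
        have := congrArg (fun q => q.coeff i) (chebP_map (k + 1))
        simp only [coeff_map, coeff_X_pow] at this
        rw [if_neg (by rw [h2] at hi; omega)] at this
        exact (ZMod.intCast_zmod_eq_zero_iff_dvd _ 2).1 (by simpa using this)
      · rw [Ideal.span_singleton_pow, Ideal.mem_span_singleton]
        rcases chebP_zero' k with h | h <;> rw [h] <;> norm_num
    exact hE.irreducible hp h1.isPrimitive (by rw [h2]; positivity)

lemma chebP_aeval {K : Type*} [Field K] (z : K) (hz : z ≠ 0) (n : ℕ) :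
    eval₂ (Int.castRingHom _) (z + z⁻¹) (chebP n) = z ^ (2 ^ n) + (z ^ (2 ^ n))⁻¹ := by
  induction n with
  | zero => simp [chebP]
  | succ k ih =>
    have h : z ^ (2 ^ k) ≠ 0 := pow_ne_zero _ hz
    rw [chebP, eval₂_sub, eval₂_pow, ih, eval₂_C, pow_succ 2 k, pow_mul]
    simp only [eq_intCast, Int.cast_ofNat]
    field_simp
    ring

lemma iter_aeval {K : Type*} [Field K] [Algebra ℚ K] (x : K) (n : ℕ) :
    aeval x (iterComp (X ^ 2 + C (4 : ℚ) * X) n) = eval₂ (Int.castRingHom _) (x + 2) (chebP n) - 2 := by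
  induction n with
  | zero => simp [chebP, iterComp]
  | succ k ih =>
    rw [iterComp, aeval_comp, ih, chebP, eval₂_sub, eval₂_pow, eval₂_C]
    simp
    ring

lemma cheb_mem (K : IntermediateField ℚ (AlgebraicClosure ℚ)) (z : AlgebraicClosure ℚ)
    (hz : z ≠ 0) (h : z + z⁻¹ ∈ K) (k : ℕ) :
    z ^ k + (z ^ k)⁻¹ ∈ K ∧ z ^ (k + 1) + (z ^ (k + 1))⁻¹ ∈ K := by
  induction k with
  | zero => exact ⟨by simpa using add_mem (one_mem K) (one_mem K), by simpa using h⟩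
  | succ k ih =>
    refine ⟨ih.2, ?_⟩
    have : z ^ (k + 1 + 1) + (z ^ (k + 1 + 1))⁻¹ =
        (z + z⁻¹) * (z ^ (k + 1) + (z ^ (k + 1))⁻¹) - (z ^ k + (z ^ k)⁻¹) := by
      have hk : z ^ k ≠ 0 := pow_ne_zero _ hz
      rw [pow_succ z (k + 1), pow_succ z k]
      field_simp
      ring
    rw [this]
    exact sub_mem (mul_mem h ih.2) ih.1

lemma iter_ne_zero (n : ℕ) : iterComp (X ^ 2 + C (4 : ℚ) * X) n ≠ 0 := by
  intro h0
  -- evaluate at `x = 1/2`, where `x + 2 = 2 + 1/2`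
  have h := iter_aeval (K := ℚ) (1 / 2) n
  rw [h0, map_zero, show (1 / 2 + 2 : ℚ) = 2 + 2⁻¹ by norm_num,
    chebP_aeval (2 : ℚ) two_ne_zero] at h
  have h1 : (1 : ℚ) < 2 ^ (2 ^ n) := one_lt_pow₀ (by norm_num) (by positivity)
  generalize (2 : ℚ) ^ (2 ^ n) = u at *
  have hu : u ≠ 0 := by positivity
  field_simp at h
  nlinarith

/-- with `φ(X) = X² + 4X`, for every `n ≥ 2` the splitting field `K_n` of
`φ^{∘n}` over `ℚ` satisfies `[K_n : ℚ] = 2^(n−2)`. -/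
theorem stmt_9 (n : ℕ) (hn : 2 ≤ n) :
    Module.finrank ℚ ↥(splitFld (iterComp (X ^ 2 + C (4 : ℚ) * X) n)) = 2 ^ (n - 2) := by
  obtain ⟨m, rfl⟩ := Nat.exists_eq_add_of_le' hn
  obtain ⟨z, hz⟩ := IsAlgClosed.exists_pow_nat_eq
    (-1 : AlgebraicClosure ℚ) (n := 2 ^ (m + 1)) (by positivity)
  have hz0 : z ≠ 0 := by
    rintro rfl
    rw [zero_pow (by positivity)] at hz
    norm_num at hz
  have hprim : IsPrimitiveRoot z (2 ^ (m + 2)) := by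
    have : orderOf z = 2 ^ (m + 1 + 1) := by
      apply orderOf_eq_prime_pow
      · rw [hz]; norm_num
      · rw [pow_succ 2 (m + 1), pow_mul, hz]; norm_num
    have h2 := IsPrimitiveRoot.orderOf z
    rwa [this] at h2
  have hroot : eval₂ (Int.castRingHom _) (z + z⁻¹) (chebP m) = 0 := by
    rw [chebP_aeval z hz0]
    have h : z ^ (2 ^ m) ≠ 0 := pow_ne_zero _ hz0
    have h2 : (z ^ (2 ^ m)) ^ 2 = -1 := by rw [← pow_mul, ← pow_succ, hz]
    field_simp
    rw [h2]; ring
  have hK : splitFld (iterComp (X ^ 2 + C (4 : ℚ) * X) (m + 2)) =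
      IntermediateField.adjoin ℚ {z + z⁻¹} := by
    apply le_antisymm
    · rw [splitFld, IntermediateField.adjoin_le_iff]
      intro x hx
      rw [mem_rootSet] at hx
      have hx := hx.2
      rw [iter_aeval] at hx
      obtain ⟨w, hw⟩ := IsAlgClosed.exists_root
        (C (1 : AlgebraicClosure ℚ) * X ^ 2 + C (-(x + 2)) * X + C 1)
        (by rw [degree_quadratic one_ne_zero]; norm_num)
      simp only [IsRoot, eval_add, eval_mul, eval_C, eval_pow, eval_X] at hw
      have hw0 : w ≠ 0 := by
        rintro rfl
        norm_num at hw
      have hxw : x + 2 = w + w⁻¹ := by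
        field_simp
        linear_combination -hw
      rw [hxw, chebP_aeval w hw0] at hx
      have hw1 : w ^ (2 ^ (m + 2)) = 1 := by
        have h : w ^ (2 ^ (m + 2)) ≠ 0 := pow_ne_zero _ hw0
        generalize w ^ (2 ^ (m + 2)) = u at *
        field_simp at hx
        have : (u - 1) ^ 2 = 0 := by linear_combination hx
        exact sub_eq_zero.1 (pow_eq_zero_iff (two_ne_zero) |>.1 this)
      obtain ⟨i, -, rfl⟩ := hprim.eq_pow_of_pow_eq_one hw1
      have := (cheb_mem (IntermediateField.adjoin ℚ {z + z⁻¹}) z hz0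
        (IntermediateField.mem_adjoin_simple_self ℚ _) i).1
      rw [← hxw] at this
      have h3 := sub_mem this (add_mem (one_mem _) (one_mem _))
      have h4 : x + 2 - (1 + 1) = x := by ring
      rw [h4] at h3
      exact h3
    · rw [IntermediateField.adjoin_simple_le_iff, splitFld]
      have hmem : z + z⁻¹ - 2 ∈
          (iterComp (X ^ 2 + C (4 : ℚ) * X) (m + 2)).rootSet (AlgebraicClosure ℚ) := by
        rw [mem_rootSet]
        refine ⟨iter_ne_zero _, ?_⟩
        rw [iter_aeval, sub_add_cancel, chebP_aeval z hz0, hprim.pow_eq_one]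
        norm_num
      have h3 := add_mem (IntermediateField.subset_adjoin ℚ _ hmem)
        (add_mem (one_mem _) (one_mem _))
      have h4 : z + z⁻¹ - 2 + (1 + 1) = z + z⁻¹ := by ring
      rw [h4] at h3
      exact h3
  rw [hK]
  obtain ⟨h1, h2⟩ := chebP_monic m
  have hirr : Irreducible ((chebP m).map (algebraMap ℤ ℚ)) :=
    (h1.irreducible_iff_irreducible_map_fraction_map).1 (chebP_irred m)
  have haev : aeval (z + z⁻¹) ((chebP m).map (algebraMap ℤ ℚ)) = 0 := by
    rw [aeval_def, eval₂_map, ← hroot]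
    congr 1
  have hmin : (chebP m).map (algebraMap ℤ ℚ) = minpoly ℚ (z + z⁻¹) :=
    minpoly.eq_of_irreducible_of_monic hirr haev (h1.map _)
  rw [IntermediateField.adjoin.finrank ⟨_, h1.map _, haev⟩, ← hmin,
    h1.natDegree_map, h2]
  simp
end

section
/- For every n ≥ 1: the degree of δ_n is 2^n; the degree of the lowest-degree nonzero term of δ_n is (2^n + 2)/3 if n is even and (2^n + 4)/3 if n is odd; the degree of ε_n is 2^n − n; and the degree of the lowest-degree nonzero term of ε_n is (2^n + 2)/3 if n is even and (2^n + 1)/3 if n is odd. -/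
open Polynomial in
theorem trail_aux (a : ℕ) (p : ℤ[X]) (hp : p.coeff 0 ≠ 0) :
    (X ^ a * p).natTrailingDegree = a ∧ (X ^ a * p) ≠ 0 := by
  have hp0 : p ≠ 0 := by rintro rfl; simp at hp
  have hX : (X ^ a : ℤ[X]) ≠ 0 := pow_ne_zero _ X_ne_zero
  refine ⟨?_, mul_ne_zero hX hp0⟩
  rw [natTrailingDegree_mul hX hp0, natTrailingDegree_eq_zero.2 (Or.inr hp)]
  simp

open Polynomial in
theorem main_aux (δ ε : ℕ → Polynomial ℤ)
    (hδ1 : δ 1 = Polynomial.C 2 * Polynomial.X ^ 2)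
    (hε1 : ε 1 = Polynomial.X)
    (hδ : ∀ n, 2 ≤ n → δ n = (δ (n - 1)) ^ 2 + (ε (n - 1)) ^ 2)
    (hε : ∀ n, 2 ≤ n → Polynomial.X * ε n = δ (n - 1) * ε (n - 1))
    (n : ℕ) (hn : 1 ≤ n) :
    (δ n).natDegree = 2 ^ n ∧ (ε n).natDegree + n = 2 ^ n ∧
    ∃ (a : ℕ) (p q : ℤ[X]), p.coeff 0 ≠ 0 ∧ q.coeff 0 ≠ 0 ∧ ε n = X ^ a * q ∧
      ((Even n ∧ 3 * a = 2 ^ n + 2 ∧ δ n = X ^ a * p) ∨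
       (¬ Even n ∧ 3 * a = 2 ^ n + 1 ∧ δ n = X ^ (a + 1) * p)) := by
  induction n, hn using Nat.le_induction with
  | base =>
    refine ⟨?_, ?_, 1, C 2, 1, by simp, by simp, by simp [hε1], Or.inr ⟨by simp, by norm_num, ?_⟩⟩
    · rw [hδ1, natDegree_C_mul_X_pow _ _ (by norm_num)]; norm_num
    · simp [hε1]
    · rw [hδ1]; ring
  | succ n hn ih =>
    obtain ⟨h1, h2, a, p, q, hp, hq, hqe, h⟩ := ih
    have e1 := hδ (n + 1) (by omega)
    have e2 := hε (n + 1) (by omega)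
    simp only [Nat.add_sub_cancel] at e1 e2
    have hε0 : ε n ≠ 0 := by rw [hqe]; exact (trail_aux a q hq).2
    have hδ0 : δ n ≠ 0 := by
      rcases h with ⟨_, _, h⟩ | ⟨_, _, h⟩ <;> rw [h] <;> exact (trail_aux _ p hp).2
    have hε0' : ε (n + 1) ≠ 0 := by
      intro h0
      rw [h0, mul_zero] at e2
      exact mul_ne_zero hδ0 hε0 e2.symm
    have hpq : (p * q).coeff 0 ≠ 0 := by
      rw [mul_coeff_zero]; exact mul_ne_zero hp hq
    refine ⟨?_, ?_, ?_⟩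
    · rw [e1, natDegree_add_eq_left_of_natDegree_lt, natDegree_pow, h1, pow_succ, mul_comm]
      rw [natDegree_pow, natDegree_pow]; omega
    · have := congrArg natDegree e2
      rw [natDegree_mul X_ne_zero hε0', natDegree_mul hδ0 hε0, natDegree_X] at this
      rw [pow_succ]; omega
    · rcases h with ⟨hev, ha, h⟩ | ⟨hev, ha, h⟩
      · obtain ⟨b, rfl⟩ : ∃ b, a = b + 1 := ⟨a - 1, by omega⟩
        refine ⟨2 * b + 1, p ^ 2 + q ^ 2, p * q, ?_, hpq, ?_, Or.inr ⟨?_, ?_, ?_⟩⟩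
        · simp only [coeff_add, pow_two, mul_coeff_zero]
          have := mul_self_pos.2 hp
          have := mul_self_pos.2 hq
          omega
        · apply mul_left_cancel₀ (X_ne_zero (R := ℤ))
          rw [e2, h, hqe]; ring
        · simpa [Nat.even_add_one] using hev
        · rw [pow_succ]; omega
        · rw [e1, h, hqe]; ring
      · refine ⟨2 * a, X ^ 2 * p ^ 2 + q ^ 2, p * q, ?_, hpq, ?_, Or.inl ⟨?_, ?_, ?_⟩⟩
        · simp only [coeff_add, pow_two, mul_coeff_zero, coeff_X_zero]
          have := mul_self_pos.2 hq
          simp [hq]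
        · apply mul_left_cancel₀ (X_ne_zero (R := ℤ))
          rw [e2, h, hqe]; ring
        · simpa [Nat.even_add_one] using hev
        · rw [pow_succ]; omega
        · rw [e1, h, hqe]; ring


/-- for the sequences `δ_n, ε_n ∈ ℤ[k]` given by `δ_1 = 2k²`, `ε_1 = k`,
`δ_n = δ_{n−1}² + ε_{n−1}²` and `k·ε_n = δ_{n−1}·ε_{n−1}` (for `n ≥ 2`), and every `n ≥ 1`:
`deg δ_n = 2^n`, the trailing degree of `δ_n` is `(2^n + 2)/3` for even `n` and `(2^n + 4)/3`
for odd `n`, `deg ε_n = 2^n − n`, and the trailing degree of `ε_n` is `(2^n + 2)/3` for even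
`n` and `(2^n + 1)/3` for odd `n`. -/
theorem stmt_12 (δ ε : ℕ → Polynomial ℤ)
    (hδ1 : δ 1 = Polynomial.C 2 * Polynomial.X ^ 2)
    (hε1 : ε 1 = Polynomial.X)
    (hδ : ∀ n, 2 ≤ n → δ n = (δ (n - 1)) ^ 2 + (ε (n - 1)) ^ 2)
    (hε : ∀ n, 2 ≤ n → Polynomial.X * ε n = δ (n - 1) * ε (n - 1))
    (n : ℕ) (hn : 1 ≤ n) :
    (δ n).natDegree = 2 ^ n ∧
    (δ n).natTrailingDegree = (if Even n then (2 ^ n + 2) / 3 else (2 ^ n + 4) / 3) ∧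
    (ε n).natDegree = 2 ^ n - n ∧
    (ε n).natTrailingDegree = (if Even n then (2 ^ n + 2) / 3 else (2 ^ n + 1) / 3) := by
  obtain ⟨h1, h2, a, p, q, hp, hq, hqe, h⟩ := main_aux δ ε hδ1 hε1 hδ hε n hn
  have t2 := (trail_aux a q hq).1
  rw [← hqe] at t2
  rcases h with ⟨hev, ha, h⟩ | ⟨hev, ha, h⟩
  · have t1 := (trail_aux a p hp).1
    rw [← h] at t1
    simp only [hev, if_true]
    refine ⟨h1, ?_, ?_, ?_⟩ <;> omega
  · have t1 := (trail_aux (a + 1) p hp).1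
    rw [← h] at t1
    simp only [hev, if_false]
    refine ⟨h1, ?_, ?_, ?_⟩ <;> omega
end

section
/- For every n ≥ 2 the leading coefficient of the polynomial δ_n is a square in ℤ, and for every n ≥ 1 every coefficient of δ_n in odd degree vanishes (i.e., each nonzero term of δ_n has even degree). -/
/-- for the sequences `δ_n, ε_n ∈ ℤ[k]` given by `δ_1 = 2k²`, `ε_1 = k`,
`δ_n = δ_{n−1}² + ε_{n−1}²` and `k·ε_n = δ_{n−1}·ε_{n−1}` (for `n ≥ 2`): for every `n ≥ 2`
the leading coefficient of `δ_n` is a square in `ℤ`, and for every `n ≥ 1` every coefficient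
of `δ_n` in odd degree vanishes. -/
theorem stmt_13 (δ ε : ℕ → Polynomial ℤ)
    (hδ1 : δ 1 = Polynomial.C 2 * Polynomial.X ^ 2)
    (hε1 : ε 1 = Polynomial.X)
    (hδ : ∀ n, 2 ≤ n → δ n = (δ (n - 1)) ^ 2 + (ε (n - 1)) ^ 2)
    (hε : ∀ n, 2 ≤ n → Polynomial.X * ε n = δ (n - 1) * ε (n - 1)) :
    (∀ n, 2 ≤ n → ∃ a : ℤ, (δ n).leadingCoeff = a ^ 2) ∧
    (∀ n, 1 ≤ n → ∀ m : ℕ, Odd m → (δ n).coeff m = 0) := by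
  have key : ∀ n, 1 ≤ n → (δ n ≠ 0 ∧ ε n ≠ 0 ∧ (ε n).natDegree < (δ n).natDegree) ∧
      ((δ n).comp (-Polynomial.X) = δ n ∧ (ε n).comp (-Polynomial.X) ^ 2 = (ε n) ^ 2) := by
    intro n hn
    induction n, hn using Nat.le_induction with
    | base =>
      have hd : (δ 1).natDegree = 2 := by
        rw [hδ1]; exact Polynomial.natDegree_C_mul_X_pow 2 2 (by norm_num)
      refine ⟨⟨?_, ?_, ?_⟩, ?_, ?_⟩
      · intro h; rw [h] at hd; simp at hd
      · rw [hε1]; exact Polynomial.X_ne_zero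
      · rw [hd, hε1]; simp
      · rw [hδ1]; simp
      · rw [hε1]; simp
    | succ n hn ih =>
      obtain ⟨⟨h1, h2, h3⟩, h4, h5⟩ := ih
      have hd := hδ (n + 1) (by omega)
      have he := hε (n + 1) (by omega)
      simp only [Nat.add_sub_cancel] at hd he
      have hdeg : (δ (n + 1)).natDegree = 2 * (δ n).natDegree := by
        rw [hd, Polynomial.natDegree_add_eq_left_of_natDegree_lt, Polynomial.natDegree_pow]
        rw [Polynomial.natDegree_pow, Polynomial.natDegree_pow]; omega
      have he0 : ε (n + 1) ≠ 0 := by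
        intro h
        rw [h, mul_zero] at he
        exact mul_ne_zero h1 h2 he.symm
      have hed := congrArg Polynomial.natDegree he
      rw [Polynomial.natDegree_mul Polynomial.X_ne_zero he0, Polynomial.natDegree_mul h1 h2,
        Polynomial.natDegree_X] at hed
      refine ⟨⟨?_, he0, by omega⟩, ?_, ?_⟩
      · intro h; rw [h] at hdeg; simp at hdeg; omega
      · rw [hd, Polynomial.add_comp, Polynomial.pow_comp, Polynomial.pow_comp, h4, h5]
      · have hc := congrArg (fun p => (p.comp (-Polynomial.X)) ^ 2) he
        simp only [Polynomial.mul_comp, Polynomial.X_comp, h4, mul_pow, h5] at hc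
        rw [← mul_pow (δ n), ← he, mul_pow, neg_sq] at hc
        exact mul_left_cancel₀ (pow_ne_zero 2 Polynomial.X_ne_zero) hc
  refine ⟨?_, ?_⟩
  · intro n hn
    obtain ⟨⟨h1, h2, h3⟩, -⟩ := key (n - 1) (by omega)
    refine ⟨(δ (n - 1)).leadingCoeff, ?_⟩
    rw [hδ n hn, Polynomial.leadingCoeff_add_of_degree_lt', Polynomial.leadingCoeff_pow]
    apply Polynomial.degree_lt_degree
    rw [Polynomial.natDegree_pow, Polynomial.natDegree_pow]; omega
  · intro n hn m hm
    have h := congrArg (fun p => p.coeff m) (key n hn).2.1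
    have hx : (-Polynomial.X : Polynomial ℤ) = Polynomial.C (-1) * Polynomial.X := by simp
    simp only [hx, Polynomial.comp_C_mul_X_coeff, hm.neg_one_pow] at h
    omega
end

section
/- For every even integer n ≥ 2, the polynomial δ_n, viewed as a polynomial with complex coefficients, is not the square of any polynomial in ℂ[k]. -/
open Polynomial in
theorem aux_coeff (p : ℂ[X]) (n : ℕ) : (p.comp (-X)).coeff n = p.coeff n * (-1) ^ n := by
  have h : (-X : ℂ[X]) = C (-1) * X := by simp
  rw [h, comp_C_mul_X_coeff]

open Polynomial in
theorem aux_final (g : ℂ[X]) (P : ℂ[X]) (m : ℕ) (hP : P.coeff 0 ≠ 0)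
    (hg : X ^ (4 * m + 2) * P = g ^ 2) (hs : (g ^ 2).comp (-X) = g ^ 2)
    (hd : Even g.natDegree) : False := by
  have hev : g.comp (-X) = g ∨ g.comp (-X) = -g := by
    apply sq_eq_sq_iff_eq_or_eq_neg.mp
    rw [← hs, pow_comp]
  have hdvd : X ^ (2 * m + 1) ∣ g := by
    have h2 : ((X : ℂ[X]) ^ (2 * m + 1)) ^ 2 ∣ g ^ 2 := by
      rw [← hg]
      exact ⟨P, by ring⟩
    exact (UniqueFactorizationMonoid.pow_dvd_pow_iff_dvd (by norm_num)).mp h2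
  obtain ⟨h, rfl⟩ := hdvd
  have hh : P = h ^ 2 := by
    have : (X : ℂ[X]) ^ (4 * m + 2) ≠ 0 := pow_ne_zero _ X_ne_zero
    apply mul_left_cancel₀ this
    rw [hg]; ring
  have h0 : h.coeff 0 ≠ 0 := by
    intro h0
    apply hP
    rw [hh, sq, mul_coeff_zero, h0, zero_mul]
  have hc : (X ^ (2 * m + 1) * h).coeff (2 * m + 1) = h.coeff 0 := by
    simpa using coeff_X_pow_mul h (2 * m + 1) 0
  have hne : X ^ (2 * m + 1) * h ≠ 0 := by
    intro h1
    rw [h1] at hc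
    exact h0 (by simpa using hc.symm)
  generalize X ^ (2 * m + 1) * h = g at *
  rcases hev with he | he
  · have := congrArg (fun q => q.coeff (2 * m + 1)) he
    simp only [aux_coeff] at this
    rw [Odd.neg_one_pow ⟨m, rfl⟩, hc] at this
    apply h0
    linear_combination (-1 / 2 : ℂ) * this
  · have := congrArg (fun q => q.coeff g.natDegree) he
    simp only [aux_coeff, coeff_neg] at this
    rw [Even.neg_one_pow hd] at this
    apply leadingCoeff_ne_zero.mpr hne
    unfold leadingCoeff
    linear_combination (1 / 2 : ℂ) * this

/-- for the sequences `δ_n, ε_n ∈ ℤ[k]` given by `δ_1 = 2k²`, `ε_1 = k`,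
`δ_n = δ_{n−1}² + ε_{n−1}²` and `k·ε_n = δ_{n−1}·ε_{n−1}` (for `n ≥ 2`): for every even
`n ≥ 2`, the polynomial `δ_n`, viewed in `ℂ[k]`, is not the square of any polynomial. -/
theorem stmt_14 (δ ε : ℕ → Polynomial ℤ)
    (hδ1 : δ 1 = Polynomial.C 2 * Polynomial.X ^ 2)
    (hε1 : ε 1 = Polynomial.X)
    (hδ : ∀ n, 2 ≤ n → δ n = (δ (n - 1)) ^ 2 + (ε (n - 1)) ^ 2)
    (hε : ∀ n, 2 ≤ n → Polynomial.X * ε n = δ (n - 1) * ε (n - 1))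
    (n : ℕ) (hn : 2 ≤ n) (hne : Even n) :
    ¬ ∃ g : Polynomial ℂ, (δ n).map (Int.castRingHom ℂ) = g ^ 2 := by
  have hδ' : ∀ n, 1 ≤ n → δ (n + 1) = δ n ^ 2 + ε n ^ 2 := fun n h => hδ (n + 1) (by omega)
  have hε' : ∀ n, 1 ≤ n → Polynomial.X * ε (n + 1) = δ n * ε n :=
    fun n h => hε (n + 1) (by omega)
  -- degrees
  have hdeg : ∀ n, 1 ≤ n → (δ n).natDegree = 2 ^ n ∧ (ε n).natDegree < 2 ^ n := by
    intro n h
    induction n, h using Nat.le_induction with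
    | base =>
      rw [hδ1, hε1, Polynomial.natDegree_C_mul_X_pow 2 2 (by norm_num)]
      simp
    | succ n h ih =>
      obtain ⟨h1, h2⟩ := ih
      constructor
      · rw [hδ' n h, Polynomial.natDegree_add_eq_left_of_natDegree_lt]
        · rw [Polynomial.natDegree_pow, h1]; ring
        · rw [Polynomial.natDegree_pow, Polynomial.natDegree_pow, h1]; omega
      · by_cases hz : ε (n + 1) = 0
        · rw [hz]; simp
        · have h3 := congrArg Polynomial.natDegree (hε' n h)
          rw [Polynomial.natDegree_X_mul hz] at h3
          have h4 := Polynomial.natDegree_mul_le (p := δ n) (q := ε n)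
          rw [pow_succ]
          omega
  -- parity
  have hpar : ∀ n, 1 ≤ n → (δ n).comp (-Polynomial.X) = δ n ∧
      ((ε n).comp (-Polynomial.X)) ^ 2 = ε n ^ 2 := by
    intro n h
    induction n, h using Nat.le_induction with
    | base => rw [hδ1, hε1]; simp
    | succ n h ih =>
      obtain ⟨h1, h2⟩ := ih
      constructor
      · rw [hδ' n h, Polynomial.add_comp, Polynomial.pow_comp, Polynomial.pow_comp, h1, h2]
      · have h3 := congrArg (fun q => (q.comp (-Polynomial.X)) ^ 2) (hε' n h)
        simp only [Polynomial.mul_comp, Polynomial.X_comp, mul_pow, h1, h2] at h3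
        have h4 := congrArg (fun q => q ^ 2) (hε' n h)
        simp only [mul_pow] at h4
        rw [← h4, neg_sq] at h3
        exact mul_left_cancel₀ (pow_ne_zero 2 Polynomial.X_ne_zero) h3
  -- valuations
  have hstep : ∀ (n m : ℕ) (P Q : Polynomial ℤ), 1 ≤ n →
      δ n = Polynomial.X ^ (2 * m + 2) * P → ε n = Polynomial.X ^ (2 * m + 1) * Q →
      δ (n + 1) = Polynomial.X ^ (4 * m + 2) * (Polynomial.X ^ 2 * P ^ 2 + Q ^ 2) ∧
      ε (n + 1) = Polynomial.X ^ (4 * m + 2) * (P * Q) := by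
    intro n m P Q h h1 h2
    constructor
    · rw [hδ' n h, h1, h2]; ring
    · apply mul_left_cancel₀ (Polynomial.X_ne_zero (R := ℤ))
      rw [hε' n h, h1, h2]; ring
  have hval : ∀ j : ℕ, ∃ (m : ℕ) (P Q : Polynomial ℤ), P.coeff 0 ≠ 0 ∧ Q.coeff 0 ≠ 0 ∧
      δ (2 * j + 1) = Polynomial.X ^ (2 * m + 2) * P ∧
      ε (2 * j + 1) = Polynomial.X ^ (2 * m + 1) * Q := by
    intro j
    induction j with
    | zero =>
      refine ⟨0, Polynomial.C 2, 1, by simp, by simp, ?_, ?_⟩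
      · simp [hδ1, mul_comm]
      · simp [hε1]
    | succ j ih =>
      obtain ⟨m, P, Q, hP, hQ, h1, h2⟩ := ih
      obtain ⟨h3, h4⟩ := hstep _ m P Q (by omega) h1 h2
      refine ⟨4 * m + 1, (Polynomial.X ^ 2 * P ^ 2 + Q ^ 2) ^ 2 + (P * Q) ^ 2,
        (Polynomial.X ^ 2 * P ^ 2 + Q ^ 2) * (P * Q), ?_, ?_, ?_, ?_⟩
      · simp only [Polynomial.coeff_zero_eq_eval_zero] at *
        simp only [Polynomial.eval_add, Polynomial.eval_mul, Polynomial.eval_pow,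
          Polynomial.eval_X]
        positivity
      · simp only [Polynomial.coeff_zero_eq_eval_zero] at *
        simp only [Polynomial.eval_add, Polynomial.eval_mul, Polynomial.eval_pow,
          Polynomial.eval_X]
        simp [hP, hQ]
      · rw [show 2 * (j + 1) + 1 = (2 * j + 1 + 1) + 1 by ring, hδ' _ (by omega), h3, h4]; ring
      · apply mul_left_cancel₀ (Polynomial.X_ne_zero (R := ℤ))
        rw [show 2 * (j + 1) + 1 = (2 * j + 1 + 1) + 1 by ring, hε' _ (by omega), h3, h4]; ring
  rintro ⟨g, hg⟩
  obtain ⟨i, rfl⟩ := hne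
  obtain ⟨j, rfl⟩ : ∃ j, i = j + 1 := ⟨i - 1, by omega⟩
  obtain ⟨m, P, Q, hP, hQ, h1, h2⟩ := hval j
  obtain ⟨h3, -⟩ := hstep _ m P Q (by omega) h1 h2
  rw [show j + 1 + (j + 1) = 2 * j + 1 + 1 by ring] at hg
  refine aux_final g ((Polynomial.X ^ 2 * P ^ 2 + Q ^ 2).map (Int.castRingHom ℂ)) m ?_ ?_ ?_ ?_
  · rw [Polynomial.coeff_map, Polynomial.coeff_zero_eq_eval_zero]
    rw [Polynomial.coeff_zero_eq_eval_zero] at hQ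
    simp [hQ]
  · rw [← hg, h3, Polynomial.map_mul, Polynomial.map_pow, Polynomial.map_X]
  · rw [← hg]
    have h5 := congrArg (Polynomial.map (Int.castRingHom ℂ)) (hpar (2 * j + 1 + 1) (by omega)).1
    rw [Polynomial.map_comp] at h5
    simpa using h5
  · have h5 := congrArg Polynomial.natDegree hg
    rw [Polynomial.natDegree_map_eq_of_injective (RingHom.injective_int _),
      (hdeg _ (by omega)).1, Polynomial.natDegree_pow, pow_succ, pow_succ] at h5
    exact ⟨2 ^ (2 * j), by omega⟩
end
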